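/- arXiv:2203.14687 — 9 statements merged into one kernel-verified Lean document; each statement's English description precedes it below -/
import Mathlib

section
/- Let q = p^h be a prime power and let f(X,Y) = Σ_{i,j} a_{i,j} X^i Y^j ∈ F_q[X,Y] have total degree d ≥ 1, f(0,0) = 0, and with a_{0,1} = 0 in case p > 2. Suppose q > 6.3·(d+1)^{13/3} and that f satisfies the ovoid condition (equivalently, O_4(f) is an ovoid of Q(4,q)). Then one of the following holds: (1) p = 2 and f(X,Y) = a_{1,0}X + a_{0,1}Y for some a_{1,0}, a_{0,1} ∈ F_q; (2) p > 2 and f(X,Y) = a_{p^j,0}·X^{p^j} for some integer j ≥ 0 and some a_{p^j,0} ∈ F_q. -/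
open MvPolynomial

/-- The coefficient `a_{i,j}` of the monomial `X^i Y^j` in `f ∈ F_q[X,Y]`. -/
noncomputable def coeffXY {K : Type*} [Field K] (f : MvPolynomial (Fin 2) K) (i j : ℕ) : K :=
  f.coeff (Finsupp.single (0 : Fin 2) i + Finsupp.single (1 : Fin 2) j)

/-- The ovoid condition:
`(y₁ − y₂)² + (x₁ − x₂)(f(x₁,y₁) − f(x₂,y₂)) ≠ 0` for all `(x₁,y₁) ≠ (x₂,y₂)`;
it holds iff `O_4(f)` is an ovoid of `Q(4,q)`. -/
def OvoidCondition {K : Type*} [Field K] (f : MvPolynomial (Fin 2) K) : Prop :=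
  ∀ x₁ y₁ x₂ y₂ : K, (x₁, y₁) ≠ (x₂, y₂) →
    (y₁ - y₂) ^ 2 + (x₁ - x₂) * (eval ![x₁, y₁] f - eval ![x₂, y₂] f) ≠ 0

namespace OvoidCurve

section Filtration

/-- A multiplicative increasing `ℤ`-filtration of an algebra by submodules. -/
structure MulFil (k B : Type*) [Field k] [CommRing B] [Algebra k B] where
  /-- The pieces of the filtration. -/
  Fil : ℤ → Submodule k B
  mono : Monotone Fil
  one_mem : 1 ∈ Fil 0
  mul_mem : ∀ {a b : ℤ} {x y : B}, x ∈ Fil a → y ∈ Fil b → x * y ∈ Fil (a + b)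

variable {k B : Type*} [Field k] [CommRing B] [Algebra k B]

namespace MulFil

variable (A : MulFil k B)

lemma mem_of_le {a b : ℤ} {x : B} (h : x ∈ A.Fil a) (hab : a ≤ b) : x ∈ A.Fil b :=
  A.mono hab h

lemma pow_mem {a : ℤ} {x : B} (h : x ∈ A.Fil a) (n : ℕ) : x ^ n ∈ A.Fil (n * a) := by
  induction n with
  | zero => simpa using A.one_mem
  | succ n ih =>
    rw [pow_succ]
    have := A.mul_mem ih h
    convert this using 2
    push_cast
    ring

lemma pow_mem_of_le {a b : ℤ} {x : B} (h : x ∈ A.Fil a) (n : ℕ) (hb : n * a ≤ b) :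
    x ^ n ∈ A.Fil b :=
  A.mem_of_le (A.pow_mem h n) hb

lemma mul_mem_of_le {a b c : ℤ} {x y : B} (hx : x ∈ A.Fil a) (hy : y ∈ A.Fil b)
    (h : a + b ≤ c) : x * y ∈ A.Fil c :=
  A.mem_of_le (A.mul_mem hx hy) h

lemma algebraMap_mem (c : k) : algebraMap k B c ∈ A.Fil 0 := by
  rw [Algebra.algebraMap_eq_smul_one]
  exact (A.Fil 0).smul_mem _ A.one_mem

lemma aeval_mem {x : B} (hx : x ∈ A.Fil 1) {N : Polynomial k} {D : ℕ} (hN : N.natDegree ≤ D) :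
    Polynomial.aeval x N ∈ A.Fil D := by
  rw [Polynomial.aeval_eq_sum_range]
  refine Submodule.sum_mem _ fun i hi => Submodule.smul_mem _ _ (A.pow_mem_of_le hx i ?_)
  have := Finset.mem_range.1 hi
  omega

/-- The filtration induced on the elements `∑_{j<m} g_j y^j`, where `y` satisfies a monic equation
of degree `m` and has weight `ω`. -/
def redSub (m ω : ℕ) (y : B) (w : ℤ) : Submodule k B where
  carrier := {b | ∃ g : ℕ → B, (∀ j < m, g j ∈ A.Fil (w - ω * j)) ∧
    b = ∑ j ∈ Finset.range m, g j * y ^ j}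
  zero_mem' := ⟨0, fun j _ => by simp, by simp⟩
  add_mem' := by
    rintro _ _ ⟨g, hg, rfl⟩ ⟨g', hg', rfl⟩
    refine ⟨g + g', fun j hj => add_mem (hg j hj) (hg' j hj), ?_⟩
    rw [← Finset.sum_add_distrib]
    exact Finset.sum_congr rfl fun j _ => by simp [add_mul]
  smul_mem' := by
    rintro c _ ⟨g, hg, rfl⟩
    refine ⟨c • g, fun j hj => Submodule.smul_mem _ _ (hg j hj), ?_⟩
    rw [Finset.smul_sum]
    exact Finset.sum_congr rfl fun j _ => by simp

variable {A}

lemma mul_mem_redSub {m ω : ℕ} {y : B} {a w : ℤ} {x b : B} (hx : x ∈ A.Fil a)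
    (hb : b ∈ A.redSub m ω y w) : x * b ∈ A.redSub m ω y (a + w) := by
  obtain ⟨g, hg, rfl⟩ := hb
  refine ⟨fun j => x * g j, fun j hj => A.mul_mem_of_le hx (hg j hj) (by omega), ?_⟩
  rw [Finset.mul_sum]
  exact Finset.sum_congr rfl fun j _ => by ring

lemma y_mul_mem_redSub {m ω : ℕ} {y : B} {h : ℕ → B}
    (hy : y ^ m = ∑ j ∈ Finset.range m, h j * y ^ j)
    (hh : ∀ j < m, h j ∈ A.Fil (ω * (m - j : ℤ))) {w : ℤ} {b : B}
    (hb : b ∈ A.redSub m ω y w) : y * b ∈ A.redSub m ω y (w + ω) := by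
  obtain ⟨g, hg, rfl⟩ := hb
  rcases m with _ | m
  · exact ⟨0, by simp, by simp⟩
  refine ⟨fun j => (if j = 0 then 0 else g (j - 1)) + g m * h j, fun j hj => ?_, ?_⟩
  · refine add_mem ?_ (A.mul_mem_of_le (hg m (by omega)) (hh j hj) (le_of_eq ?_))
    · split_ifs with h0
      · simp
      · refine A.mem_of_le (hg (j - 1) (by omega)) (le_of_eq ?_)
        obtain ⟨i, rfl⟩ := Nat.exists_eq_succ_of_ne_zero h0
        simp only [Nat.succ_eq_add_one, Nat.add_sub_cancel]
        push_cast
        ring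
    · push_cast
      ring
  · simp only [add_mul, Finset.sum_add_distrib]
    rw [Finset.sum_range_succ' (fun j => (if j = 0 then 0 else g (j - 1)) * y ^ j)]
    simp only [mul_assoc, ← Finset.mul_sum, ← hy]
    rw [Finset.sum_range_succ, mul_add, Finset.mul_sum]
    simp only [Nat.add_eq_zero_iff, one_ne_zero, and_false, if_false, Nat.add_sub_cancel, if_true,
      zero_mul, add_zero]
    congr 1
    · exact Finset.sum_congr rfl fun j _ => by ring
    · ring

lemma redSub_mono {m ω : ℕ} {y : B} : Monotone (A.redSub m ω y) := by
  rintro a b hab _ ⟨g, hg, rfl⟩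
  exact ⟨g, fun j hj => A.mem_of_le (hg j hj) (by omega), rfl⟩

lemma pow_mul_mem_redSub {m ω : ℕ} {y : B} {h : ℕ → B}
    (hy : y ^ m = ∑ j ∈ Finset.range m, h j * y ^ j)
    (hh : ∀ j < m, h j ∈ A.Fil (ω * (m - j : ℤ))) {w : ℤ} {b : B}
    (hb : b ∈ A.redSub m ω y w) (n : ℕ) : y ^ n * b ∈ A.redSub m ω y (w + ω * n) := by
  induction n with
  | zero => simpa using hb
  | succ n ih =>
    have := y_mul_mem_redSub hy hh ih
    rw [pow_succ', mul_assoc]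
    convert this using 2
    push_cast
    ring

lemma mem_redSub {m ω : ℕ} {y : B} (hm : 0 < m) {w : ℤ} {x : B} (hx : x ∈ A.Fil w) :
    x ∈ A.redSub m ω y w := by
  refine ⟨fun j => if j = 0 then x else 0, fun j _ => ?_, ?_⟩
  · dsimp only
    split_ifs with h
    · simpa [h] using hx
    · simp
  · rw [Finset.sum_eq_single_of_mem 0 (Finset.mem_range.2 hm)]
    · simp
    · intro j _ hj
      simp [hj]

variable (A)

/-- `redSub` as a multiplicative filtration. -/
def red {m ω : ℕ} {y : B} {h : ℕ → B} (hm : 0 < m)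
    (hy : y ^ m = ∑ j ∈ Finset.range m, h j * y ^ j)
    (hh : ∀ j < m, h j ∈ A.Fil (ω * (m - j : ℤ))) : MulFil k B where
  Fil := A.redSub m ω y
  mono := redSub_mono
  one_mem := mem_redSub hm A.one_mem
  mul_mem := by
    rintro a b _ x' ⟨g, hg, rfl⟩ hx'
    rw [Finset.sum_mul]
    refine Submodule.sum_mem _ fun j hj => ?_
    rw [mul_assoc]
    have h1 := mul_mem_redSub (hg j (Finset.mem_range.1 hj)) (pow_mul_mem_redSub hy hh hx' j)
    exact redSub_mono (by linarith) h1

lemma y_mem_red {m ω : ℕ} {y : B} {h : ℕ → B} (hm : 0 < m)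
    (hy : y ^ m = ∑ j ∈ Finset.range m, h j * y ^ j)
    (hh : ∀ j < m, h j ∈ A.Fil (ω * (m - j : ℤ))) : y ∈ (A.red hm hy hh).Fil ω := by
  have := y_mul_mem_redSub hy hh (mem_redSub (ω := ω) (y := y) hm A.one_mem)
  simpa [red] using this

end MulFil

/-- The filtration of `k[x]` by degree, evaluated at an element `x` of an algebra. -/
def degFil (k : Type*) {B : Type*} [Field k] [CommRing B] [Algebra k B] (x : B) : MulFil k B where
  Fil a :=
    { carrier := {b | ∃ N : Polynomial k, (∀ n : ℕ, a < n → N.coeff n = 0) ∧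
        b = Polynomial.aeval x N}
      zero_mem' := ⟨0, by simp, by simp⟩
      add_mem' := by
        rintro _ _ ⟨N, hN, rfl⟩ ⟨N', hN', rfl⟩
        exact ⟨N + N', fun n hn => by simp [hN n hn, hN' n hn], by simp⟩
      smul_mem' := by
        rintro c _ ⟨N, hN, rfl⟩
        exact ⟨c • N, fun n hn => by simp [hN n hn], by simp⟩ }
  mono := by
    rintro a b hab _ ⟨N, hN, rfl⟩
    exact ⟨N, fun n hn => hN n (by omega), rfl⟩
  one_mem := ⟨1, fun n hn => by
    rw [Polynomial.coeff_one, if_neg (by omega)], by simp⟩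
  mul_mem := by
    rintro a b _ _ ⟨N, hN, rfl⟩ ⟨N', hN', rfl⟩
    refine ⟨N * N', fun n hn => ?_, by simp⟩
    rw [Polynomial.coeff_mul]
    refine Finset.sum_eq_zero fun ij hij => ?_
    have := Finset.HasAntidiagonal.mem_antidiagonal.1 hij
    by_cases h : a < ij.1
    · simp [hN _ h]
    · simp [hN' ij.2 (by omega)]

lemma mem_degFil_of_natDegree_le {x : B} {N : Polynomial k} {a : ℤ} (h : (N.natDegree : ℤ) ≤ a) :
    Polynomial.aeval x N ∈ (degFil k x).Fil a :=
  ⟨N, fun n hn => Polynomial.coeff_eq_zero_of_natDegree_lt (by omega), rfl⟩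

/-- Polynomials whose `n`-th coefficient lies in the `(w - n)`-th piece of a filtration. -/
def polyFil (A : MulFil k B) : MulFil k (Polynomial B) where
  Fil w :=
    { carrier := {g | ∀ n : ℕ, g.coeff n ∈ A.Fil (w - n)}
      zero_mem' := by simp
      add_mem' := fun ha hb n => by
        rw [Polynomial.coeff_add]
        exact add_mem (ha n) (hb n)
      smul_mem' := fun c g hg n => by
        rw [Polynomial.coeff_smul]
        exact Submodule.smul_mem _ _ (hg n) }
  mono := fun a b hab g hg n => A.mem_of_le (hg n) (by omega)
  one_mem := fun n => by
    rw [Polynomial.coeff_one]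
    split_ifs with h
    · simpa [h] using A.one_mem
    · simp
  mul_mem := by
    intro a b g g' hg hg' n
    rw [Polynomial.coeff_mul]
    refine Submodule.sum_mem _ fun ij hij => ?_
    have := Finset.HasAntidiagonal.mem_antidiagonal.1 hij
    exact A.mul_mem_of_le (hg ij.1) (hg' ij.2) (by omega)

lemma C_mem_polyFil {A : MulFil k B} {a : ℤ} {x : B} (hx : x ∈ A.Fil a) :
    Polynomial.C x ∈ (polyFil A).Fil a := by
  intro n
  rw [Polynomial.coeff_C]
  split_ifs with h
  · simpa [h] using hx
  · simp

lemma X_mem_polyFil (A : MulFil k B) : Polynomial.X ∈ (polyFil A).Fil 1 := by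
  intro n
  rw [Polynomial.coeff_X]
  split_ifs with h
  · simpa [← h] using A.one_mem
  · simp

/-- The image of a filtration under an algebra homomorphism. -/
def mapFil {B' : Type*} [CommRing B'] [Algebra k B'] (A : MulFil k B) (φ : B →ₐ[k] B') :
    MulFil k B' where
  Fil w := (A.Fil w).map φ.toLinearMap
  mono := fun _ _ hab => Submodule.map_mono (A.mono hab)
  one_mem := ⟨1, A.one_mem, by simp⟩
  mul_mem := by
    rintro a b _ _ ⟨x, hx, rfl⟩ ⟨y, hy, rfl⟩
    exact ⟨x * y, A.mul_mem hx hy, by simp⟩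

end Filtration

/-- An affine plane curve `η^m = ∑_{j<m} h_j(ξ) η^j` with a generic point `(ξ, η)` in a field
extension `L` of the base field `k`. -/
structure Curve (k L : Type*) [Field k] [Field L] [Algebra k L] where
  /-- degree in the second variable -/
  m : ℕ
  /-- weight of the second variable -/
  ω : ℕ
  /-- first coordinate of the generic point -/
  ξ : L
  /-- second coordinate of the generic point -/
  η : L
  /-- coefficients of the defining equation -/
  h : ℕ → Polynomial k
  two_le : 2 ≤ m
  one_le : 1 ≤ ω
  rel : η ^ m = ∑ j ∈ Finset.range m, Polynomial.aeval ξ (h j) * η ^ j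
  natDegree_le : ∀ j < m, (h j).natDegree ≤ ω * (m - j)
  indep : ∀ r : ℕ → Polynomial k,
    ∑ j ∈ Finset.range m, Polynomial.aeval ξ (r j) * η ^ j = 0 → ∀ j < m, r j = 0

namespace Curve

variable {k L : Type*} [Field k] [Field L] [Algebra k L] (c : Curve k L)

/-- The number `ω (m - 1)`. -/
def s : ℕ := c.ω * (c.m - 1)

lemma one_le_s : 1 ≤ c.s :=
  Nat.mul_pos c.one_le (by have := c.two_le; omega)

lemma m_pos : 0 < c.m := by have := c.two_le; omega

lemma h_mem (j : ℕ) (hj : j < c.m) :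
    Polynomial.aeval c.ξ (c.h j) ∈ (degFil k c.ξ).Fil (c.ω * (c.m - j : ℤ)) := by
  refine mem_degFil_of_natDegree_le ?_
  have := c.natDegree_le j hj
  calc ((c.h j).natDegree : ℤ) ≤ ((c.ω * (c.m - j) : ℕ) : ℤ) := by exact_mod_cast this
    _ = _ := by
      push_cast [Nat.cast_sub hj.le]
      ring

/-- The filtration of the coordinate ring by weighted degree. -/
noncomputable def F : MulFil k L := (degFil k c.ξ).red c.m_pos c.rel c.h_mem

lemma mem_F_iff {a : ℤ} {x : L} : x ∈ c.F.Fil a ↔ ∃ r : ℕ → Polynomial k,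
    (∀ j < c.m, ∀ n : ℕ, a - c.ω * j < n → (r j).coeff n = 0) ∧
      x = ∑ j ∈ Finset.range c.m, Polynomial.aeval c.ξ (r j) * c.η ^ j := by
  constructor
  · rintro ⟨g, hg, rfl⟩
    choose! r hr hr' using hg
    refine ⟨r, hr, Finset.sum_congr rfl fun j hj => ?_⟩
    rw [hr' j (Finset.mem_range.1 hj)]
  · rintro ⟨r, hr, rfl⟩
    exact ⟨fun j => Polynomial.aeval c.ξ (r j), fun j hj => ⟨r j, hr j hj, rfl⟩, rfl⟩

lemma ξ_mem : c.ξ ∈ c.F.Fil 1 :=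
  MulFil.mem_redSub c.m_pos ⟨Polynomial.X, fun n hn => by
    rw [Polynomial.coeff_X, if_neg (by omega)], by simp⟩

lemma η_mem : c.η ∈ c.F.Fil c.ω := MulFil.y_mem_red _ _ _ _

lemma monomial_mem {i j : ℕ} {a : ℤ} (h : (i : ℤ) + c.ω * j ≤ a) :
    c.ξ ^ i * c.η ^ j ∈ c.F.Fil a :=
  c.F.mul_mem_of_le (c.F.pow_mem c.ξ_mem i) (c.F.pow_mem c.η_mem j) (by linarith)

/-- The coordinate ring. -/
def R : Subalgebra k L := Algebra.adjoin k {c.ξ, c.η}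

lemma ξ_mem_R : c.ξ ∈ c.R := Algebra.subset_adjoin (by simp)

lemma η_mem_R : c.η ∈ c.R := Algebra.subset_adjoin (by simp)

lemma aeval_mem_R {x : L} (hx : x ∈ c.R) (N : Polynomial k) : Polynomial.aeval x N ∈ c.R := by
  rw [Polynomial.aeval_eq_sum_range]
  exact sum_mem fun i _ => c.R.smul_mem (pow_mem hx i) _

lemma mem_R_of_mem_F {a : ℤ} {x : L} (hx : x ∈ c.F.Fil a) : x ∈ c.R := by
  obtain ⟨r, -, rfl⟩ := c.mem_F_iff.1 hx
  exact sum_mem fun j _ => mul_mem (c.aeval_mem_R c.ξ_mem_R _) (pow_mem c.η_mem_R _)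

lemma exists_mem_F_of_mem_R {x : L} (hx : x ∈ c.R) : ∃ a : ℤ, x ∈ c.F.Fil a := by
  induction hx using Algebra.adjoin_induction with
  | mem x hx =>
    rcases hx with rfl | rfl
    · exact ⟨_, c.ξ_mem⟩
    · exact ⟨_, c.η_mem⟩
  | algebraMap r => exact ⟨0, c.F.algebraMap_mem r⟩
  | add x y _ _ hx hy =>
    obtain ⟨a, ha⟩ := hx
    obtain ⟨b, hb⟩ := hy
    exact ⟨max a b, add_mem (c.F.mem_of_le ha (le_max_left _ _))
      (c.F.mem_of_le hb (le_max_right _ _))⟩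
  | mul x y _ _ hx hy =>
    obtain ⟨a, ha⟩ := hx
    obtain ⟨b, hb⟩ := hy
    exact ⟨a + b, c.F.mul_mem ha hb⟩

lemma aeval_ξ_eq_zero {N : Polynomial k} (h : Polynomial.aeval c.ξ N = 0) : N = 0 := by
  have := c.indep (fun j => if j = 0 then N else 0) (by
    rw [Finset.sum_eq_single_of_mem 0 (Finset.mem_range.2 c.m_pos)]
    · simpa using h
    · intro j _ hj
      simp [hj]) 0 c.m_pos
  simpa using this

/-- The linear parametrisation of `∑_{j<m} ∑_{i<n} k ξ^i η^j`. -/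
noncomputable def Φ (n : ℕ) : (Fin c.m → Fin n → k) →ₗ[k] L where
  toFun u := ∑ j, ∑ i, u j i • (c.ξ ^ (i : ℕ) * c.η ^ (j : ℕ))
  map_add' u u' := by simp [add_smul, Finset.sum_add_distrib]
  map_smul' a u := by simp [mul_smul, Finset.smul_sum]

/-- The polynomial with given coefficients. -/
noncomputable def coeffPoly {k : Type*} [Field k] {n : ℕ} (u : Fin n → k) : Polynomial k :=
  ∑ i : Fin n, Polynomial.monomial (i : ℕ) (u i)

lemma coeff_coeffPoly {n : ℕ} (u : Fin n → k) (i : Fin n) : (coeffPoly u).coeff i = u i := by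
  simp [coeffPoly, Polynomial.finsetSum_coeff, Polynomial.coeff_monomial, Fin.val_inj]

lemma coeff_coeffPoly_of_le {n : ℕ} (u : Fin n → k) {i : ℕ} (h : n ≤ i) :
    (coeffPoly u).coeff i = 0 := by
  rw [coeffPoly, Polynomial.finsetSum_coeff]
  refine Finset.sum_eq_zero fun j _ => ?_
  rw [Polynomial.coeff_monomial, if_neg (by omega)]

lemma aeval_coeffPoly {n : ℕ} (u : Fin n → k) (x : L) :
    Polynomial.aeval x (coeffPoly u) = ∑ i, u i • x ^ (i : ℕ) := by
  simp [coeffPoly, Polynomial.aeval_monomial, Algebra.smul_def]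

lemma coeffPoly_coeff {n : ℕ} {N : Polynomial k} (h : ∀ i, n ≤ i → N.coeff i = 0) :
    coeffPoly (fun i : Fin n => N.coeff i) = N := by
  ext i
  by_cases hi : i < n
  · exact coeff_coeffPoly (fun i : Fin n => N.coeff i) ⟨i, hi⟩
  · rw [coeff_coeffPoly_of_le _ (by omega), h i (by omega)]

/-- The coordinate polynomials of a coefficient array. -/
noncomputable def coordPoly {m n : ℕ} (u : Fin m → Fin n → k) (j : ℕ) : Polynomial k :=
  if hj : j < m then coeffPoly (u ⟨j, hj⟩) else 0

lemma Φ_apply {n : ℕ} (u : Fin c.m → Fin n → k) : c.Φ n u =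
    ∑ j ∈ Finset.range c.m, Polynomial.aeval c.ξ (coordPoly u j) * c.η ^ j := by
  rw [Finset.sum_range]
  change ∑ j, ∑ i, u j i • (c.ξ ^ (i : ℕ) * c.η ^ (j : ℕ)) = _
  refine Finset.sum_congr rfl fun j _ => ?_
  simp [coordPoly, aeval_coeffPoly, Finset.sum_mul]

lemma Φ_injective (n : ℕ) : Function.Injective (c.Φ n) := by
  rw [injective_iff_map_eq_zero]
  intro u hu
  rw [Φ_apply] at hu
  have := c.indep _ hu
  ext j i
  have h := this j j.2
  simp only [coordPoly, j.2, dif_pos] at h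
  rw [← coeff_coeffPoly (u j) i, h]
  simp

lemma Φ_mem {n : ℕ} (u : Fin c.m → Fin n → k) {a : ℤ} (ha : (n : ℤ) - 1 + c.s ≤ a) :
    c.Φ n u ∈ c.F.Fil a := by
  change ∑ j, ∑ i, u j i • (c.ξ ^ (i : ℕ) * c.η ^ (j : ℕ)) ∈ _
  refine Submodule.sum_mem _ fun j _ => Submodule.sum_mem _ fun i _ =>
    Submodule.smul_mem _ _ (c.monomial_mem ?_)
  have h1 : c.ω * (j : ℕ) ≤ c.s := Nat.mul_le_mul_left _ (by omega)
  have h2 : (c.ω : ℤ) * (j : ℕ) ≤ c.s := by exact_mod_cast h1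
  omega

lemma mem_range_Φ {a : ℤ} {n : ℕ} (h : a < n) {x : L} (hx : x ∈ c.F.Fil a) :
    x ∈ (c.Φ n).range := by
  obtain ⟨r, hr, rfl⟩ := c.mem_F_iff.1 hx
  refine ⟨fun j i => (r j).coeff i, ?_⟩
  rw [Φ_apply]
  refine Finset.sum_congr rfl fun j hj => ?_
  have hj' := Finset.mem_range.1 hj
  rw [coordPoly, dif_pos hj', coeffPoly_coeff]
  intro i hi
  refine hr j hj' i ?_
  have : (0 : ℤ) ≤ c.ω * j := by positivity
  omega

lemma finiteDimensional_F (a : ℤ) : FiniteDimensional k (c.F.Fil a) :=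
  Submodule.finiteDimensional_of_le (S₂ := (c.Φ (a.toNat + 1)).range)
    fun _ hx => c.mem_range_Φ (by omega) hx

lemma finrank_F_le {a : ℤ} {n : ℕ} (h : a < n) : Module.finrank k (c.F.Fil a) ≤ c.m * n := by
  have h1 := Submodule.finrank_mono (s := c.F.Fil a) (t := (c.Φ n).range)
    fun _ hx => c.mem_range_Φ h hx
  refine h1.trans ((LinearMap.finrank_range_le _).trans ?_)
  simp [Module.finrank_pi_fintype]

lemma eq_zero_of_pow_mul_mem {q M : ℕ} (hq : 1 < q) {z : L} (hz : z ∈ c.R) {b : ℤ}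
    (hb : b < q * M) (h : (c.ξ ^ q - c.ξ) ^ M * z ∈ c.F.Fil b) : z = 0 := by
  obtain ⟨a, ha⟩ := c.exists_mem_F_of_mem_R hz
  obtain ⟨r, -, rfl⟩ := c.mem_F_iff.1 ha
  obtain ⟨r', hr', heq⟩ := c.mem_F_iff.1 h
  set D : Polynomial k := (Polynomial.X ^ q - Polynomial.X) ^ M with hD
  have hdeg : (Polynomial.X ^ q - Polynomial.X : Polynomial k).natDegree = q :=
    FiniteField.X_pow_card_sub_X_natDegree_eq k hq
  have hne : (Polynomial.X ^ q - Polynomial.X : Polynomial k) ≠ 0 :=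
    FiniteField.X_pow_card_sub_X_ne_zero k hq
  have key := c.indep (fun j => D * r j - r' j) (by
    simp only [map_sub, sub_mul, Finset.sum_sub_distrib, ← heq, map_mul, mul_assoc,
      ← Finset.mul_sum]
    simp [hD])
  refine Finset.sum_eq_zero fun j hj => ?_
  have hj' := Finset.mem_range.1 hj
  have hk : D * r j = r' j := sub_eq_zero.1 (key j hj')
  suffices r j = 0 by simp [this]
  by_contra hrj
  have h1 : (D * r j).natDegree = q * M + (r j).natDegree := by
    rw [Polynomial.natDegree_mul (pow_ne_zero _ hne) hrj, Polynomial.natDegree_pow, hdeg,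
      mul_comm]
  have h2 : D * r j ≠ 0 := mul_ne_zero (pow_ne_zero _ hne) hrj
  have h3 := hr' j hj' (D * r j).natDegree (by
    rw [h1]
    have : (0 : ℤ) ≤ c.ω * j := by positivity
    push_cast
    have : (0 : ℤ) ≤ (r j).natDegree := by positivity
    linarith)
  rw [← hk] at h3
  exact h2 (Polynomial.leadingCoeff_eq_zero.1 h3)

end Curve

/-- A discrete valuation on `L`, trivial on `k` and with residue field `k`, described by the
fractional ideals `Ge n` of elements of valuation at least `n`. -/
structure Place (k L : Type*) [Field k] [Field L] [Algebra k L] where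
  /-- elements of valuation at least `n` -/
  Ge : ℤ → Submodule k L
  anti : Antitone Ge
  one_mem : 1 ∈ Ge 0
  mul_mem : ∀ {a b : ℤ} {x y : L}, x ∈ Ge a → y ∈ Ge b → x * y ∈ Ge (a + b)
  /-- a uniformizer -/
  π : L
  π_ne_zero : π ≠ 0
  zpow_mem : ∀ n : ℤ, π ^ n ∈ Ge n
  residue : ∀ {n : ℤ} {x : L}, x ∈ Ge n → ∃ c : k, x - c • π ^ n ∈ Ge (n + 1)
  exhaust : ∀ x : L, ∃ n, x ∈ Ge n
  sep : ∀ x : L, x ≠ 0 → ∃ n, x ∉ Ge n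

namespace Place

variable {k L : Type*} [Field k] [Field L] [Algebra k L] (v : Place k L)

lemma mem_of_le {a b : ℤ} {x : L} (h : x ∈ v.Ge a) (hab : b ≤ a) : x ∈ v.Ge b :=
  v.anti hab h

lemma mul_mem_of_le {a b c : ℤ} {x y : L} (hx : x ∈ v.Ge a) (hy : y ∈ v.Ge b)
    (h : c ≤ a + b) : x * y ∈ v.Ge c :=
  v.mem_of_le (v.mul_mem hx hy) h

lemma pow_mem {a : ℤ} {x : L} (h : x ∈ v.Ge a) (n : ℕ) : x ^ n ∈ v.Ge (n * a) := by
  induction n with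
  | zero => simpa using v.one_mem
  | succ n ih =>
    rw [pow_succ]
    refine v.mul_mem_of_le ih h (le_of_eq ?_)
    push_cast
    ring

lemma exists_not_mem_of_le {x : L} (hx : x ≠ 0) : ∃ n, ∀ i, x ∈ v.Ge i → i ≤ n := by
  obtain ⟨n, hn⟩ := v.sep x hx
  exact ⟨n, fun i hi => le_of_not_gt fun h => hn (v.mem_of_le hi h.le)⟩

lemma exists_common {ι : Type*} [Finite ι] (ρ : ι → L) : ∃ n, ∀ i, ρ i ∈ v.Ge n := by
  choose n hn using fun i => v.exhaust (ρ i)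
  obtain ⟨N, hN⟩ := (Set.finite_range n).bddBelow
  exact ⟨N, fun i => v.mem_of_le (hn i) (hN ⟨i, rfl⟩)⟩

/-- Leading coefficients of a finite family of elements. -/
lemma exists_leading {ι : Type*} [Finite ι] (ρ : ι → L) {i₀ : ι} (h0 : ρ i₀ ≠ 0) :
    ∃ (ν : ℤ) (b : ι → k), (∃ i, b i ≠ 0) ∧ ∀ i, ρ i - b i • v.π ^ ν ∈ v.Ge (ν + 1) := by
  obtain ⟨B, hB⟩ := v.exists_not_mem_of_le h0
  obtain ⟨ν, hν, hmax⟩ := Int.exists_greatest_of_bdd (P := fun n => ∀ i, ρ i ∈ v.Ge n)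
    ⟨B, fun n hn => hB n (hn i₀)⟩ (v.exists_common ρ)
  choose b hb using fun i => v.residue (hν i)
  refine ⟨ν, b, ?_, hb⟩
  by_contra! hcon
  have := hmax (ν + 1) fun i => by simpa [hcon i] using hb i
  omega

end Place

namespace Curve

variable {k L : Type*} [Field k] [Field L] [Algebra k L] (c : Curve k L) (v : Place k L)

/-- The generic point has poles of order at most `1` and `ω`, and a polynomial in `ξ` vanishes at
the place at most to the order of its degree. -/
structure Adapted : Prop where
  ξ_mem : c.ξ ∈ v.Ge (-1)
  η_mem : c.η ∈ v.Ge (-c.ω)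
  le_natDegree : ∀ N : Polynomial k, N ≠ 0 → ∀ n : ℤ, Polynomial.aeval c.ξ N ∈ v.Ge n →
    n ≤ N.natDegree

variable {c v}

lemma Adapted.mem_Ge (hv : c.Adapted v) {b : ℤ} {x : L} (hx : x ∈ c.F.Fil b) :
    x ∈ v.Ge (-b) := by
  obtain ⟨r, hr, rfl⟩ := c.mem_F_iff.1 hx
  refine Submodule.sum_mem _ fun j hj => ?_
  rw [Polynomial.aeval_eq_sum_range, Finset.sum_mul]
  refine Submodule.sum_mem _ fun n _ => ?_
  by_cases h : b - c.ω * j < n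
  · simp [hr j (Finset.mem_range.1 hj) n h]
  · rw [smul_mul_assoc]
    refine Submodule.smul_mem _ _ (v.mul_mem_of_le (v.pow_mem hv.ξ_mem n)
      (v.pow_mem hv.η_mem j) ?_)
    linarith

lemma Adapted.valuation_le (hv : c.Adapted v) {a : ℕ} {z : L} (hz : z ≠ 0)
    (hza : z ∈ c.F.Fil a) {n : ℤ} (hn : z ∈ v.Ge n) :
    n + a ≤ 2 * c.m * (a + c.s) := by
  set n' : ℕ := (c.m - 1) * (a + c.s) + 1 with hn'
  set b : ℕ := n' - 1 + c.s with hb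
  have hΦ : ∀ u, c.Φ n' u ∈ c.F.Fil b := fun u => c.Φ_mem u (by omega)
  have hfd := c.finiteDimensional_F (a + b)
  let ψ : ((Fin c.m → Fin n' → k) × (Fin (a + b + 1) → k)) →ₗ[k] c.F.Fil (a + b) :=
    { toFun := fun uw => ⟨z * c.Φ n' uw.1 - Polynomial.aeval c.ξ (coeffPoly uw.2), by
        refine sub_mem (c.F.mul_mem hza (hΦ _)) ?_
        rw [aeval_coeffPoly]
        refine Submodule.sum_mem _ fun i _ => Submodule.smul_mem _ _
          (c.F.pow_mem_of_le c.ξ_mem i ?_)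
        have := i.2
        omega⟩
      map_add' := fun x y => by
        ext
        simp [aeval_coeffPoly, add_smul, Finset.sum_add_distrib, mul_add]
        ring
      map_smul' := fun t x => by
        ext
        simp [aeval_coeffPoly, mul_smul, Finset.smul_sum, smul_sub] }
  have hlt : Module.finrank k (c.F.Fil (a + b)) <
      Module.finrank k ((Fin c.m → Fin n' → k) × (Fin (a + b + 1) → k)) := by
    refine (c.finrank_F_le (n := a + b + 1) (by push_cast; omega)).trans_lt ?_
    simp only [Module.finrank_prod, Module.finrank_pi_fintype, Module.finrank_self,
      Finset.sum_const, Finset.card_univ, Fintype.card_fin, smul_eq_mul, mul_one]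
    obtain ⟨m', hm'⟩ : ∃ m', c.m = m' + 1 := ⟨c.m - 1, by have := c.m_pos; omega⟩
    have h1 : a + b + 1 = a + c.s + n' := by omega
    rw [h1, hm', hn', hm']
    simp only [Nat.add_sub_cancel]
    nlinarith
  obtain ⟨⟨u, w⟩, hker, hne⟩ := Submodule.exists_mem_ne_zero_of_ne_bot
    (LinearMap.ker_ne_bot_of_finrank_lt (f := ψ) hlt)
  have heq : z * c.Φ n' u = Polynomial.aeval c.ξ (coeffPoly w) := by
    have := congrArg Subtype.val (LinearMap.mem_ker.1 hker)
    exact sub_eq_zero.1 this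
  have hw : coeffPoly w ≠ 0 := by
    intro hw0
    have hw' : w = 0 := by
      ext i
      rw [← coeff_coeffPoly w i, hw0]
      simp
    rw [hw0, map_zero, mul_eq_zero, or_iff_right hz] at heq
    have hu : u = 0 := c.Φ_injective n' (by rw [heq, map_zero])
    exact hne (by rw [hu, hw']; rfl)
  have hval := hv.le_natDegree _ hw (n - b) (by
    rw [← heq]
    exact v.mul_mem hn (hv.mem_Ge (hΦ u)))
  have hdeg : (coeffPoly w).natDegree ≤ a + b := by
    rw [Polynomial.natDegree_le_iff_coeff_eq_zero]
    intro N hN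
    exact coeff_coeffPoly_of_le w (by omega)
  have hb' : b = (c.m - 1) * (a + c.s) + c.s := by omega
  have hm : ((c.m - 1 : ℕ) : ℤ) = c.m - 1 := by
    have := c.m_pos
    omega
  have hb'' : (b : ℤ) = (c.m - 1) * (a + c.s) + c.s := by
    rw [hb']
    push_cast
    rw [hm]
  have hdeg' : ((coeffPoly w).natDegree : ℤ) ≤ a + b := by exact_mod_cast hdeg
  have : n ≤ a + 2 * b := by linarith
  rw [hb''] at this
  linarith

/-- `q`-th powers of independent monomials are independent over small elements. -/
lemma Adapted.indep_pow (hv : c.Adapted v) {p h : ℕ} [Fact p.Prime] [CharP k p]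
    (hsurj : ∀ x : k, ∃ y : k, y ^ p ^ h = x) {a N : ℕ}
    (hq : 2 * c.m * (a + 2 * c.s) < p ^ h) (w : Fin c.m → Fin N → L)
    (hw : ∀ j l, w j l ∈ c.F.Fil a)
    (h0 : ∑ j, ∑ l, w j l * (c.ξ ^ (l : ℕ) * c.η ^ (j : ℕ)) ^ p ^ h = 0) (j : Fin c.m)
    (l : Fin N) : w j l = 0 := by
  have : CharP L p := charP_of_injective_algebraMap (algebraMap k L).injective p
  have : ExpChar L p := ExpChar.prime Fact.out
  set q := p ^ h with hqdef
  choose u hu using fun j l => c.mem_range_Φ (n := a + 1) (by push_cast; omega) (hw j l)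
  choose μ hμ using fun j l j' i => hsurj (u j l j' i)
  let e : Fin c.m × Fin (a + 1) → L := fun β => c.ξ ^ (β.2 : ℕ) * c.η ^ (β.1 : ℕ)
  have he : ∀ β, e β ∈ c.F.Fil (a + c.s : ℕ) := fun β => by
    refine c.monomial_mem ?_
    have h1 : c.ω * (β.1 : ℕ) ≤ c.s := Nat.mul_le_mul_left _ (by omega)
    have := β.2.2
    have h2 : (c.ω : ℤ) * (β.1 : ℕ) ≤ c.s := by exact_mod_cast h1
    push_cast
    omega
  let ρ : Fin c.m × Fin (a + 1) → L := fun β => c.Φ N fun j l => μ j l β.1 β.2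
  have hw' : ∀ j l, w j l = ∑ β, (μ j l β.1 β.2) ^ q • e β := fun j l => by
    rw [← hu j l, Fintype.sum_prod_type]
    simp only [hμ, e]
    rfl
  have hpow : ∀ β, ρ β ^ q =
      ∑ j, ∑ l, (μ j l β.1 β.2) ^ q • (c.ξ ^ (l : ℕ) * c.η ^ (j : ℕ)) ^ q := fun β => by
    change (∑ j, ∑ l, μ j l β.1 β.2 • (c.ξ ^ (l : ℕ) * c.η ^ (j : ℕ))) ^ q = _
    simp only [hqdef, sum_pow_char_pow, smul_pow]
  have hsum : ∑ β, e β * ρ β ^ q = 0 := by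
    rw [← h0]
    simp only [hpow, hw', Finset.mul_sum, Finset.sum_mul]
    rw [Finset.sum_comm]
    refine Finset.sum_congr rfl fun j _ => ?_
    rw [Finset.sum_comm]
    refine Finset.sum_congr rfl fun l _ => Finset.sum_congr rfl fun β _ => ?_
    simp only [Algebra.smul_def]
    ring
  have hρ : ∀ β, ρ β = 0 := by
    by_contra! hcon
    obtain ⟨β₀, hβ₀⟩ := hcon
    obtain ⟨ν, b, ⟨β₁, hβ₁⟩, hb⟩ := v.exists_leading ρ hβ₀
    set z : L := ∑ β, b β ^ q • e β with hz
    have hzΦ : z = c.Φ (a + 1) fun j i => b (j, i) ^ q := by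
      rw [hz, Fintype.sum_prod_type]
      rfl
    have hz0 : z ≠ 0 := by
      intro h
      rw [hzΦ] at h
      have h' := c.Φ_injective (a + 1) (h.trans (map_zero _).symm)
      have := congrFun (congrFun h' β₁.1) β₁.2
      exact hβ₁ (pow_eq_zero_iff (pow_ne_zero _ (Fact.out : p.Prime).ne_zero) |>.1 this)
    have hzF : z ∈ c.F.Fil (a + c.s : ℕ) :=
      Submodule.sum_mem _ fun β _ => Submodule.smul_mem _ _ (he β)
    have hrest : z * v.π ^ (ν * q) = - ∑ β, e β * (ρ β - b β • v.π ^ ν) ^ q := by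
      have h1 : ∀ β, (ρ β - b β • v.π ^ ν) ^ q = ρ β ^ q - b β ^ q • v.π ^ (ν * q) := fun β => by
        rw [hqdef, sub_pow_char_pow, smul_pow, ← hqdef, zpow_mul, zpow_natCast]
      simp only [h1, mul_sub, Finset.sum_sub_distrib, hsum, zero_sub, neg_neg, hz,
        Finset.sum_mul]
      refine Finset.sum_congr rfl fun β _ => ?_
      simp only [Algebra.smul_def]
      ring
    have hmem : z * v.π ^ (ν * q) ∈ v.Ge (ν * q + q - (a + c.s : ℕ)) := by
      rw [hrest]
      refine neg_mem (Submodule.sum_mem _ fun β _ => ?_)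
      refine v.mul_mem_of_le (hv.mem_Ge (he β)) (v.pow_mem (hb β) q) (le_of_eq ?_)
      ring
    have hzv : z ∈ v.Ge (q - (a + c.s : ℕ)) := by
      have h2 : z = z * v.π ^ (ν * q) * v.π ^ (-(ν * q)) := by
        rw [mul_assoc, ← zpow_add₀ v.π_ne_zero]
        simp
      rw [h2]
      exact v.mul_mem_of_le hmem (v.zpow_mem _) (le_of_eq (by ring))
    have hfin := hv.valuation_le hz0 hzF hzv
    have : (2 * c.m * (a + 2 * c.s) : ℤ) < q := by exact_mod_cast hq
    push_cast at hfin
    linarith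
  rw [hw' j l]
  refine Finset.sum_eq_zero fun β _ => ?_
  have h3 := c.Φ_injective N ((hρ β).trans (map_zero _).symm)
  have h4 : μ j l β.1 β.2 = 0 := congrFun (congrFun h3 j) l
  rw [h4, zero_pow (pow_ne_zero _ (Fact.out : p.Prime).ne_zero), zero_smul]

end Curve

namespace Curve

variable {k L : Type*} [Field k] [Field L] [Algebra k L] (c : Curve k L)

/-- The quotient of the defining polynomial at `ξ` by `Y - η`, evaluated at `y`. -/
noncomputable def G (y : L) : L :=
  ∑ b ∈ Finset.range c.m, y ^ b * c.η ^ (c.m - 1 - b) -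
    ∑ j ∈ Finset.range c.m, Polynomial.aeval c.ξ (c.h j) *
      ∑ b ∈ Finset.range j, y ^ b * c.η ^ (j - 1 - b)

lemma G_mul_sub (y : L) : c.G y * (y - c.η) =
    y ^ c.m - ∑ j ∈ Finset.range c.m, Polynomial.aeval c.ξ (c.h j) * y ^ j := by
  have h1 : ∑ j ∈ Finset.range c.m, Polynomial.aeval c.ξ (c.h j) *
      ((∑ b ∈ Finset.range j, y ^ b * c.η ^ (j - 1 - b)) * (y - c.η)) =
      ∑ j ∈ Finset.range c.m, Polynomial.aeval c.ξ (c.h j) * y ^ j - c.η ^ c.m := by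
    rw [c.rel, ← Finset.sum_sub_distrib]
    refine Finset.sum_congr rfl fun j _ => ?_
    rw [geom_sum₂_mul, mul_sub]
  rw [G, sub_mul, geom_sum₂_mul, Finset.sum_mul]
  simp only [mul_assoc]
  rw [h1]
  ring

lemma G_η : c.G c.η = c.m * c.η ^ (c.m - 1) -
    ∑ j ∈ Finset.range c.m, Polynomial.aeval c.ξ (c.h j) * (j * c.η ^ (j - 1)) := by
  have h1 : ∀ j : ℕ, ∑ b ∈ Finset.range j, c.η ^ b * c.η ^ (j - 1 - b) = j * c.η ^ (j - 1) := by
    intro j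
    rw [Finset.sum_congr rfl (g := fun _ => c.η ^ (j - 1)) fun b hb => ?_]
    · simp
    · have := Finset.mem_range.1 hb
      rw [← pow_add]
      congr 1
      omega
  simp only [G, h1]

/-- Powers of `G y` are polynomials of degree less than `m` in `y` with coefficients of bounded
weight, as functions on the translated curve. -/
lemma exists_expansion (i : ℕ) : ∃ g : ℕ → Polynomial L,
    (∀ j < c.m, ∀ n : ℕ, (g j).coeff n ∈ c.F.Fil (i * c.s - c.ω * j - n)) ∧
    ∀ t y : L, y ^ c.m = ∑ j ∈ Finset.range c.m, Polynomial.aeval (c.ξ + t) (c.h j) * y ^ j →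
      c.G y ^ i = ∑ j ∈ Finset.range c.m, (g j).eval t * y ^ j := by
  let Z := {z : L × L // z.2 ^ c.m =
    ∑ j ∈ Finset.range c.m, Polynomial.aeval (c.ξ + z.1) (c.h j) * z.2 ^ j}
  let φ : Polynomial L →ₐ[k] (Z → L) :=
    AlgHom.pi (A := fun _ : Z => L) fun z => (Polynomial.aeval z.1.1).restrictScalars k
  have hφ : ∀ g z, φ g z = g.eval z.1.1 := fun g z => by
    simp [φ, Polynomial.aeval_def, Polynomial.eval₂_eq_eval_map]
  let A := mapFil (polyFil c.F) φ
  let y : Z → L := fun z => z.1.2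
  let H : ℕ → (Z → L) := fun j => Polynomial.aeval (φ (Polynomial.C c.ξ + Polynomial.X)) (c.h j)
  have hH : ∀ j z, H j z = Polynomial.aeval (c.ξ + z.1.1) (c.h j) := fun j z => by
    change Pi.evalAlgHom k (fun _ : Z => L) z (H j) = _
    rw [← Polynomial.aeval_algHom_apply]
    simp [hφ]
  have hone : φ (Polynomial.C c.ξ + Polynomial.X) ∈ A.Fil 1 :=
    Submodule.mem_map_of_mem (add_mem (C_mem_polyFil c.ξ_mem) (X_mem_polyFil c.F))
  have hy : y ^ c.m = ∑ j ∈ Finset.range c.m, H j * y ^ j := by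
    ext z
    simp only [Pi.pow_apply, Finset.sum_apply, Pi.mul_apply, hH]
    exact z.2
  have hmem : ∀ j < c.m, H j ∈ A.Fil (c.ω * (c.m - j : ℤ)) := fun j hj => by
    refine A.mem_of_le (A.aeval_mem hone (c.natDegree_le j hj)) (le_of_eq ?_)
    push_cast [Nat.cast_sub hj.le]
    ring
  let E := A.red c.m_pos hy hmem
  have hyE : y ∈ E.Fil c.ω := MulFil.y_mem_red _ _ _ _
  have hconst : ∀ {a : ℤ} {x : L}, x ∈ c.F.Fil a → φ (Polynomial.C x) ∈ E.Fil a :=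
    fun hx => MulFil.mem_redSub c.m_pos (Submodule.mem_map_of_mem (C_mem_polyFil hx))
  have hS : ∀ j : ℕ, ∑ b ∈ Finset.range j, y ^ b * φ (Polynomial.C (c.η ^ (j - 1 - b))) ∈
      E.Fil (c.ω * (j - 1 : ℤ)) := fun j => by
    refine Submodule.sum_mem _ fun b hb => ?_
    have := Finset.mem_range.1 hb
    refine E.mul_mem_of_le (E.pow_mem hyE b) (hconst (c.F.pow_mem c.η_mem _)) (le_of_eq ?_)
    rw [Nat.cast_sub (by omega), Nat.cast_sub (by omega)]
    push_cast
    ring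
  have hs : (c.s : ℤ) = c.ω * (c.m - 1 : ℤ) := by
    rw [s]
    push_cast [Nat.cast_sub c.m_pos]
    ring
  have hG : (fun z : Z => c.G z.1.2) ∈ E.Fil c.s := by
    have : (fun z : Z => c.G z.1.2) =
        ∑ b ∈ Finset.range c.m, y ^ b * φ (Polynomial.C (c.η ^ (c.m - 1 - b))) -
        ∑ j ∈ Finset.range c.m, φ (Polynomial.C (Polynomial.aeval c.ξ (c.h j))) *
          ∑ b ∈ Finset.range j, y ^ b * φ (Polynomial.C (c.η ^ (j - 1 - b))) := by
      ext z
      simp only [G, Pi.sub_apply, Finset.sum_apply, Pi.mul_apply, Pi.pow_apply, hφ,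
        Polynomial.eval_C, y]
    rw [this, hs]
    refine sub_mem (hS c.m) (Submodule.sum_mem _ fun j hj => ?_)
    have hj' := Finset.mem_range.1 hj
    refine E.mul_mem_of_le (hconst (MulFil.mem_redSub c.m_pos (c.h_mem j hj'))) (hS j)
      (le_of_eq ?_)
    ring
  obtain ⟨g, hg, hgeq⟩ := E.pow_mem hG i
  choose! g' hg' hg'' using hg
  refine ⟨g', fun j hj n => hg' j hj n, fun t y' hty => ?_⟩
  have := congrFun hgeq ⟨(t, y'), hty⟩
  simp only [Pi.pow_apply, Finset.sum_apply, Pi.mul_apply] at this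
  rw [this]
  refine Finset.sum_congr rfl fun j hj => ?_
  rw [← hg'' j (Finset.mem_range.1 hj)]
  exact congrArg (· * y' ^ j) (hφ _ _)

lemma exists_sub_eq_mul {x y : L} (hx : x ∈ c.R) (hy : y ∈ c.R) (N : Polynomial k) :
    ∃ z ∈ c.R, Polynomial.aeval x N - Polynomial.aeval y N = (x - y) * z := by
  obtain ⟨z, hz⟩ := Polynomial.sub_dvd_eval_sub (⟨x, hx⟩ : c.R) ⟨y, hy⟩
    (N.map (algebraMap k c.R))
  refine ⟨z, z.2, ?_⟩
  have := congrArg (c.R.val) hz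
  simp only [Polynomial.eval_map_algebraMap, map_sub, map_mul,
    ← Polynomial.aeval_algHom_apply] at this
  exact this

lemma eval_eq_low_add_high {g : Polynomial L} (hg : ∀ n, g.coeff n ∈ c.R) {t : L} (ht : t ∈ c.R)
    (N : ℕ) : ∃ Q ∈ c.R, g.eval t = ∑ e ∈ Finset.range N, g.coeff e * t ^ e + t ^ N * Q := by
  refine ⟨∑ e ∈ Finset.range (g.natDegree + 1), g.coeff (N + e) * t ^ e,
    sum_mem fun e _ => mul_mem (hg _) (pow_mem ht _), ?_⟩
  rw [Polynomial.eval_eq_sum_range' (n := N + (g.natDegree + 1)) (by omega),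
    Finset.sum_range_add, Finset.mul_sum]
  congr 1
  refine Finset.sum_congr rfl fun e _ => ?_
  ring

end Curve

namespace Curve

variable {k L : Type*} [Field k] [Field L] [Algebra k L] (c : Curve k L)

lemma aeval_pow_of_coeff_fixed {p h : ℕ} [Fact p.Prime] [CharP L p] {N : Polynomial k}
    (hN : ∀ n, N.coeff n ^ p ^ h = N.coeff n) (x : L) :
    Polynomial.aeval x N ^ p ^ h = Polynomial.aeval (x ^ p ^ h) N := by
  have : ExpChar L p := ExpChar.prime Fact.out
  rw [Polynomial.aeval_eq_sum_range, Polynomial.aeval_eq_sum_range, sum_pow_char_pow]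
  refine Finset.sum_congr rfl fun n _ => ?_
  rw [smul_pow, hN, ← pow_mul, ← pow_mul, mul_comm]

lemma rel_pow {p h : ℕ} [Fact p.Prime] [CharP L p]
    (hfix : ∀ j < c.m, ∀ n, (c.h j).coeff n ^ p ^ h = (c.h j).coeff n) :
    (c.η ^ p ^ h) ^ c.m =
      ∑ j ∈ Finset.range c.m, Polynomial.aeval (c.ξ ^ p ^ h) (c.h j) * (c.η ^ p ^ h) ^ j := by
  have : ExpChar L p := ExpChar.prime Fact.out
  rw [← pow_mul, mul_comm, pow_mul, c.rel, sum_pow_char_pow]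
  refine Finset.sum_congr rfl fun j hj => ?_
  rw [mul_pow, aeval_pow_of_coeff_fixed (hfix j (Finset.mem_range.1 hj)), ← pow_mul, ← pow_mul,
    mul_comm j]

/-- If `ξ` lies in the ideal generated by `ξ^q - ξ` and `η^q - η`, then `ξ G(η^q)` is divisible by
`ξ^q - ξ`. -/
lemma exists_ξ_mul_G_eq {p h : ℕ} [Fact p.Prime] [CharP L p]
    (hfix : ∀ j < c.m, ∀ n, (c.h j).coeff n ^ p ^ h = (c.h j).coeff n)
    {α β : L} (hα : α ∈ c.R) (hβ : β ∈ c.R)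
    (hαβ : c.ξ = α * (c.ξ ^ p ^ h - c.ξ) + β * (c.η ^ p ^ h - c.η)) :
    ∃ κ ∈ c.R, c.ξ * c.G (c.η ^ p ^ h) = (c.ξ ^ p ^ h - c.ξ) * κ := by
  have hGR : c.G (c.η ^ p ^ h) ∈ c.R := by
    refine sub_mem (sum_mem fun b _ => ?_) (sum_mem fun j _ => mul_mem
      (c.aeval_mem_R c.ξ_mem_R _) (sum_mem fun b _ => ?_))
    all_goals exact mul_mem (pow_mem (pow_mem c.η_mem_R _) _) (pow_mem c.η_mem_R _)
  choose z hz hz' using fun j => c.exists_sub_eq_mul (pow_mem c.ξ_mem_R (p ^ h)) c.ξ_mem_R (c.h j)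
  have hP : c.G (c.η ^ p ^ h) * (c.η ^ p ^ h - c.η) =
      (c.ξ ^ p ^ h - c.ξ) * ∑ j ∈ Finset.range c.m, z j * (c.η ^ p ^ h) ^ j := by
    rw [c.G_mul_sub, c.rel_pow hfix, ← Finset.sum_sub_distrib, Finset.mul_sum]
    refine Finset.sum_congr rfl fun j _ => ?_
    rw [← sub_mul, hz', mul_assoc]
  refine ⟨α * c.G (c.η ^ p ^ h) + β * ∑ j ∈ Finset.range c.m, z j * (c.η ^ p ^ h) ^ j,
    add_mem (mul_mem hα hGR) (mul_mem hβ (sum_mem fun j _ => mul_mem (hz j)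
      (pow_mem (pow_mem c.η_mem_R _) _))), ?_⟩
  linear_combination c.G (c.η ^ p ^ h) * hαβ + β * hP

variable {c} {v : Place k L}

theorem Adapted.false_of_ideal (hv : c.Adapted v) {p h : ℕ} [Fact p.Prime] [CharP k p]
    (hsurj : ∀ x : k, ∃ y : k, y ^ p ^ h = x)
    (hfix : ∀ j < c.m, ∀ n, (c.h j).coeff n ^ p ^ h = (c.h j).coeff n)
    (hGη : c.G c.η ≠ 0) {α β : L} (hα : α ∈ c.R) (hβ : β ∈ c.R)
    (hαβ : c.ξ = α * (c.ξ ^ p ^ h - c.ξ) + β * (c.η ^ p ^ h - c.η))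
    (hq : 8 * c.m ^ 2 * c.s * (c.s + 1) < p ^ h) : False := by
  have : CharP L p := charP_of_injective_algebraMap (algebraMap k L).injective p
  obtain ⟨κ, hκ, hκG⟩ := c.exists_ξ_mul_G_eq hfix hα hβ hαβ
  have hrelq := c.rel_pow hfix
  set q := p ^ h with hqdef
  set t := c.ξ ^ q - c.ξ with ht
  set y := c.η ^ q with hy
  have hs1 := c.one_le_s
  have hm2 := c.two_le
  obtain ⟨E, hE⟩ : ∃ E, E = c.m * c.s := ⟨_, rfl⟩
  have hEs : 2 * c.s ≤ E := by rw [hE]; exact Nat.mul_le_mul_right _ hm2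
  obtain ⟨Es, hEs'⟩ : ∃ Es, Es = E * c.s := ⟨_, rfl⟩
  have hEEs : E ≤ Es := by rw [hEs']; exact Nat.le_mul_of_pos_right _ hs1
  -- the numerical parameters
  obtain ⟨M, hM⟩ : ∃ M, M = 2 * E := ⟨_, rfl⟩
  obtain ⟨n, hn⟩ : ∃ n, n = c.s + 2 * Es + 1 := ⟨_, rfl⟩
  obtain ⟨A, hA⟩ : ∃ A, A = 2 * c.s + 2 * Es := ⟨_, rfl⟩
  obtain ⟨T, hT⟩ : ∃ T, T = 2 * c.s + 4 * Es := ⟨_, rfl⟩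
  have hMs : M * c.s = 2 * Es := by rw [hM, hEs']; ring
  have hq' : 2 * c.m * (4 * Es + 4 * E) < q := by
    refine lt_of_eq_of_lt ?_ hq
    rw [hEs', hE]
    ring
  have hq1 : M + T < q := by
    refine lt_of_le_of_lt ?_ hq'
    calc M + T ≤ 4 * Es + 4 * E := by omega
      _ ≤ _ := Nat.le_mul_of_pos_left _ (by omega)
  have hq2 : 1 < q := by omega
  have htR : t ∈ c.R := sub_mem (pow_mem c.ξ_mem_R _) c.ξ_mem_R
  have hyR : y ∈ c.R := pow_mem c.η_mem_R _
  have htF : t ∈ c.F.Fil q := sub_mem (c.F.pow_mem_of_le c.ξ_mem q (by simp))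
    (c.F.mem_of_le c.ξ_mem (by omega))
  have ht0 : t ≠ 0 := by
    intro h0
    have : Polynomial.aeval c.ξ (Polynomial.X ^ q - Polynomial.X : Polynomial k) = 0 := by
      simpa [ht] using h0
    exact FiniteField.X_pow_card_sub_X_ne_zero k hq2 (c.aeval_ξ_eq_zero this)
  have hξ0 : c.ξ ≠ 0 := by
    intro h0
    exact Polynomial.X_ne_zero (c.aeval_ξ_eq_zero (N := Polynomial.X) (by simpa using h0))
  choose g hgF hgeq using fun i : ℕ => c.exists_expansion (i + 1)
  have hgR : ∀ i, ∀ j < c.m, ∀ e, (g i j).coeff e ∈ c.R := fun i j hj e =>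
    c.mem_R_of_mem_F (hgF i j hj e)
  have hgT : ∀ i < M, ∀ j < c.m, ∀ e, (g i j).coeff e ∈ c.F.Fil (2 * Es : ℕ) :=
    fun i hi j hj e => by
      refine c.F.mem_of_le (hgF i j hj e) ?_
      have h1 : (i + 1) * c.s ≤ M * c.s := Nat.mul_le_mul_right _ hi
      have h2 : (((i + 1) * c.s : ℕ) : ℤ) ≤ (2 * Es : ℕ) := by rw [← hMs]; exact_mod_cast h1
      have h3 : (0 : ℤ) ≤ c.ω * j := by positivity
      push_cast at h2 ⊢
      linarith
  -- the coefficients of the auxiliary function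
  let W : (Fin M → Fin c.m → Fin n → k) → Fin c.m → Fin M → L := fun u j l =>
    ∑ i : Fin M, if l ≤ i then c.Φ n (u i) * (g i j).coeff (i - l) else 0
  have hWadd : ∀ u u' j l, W (u + u') j l = W u j l + W u' j l := fun u u' j l => by
    simp only [W, ← Finset.sum_add_distrib]
    refine Finset.sum_congr rfl fun i _ => ?_
    split_ifs <;> simp [add_mul]
  have hWsmul : ∀ (a : k) u j l, W (a • u) j l = a • W u j l := fun a u j l => by
    simp only [W, Finset.smul_sum]
    refine Finset.sum_congr rfl fun i _ => ?_
    split_ifs <;> simp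
  have hWmem : ∀ u j l, W u j l ∈ c.F.Fil T := fun u j l => by
    refine Submodule.sum_mem _ fun i _ => ?_
    split_ifs with hil
    · refine c.F.mul_mem_of_le (c.Φ_mem (a := A) (u i) ?_) (hgT i i.2 j j.2 _) ?_
      · omega
      · omega
    · exact zero_mem _
  have hsM : c.s ≤ M := by omega
  have hfd := c.finiteDimensional_F T
  let ψ : (Fin M → Fin c.m → Fin n → k) →ₗ[k] (Fin c.m → Fin c.s → c.F.Fil T) :=
    { toFun := fun u j l => ⟨W u j (Fin.castLE hsM l), hWmem _ _ _⟩
      map_add' := fun u u' => by ext j l; simp [hWadd]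
      map_smul' := fun a u => by ext j l; simp [hWsmul] }
  have hlt : Module.finrank k (Fin c.m → Fin c.s → c.F.Fil T) <
      Module.finrank k (Fin M → Fin c.m → Fin n → k) := by
    have h1 := c.finrank_F_le (a := T) (n := T + 1) (by push_cast; omega)
    simp only [Module.finrank_pi_fintype, Module.finrank_self,
      Finset.sum_const, Finset.card_univ, Fintype.card_fin, smul_eq_mul, mul_one]
    calc c.m * (c.s * Module.finrank k (c.F.Fil T)) ≤ c.m * (c.s * (c.m * (T + 1))) := by gcongr
      _ = E * c.m * (T + 1) := by rw [hE]; ring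
      _ < E * c.m * (2 * n) := by
        refine Nat.mul_lt_mul_of_pos_left (by omega) (Nat.mul_pos (by omega) (by omega))
      _ = M * (c.m * n) := by rw [hM]; ring
  obtain ⟨u, hker, hune⟩ := Submodule.exists_mem_ne_zero_of_ne_bot
    (LinearMap.ker_ne_bot_of_finrank_lt (f := ψ) hlt)
  have hWlow : ∀ (j : Fin c.m) (l : Fin M), (l : ℕ) < c.s → W u j l = 0 := fun j l hl => by
    have := congrFun (congrFun (LinearMap.mem_ker.1 hker) j) ⟨l, hl⟩
    exact congrArg Subtype.val this
  -- the auxiliary function vanishes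
  have hzero : ∑ j : Fin c.m, ∑ l : Fin M, W u j l * t ^ (M - 1 - (l : ℕ)) * y ^ (j : ℕ) = 0 := by
    set Ω := ∑ j : Fin c.m, ∑ l : Fin M, W u j l * t ^ (M - 1 - (l : ℕ)) * y ^ (j : ℕ) with hΩ
    have hΩF : c.ξ ^ M * Ω ∈ c.F.Fil (M + T + q * (M - 1) : ℤ) := by
      refine c.F.mul_mem_of_le (b := T + q * (M - 1)) (c.F.pow_mem c.ξ_mem M) ?_
        (le_of_eq (by ring))
      refine Submodule.sum_mem _ fun j _ => Submodule.sum_mem _ fun l _ => ?_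
      by_cases hl : (l : ℕ) < c.s
      · simp [hWlow j l hl]
      refine c.F.mul_mem_of_le (c.F.mul_mem (hWmem u j l) (c.F.pow_mem htF _))
        (c.F.pow_mem (c.F.pow_mem c.η_mem q) j) ?_
      have h1 : (M - 1 - (l : ℕ)) + c.s ≤ M - 1 := by omega
      have h2 : (((M - 1 - (l : ℕ) : ℕ) : ℤ)) + c.s ≤ M - 1 := by omega
      have h3 : c.ω * (j : ℕ) ≤ c.s := Nat.mul_le_mul_left _ (by omega)
      have h4 : (c.ω : ℤ) * (j : ℕ) ≤ c.s := by exact_mod_cast h3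
      have hq0 : (0 : ℤ) ≤ q := by positivity
      nlinarith [mul_le_mul_of_nonneg_left h2 hq0, mul_le_mul_of_nonneg_left h4 hq0]
    choose! Q hQR hQ using fun (i : ℕ) (j : ℕ) (hj : j < c.m) =>
      c.eval_eq_low_add_high (hgR i j hj) htR (i + 1)
    have hpart : ∀ i : Fin M, ∃ z ∈ c.R, c.ξ ^ M * ∑ j : Fin c.m, ∑ l : Fin M,
        (if l ≤ i then (g i j).coeff (i - l) else 0) * t ^ (M - 1 - (l : ℕ)) * y ^ (j : ℕ) =
        t ^ M * z := by
      intro i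
      refine ⟨c.ξ ^ (M - 1 - (i : ℕ)) * κ ^ ((i : ℕ) + 1) -
        c.ξ ^ M * ∑ j : Fin c.m, Q i j * y ^ (j : ℕ), sub_mem (mul_mem (pow_mem c.ξ_mem_R _)
          (pow_mem hκ _)) (mul_mem (pow_mem c.ξ_mem_R _) (sum_mem fun j _ =>
          mul_mem (hQR i j j.2) (pow_mem hyR _))), ?_⟩
      have hinner : ∀ j : Fin c.m, ∑ l : Fin M,
          (if l ≤ i then (g i j).coeff (i - l) else 0) * t ^ (M - 1 - (l : ℕ)) * y ^ (j : ℕ) =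
          t ^ (M - 1 - (i : ℕ)) *
            ((g i j).eval t * y ^ (j : ℕ) - t ^ ((i : ℕ) + 1) * (Q i j * y ^ (j : ℕ))) := by
        intro j
        have h5 : (g i j).eval t - t ^ ((i : ℕ) + 1) * Q i j =
            ∑ e ∈ Finset.range ((i : ℕ) + 1), (g i j).coeff (i - e) * t ^ ((i : ℕ) - e) := by
          rw [hQ i j j.2, add_sub_cancel_right,
            ← Finset.sum_range_reflect (fun e => (g i j).coeff e * t ^ e)]
          refine Finset.sum_congr rfl fun e _ => ?_
          simp
        rw [show (g i j).eval t * y ^ (j : ℕ) - t ^ ((i : ℕ) + 1) * (Q i j * y ^ (j : ℕ)) =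
          ((g i j).eval t - t ^ ((i : ℕ) + 1) * Q i j) * y ^ (j : ℕ) by ring, h5,
          ← Finset.sum_mul]
        rw [← mul_assoc]
        congr 1
        rw [Finset.mul_sum]
        rw [Finset.sum_fin_eq_sum_range]
        have hsub : Finset.range ((i : ℕ) + 1) ⊆ Finset.range M :=
          Finset.range_subset_range.2 i.2
        rw [← Finset.sum_subset hsub]
        · refine Finset.sum_congr rfl fun e he => ?_
          have he' := Finset.mem_range.1 he
          have hiM := i.2
          rw [dif_pos (by omega), if_pos (by rw [Fin.le_def]; simp; omega)]
          simp only
          rw [mul_left_comm, ← pow_add]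
          congr 2
          omega
        · intro e he he'
          have he1 := Finset.mem_range.1 he
          rw [dif_pos he1, if_neg, zero_mul]
          rw [Fin.le_def]
          simpa using he'
      simp only [hinner]
      rw [← Finset.mul_sum, Finset.sum_sub_distrib, ← Finset.mul_sum,
        ← Finset.sum_range (fun j => (g i j).eval t * y ^ j),
        ← hgeq i t y (by rw [ht, add_sub_cancel]; exact hrelq)]
      obtain ⟨r, hr⟩ : ∃ r, M = r + (i + 1) := ⟨M - (i + 1), by omega⟩
      have hr' : M - 1 - (i : ℕ) = r := by omega
      have hκ' : c.ξ ^ ((i : ℕ) + 1) * c.G y ^ ((i : ℕ) + 1) =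
          t ^ ((i : ℕ) + 1) * κ ^ ((i : ℕ) + 1) := by
        rw [← mul_pow, hκG, mul_pow]
      have hξM : c.ξ ^ M = c.ξ ^ r * c.ξ ^ ((i : ℕ) + 1) := by rw [← pow_add, ← hr]
      have htM : t ^ M = t ^ r * t ^ ((i : ℕ) + 1) := by rw [← pow_add, ← hr]
      rw [hr', hξM, htM]
      linear_combination (c.ξ ^ r * t ^ r) * hκ'
    choose z hzR hz using hpart
    have hΩz : c.ξ ^ M * Ω = t ^ M * ∑ i : Fin M, c.Φ n (u i) * z i := by
      rw [Finset.mul_sum Finset.univ (fun i => c.Φ n (u i) * z i) (t ^ M)]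
      have : ∀ i : Fin M, t ^ M * (c.Φ n (u i) * z i) = c.ξ ^ M * (c.Φ n (u i) *
          ∑ j : Fin c.m, ∑ l : Fin M, (if l ≤ i then (g i j).coeff (i - l) else 0) *
            t ^ (M - 1 - (l : ℕ)) * y ^ (j : ℕ)) := fun i => by
        linear_combination (-c.Φ n (u i)) * hz i
      simp only [this]
      rw [← Finset.mul_sum]
      congr 1
      simp only [hΩ, W, Finset.mul_sum, Finset.sum_mul]
      conv_rhs => rw [Finset.sum_comm]
      refine Finset.sum_congr rfl fun j _ => ?_
      conv_rhs => rw [Finset.sum_comm]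
      refine Finset.sum_congr rfl fun l _ => Finset.sum_congr rfl fun i _ => ?_
      split_ifs <;> ring
    have hzz : ∑ i : Fin M, c.Φ n (u i) * z i = 0 := by
      refine c.eq_zero_of_pow_mul_mem (M := M) hq2 (sum_mem fun i _ => mul_mem
        (c.mem_R_of_mem_F (c.Φ_mem (u i) le_rfl)) (hzR i)) (b := M + T + q * (M - 1)) ?_ ?_
      · have : (M + T : ℤ) < q := by exact_mod_cast hq1
        linarith
      · rw [← hΩz]
        exact hΩF
    rw [hzz, mul_zero] at hΩz
    exact (mul_eq_zero.1 hΩz).resolve_left (pow_ne_zero _ hξ0)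
  -- hence all its coefficients vanish
  have hW0 : ∀ j l, W u j l = 0 := by
    let P : Fin c.m → Polynomial L := fun j =>
      ∑ l : Fin M, Polynomial.C (W u j l) * (Polynomial.X - Polynomial.C c.ξ) ^ (M - 1 - (l : ℕ))
    have hPF : ∀ j e, (P j).coeff e ∈ c.F.Fil (T + M : ℕ) := fun j e => by
      have h1 : P j ∈ (polyFil c.F).Fil (T + M : ℕ) := by
        refine Submodule.sum_mem _ fun l _ => ?_
        refine (polyFil c.F).mul_mem_of_le (C_mem_polyFil (hWmem u j l))
          ((polyFil c.F).pow_mem (sub_mem (X_mem_polyFil c.F) (C_mem_polyFil c.ξ_mem)) _) ?_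
        push_cast
        omega
      exact c.F.mem_of_le (h1 e) (by omega)
    have hPdeg : ∀ j, (P j).natDegree < M := fun j => by
      have : (P j).natDegree ≤ M - 1 := by
        refine Polynomial.natDegree_sum_le_of_forall_le _ _ fun l _ => ?_
        refine (Polynomial.natDegree_C_mul_le _ _).trans ?_
        rw [Polynomial.natDegree_pow, Polynomial.natDegree_X_sub_C]
        omega
      omega
    have hPeval : ∀ j, (P j).eval (c.ξ ^ q) = ∑ l : Fin M, W u j l * t ^ (M - 1 - (l : ℕ)) :=
      fun j => by simp [P, Polynomial.eval_finsetSum, ht]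
    have h2 := hv.indep_pow hsurj (a := T + M) (N := M) (by
        refine lt_of_le_of_lt (Nat.mul_le_mul_left _ ?_) hq'
        omega) (fun j l => (P j).coeff l) (fun j l => hPF j l) (by
        rw [← hzero]
        refine Finset.sum_congr rfl fun j _ => ?_
        rw [← Finset.sum_mul, ← hPeval, Polynomial.eval_eq_sum_range' (hPdeg j), Finset.sum_mul,
          Finset.sum_range]
        refine Finset.sum_congr rfl fun l _ => ?_
        rw [mul_pow, hy, hqdef]
        ring)
    intro j l
    have hP0 : P j = 0 := by
      ext e
      by_cases he : e < M
      · simpa using h2 j ⟨e, he⟩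
      · rw [Polynomial.coeff_eq_zero_of_natDegree_lt (by have := hPdeg j; omega)]
        simp
    have hcomp : (P j).comp (Polynomial.X + Polynomial.C c.ξ) =
        ∑ l : Fin M, Polynomial.C (W u j l) * Polynomial.X ^ (M - 1 - (l : ℕ)) := by
      rw [← Polynomial.coe_compRingHom_apply, map_sum]
      simp
    rw [hP0, Polynomial.zero_comp] at hcomp
    have h3 := congrArg (fun f => Polynomial.coeff f (M - 1 - (l : ℕ))) hcomp
    simp only [Polynomial.coeff_zero, Polynomial.finsetSum_coeff, Polynomial.coeff_C_mul,
      Polynomial.coeff_X_pow] at h3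
    rw [Finset.sum_eq_single_of_mem l (Finset.mem_univ _)] at h3
    · simpa using h3.symm
    · intro l' _ hne
      rw [if_neg, mul_zero]
      intro heq
      apply hne
      have := l.2
      have := l'.2
      ext
      omega
  -- look at the last nonzero unknown
  have hex : ∃ i : Fin M, u i ≠ 0 := by
    by_contra! hcon
    exact hune (funext hcon)
  obtain ⟨i₀, hi₀, hmax⟩ : ∃ i₀ : Fin M, u i₀ ≠ 0 ∧ ∀ i, i₀ < i → u i = 0 := by
    classical
    have hne : (Finset.univ.filter fun i : Fin M => u i ≠ 0).Nonempty := by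
      obtain ⟨i, hi⟩ := hex
      exact ⟨i, by simpa using hi⟩
    refine ⟨Finset.max' _ hne, by simpa using Finset.max'_mem _ hne, fun i hi => ?_⟩
    by_contra hu
    exact absurd (Finset.le_max' _ i (by simpa using hu)) (not_le.2 hi)
  have hΦ0 : c.Φ n (u i₀) ≠ 0 := fun h0 => hi₀ (c.Φ_injective n (h0.trans (map_zero _).symm))
  have hg0 : ∀ j < c.m, (g i₀ j).coeff 0 = 0 := fun j hj => by
    have h1 := hW0 ⟨j, hj⟩ i₀
    simp only [W] at h1
    rw [Finset.sum_eq_single_of_mem i₀ (Finset.mem_univ _)] at h1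
    · rw [if_pos le_rfl, Nat.sub_self] at h1
      exact (mul_eq_zero.1 h1).resolve_left hΦ0
    · intro i _ hne
      split_ifs with hle
      · rw [hmax i (lt_of_le_of_ne hle (Ne.symm hne)), map_zero, zero_mul]
      · rfl
  have hfin := hgeq i₀ 0 c.η (by rw [add_zero]; exact c.rel)
  rw [Finset.sum_eq_zero] at hfin
  · exact hGη (pow_eq_zero_iff (Nat.succ_ne_zero _) |>.1 hfin)
  · intro j hj
    rw [← Polynomial.coeff_zero_eq_eval_zero, hg0 j (Finset.mem_range.1 hj), zero_mul]

end Curve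

section VanishingIdeal

variable {K : Type*} [Field K] [Fintype K]

lemma X_pow_card_sub_X_monic : (Polynomial.X ^ Fintype.card K - Polynomial.X :
    Polynomial K).Monic :=
  Polynomial.monic_X_pow_sub (by
    rw [Polynomial.degree_X]
    exact_mod_cast Fintype.one_lt_card (α := K))

lemma eq_zero_of_forall_eval_eq_zero {g : Polynomial K} (hdeg : g.degree < Fintype.card K)
    (h : ∀ x, g.eval x = 0) : g = 0 := by
  by_contra hg
  refine hg (Polynomial.eq_zero_of_natDegree_lt_card_of_eval_eq_zero g
    Function.injective_id h ?_)
  exact (Polynomial.natDegree_lt_iff_degree_lt hg).2 hdeg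

lemma X_pow_card_sub_X_dvd {g : Polynomial K} (h : ∀ x, g.eval x = 0) :
    (Polynomial.X ^ Fintype.card K - Polynomial.X) ∣ g := by
  rw [← Polynomial.modByMonic_eq_zero_iff_dvd X_pow_card_sub_X_monic]
  refine eq_zero_of_forall_eval_eq_zero ?_ fun x => ?_
  · refine (Polynomial.degree_modByMonic_lt _ X_pow_card_sub_X_monic).trans_le ?_
    refine (Polynomial.degree_le_natDegree).trans ?_
    rw [FiniteField.X_pow_card_sub_X_natDegree_eq K Fintype.one_lt_card]
  · have := Polynomial.modByMonic_add_div g (Polynomial.X ^ Fintype.card K - Polynomial.X)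
    have h1 := congrArg (Polynomial.eval x) this
    simpa [h, FiniteField.pow_card] using h1

/-- A bivariate polynomial vanishing at all rational points lies in the ideal generated by
`X^q - X` and `Y^q - Y`. -/
lemma exists_eq_of_evalEval_eq_zero {U : Polynomial (Polynomial K)}
    (h : ∀ x y : K, U.evalEval x y = 0) : ∃ a b : Polynomial (Polynomial K),
      U = a * Polynomial.C (Polynomial.X ^ Fintype.card K - Polynomial.X) +
        b * (Polynomial.X ^ Fintype.card K - Polynomial.X) := by
  set D : Polynomial (Polynomial K) := Polynomial.X ^ Fintype.card K - Polynomial.X with hD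
  have hdegD : D.degree = Fintype.card K := by
    rw [hD]
    refine (Polynomial.degree_sub_eq_left_of_degree_lt ?_).trans (Polynomial.degree_X_pow _)
    rw [Polynomial.degree_X, Polynomial.degree_X_pow]
    exact_mod_cast Fintype.one_lt_card (α := K)
  have hDm : D.Monic := Polynomial.monic_X_pow_sub (by
    rw [Polynomial.degree_X]
    exact_mod_cast Fintype.one_lt_card (α := K))
  have hdiv := Polynomial.modByMonic_add_div U D
  set r := U %ₘ D with hr
  have hrdeg : r.degree < Fintype.card K := by
    rw [← hdegD]
    exact Polynomial.degree_modByMonic_lt _ hDm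
  have hdvd : Polynomial.C (Polynomial.X ^ Fintype.card K - Polynomial.X) ∣ r := by
    rw [Polynomial.C_dvd_iff_dvd_coeff]
    intro i
    refine X_pow_card_sub_X_dvd fun x => ?_
    have hz : r.map (Polynomial.evalRingHom x) = 0 := by
      refine eq_zero_of_forall_eval_eq_zero (Polynomial.degree_map_le.trans_lt hrdeg) fun y => ?_
      have h1 := congrArg (Polynomial.evalEval x y) hdiv
      have h2 : D.evalEval x y = 0 := by
        simp [hD, Polynomial.evalEval, FiniteField.pow_card]
      rw [Polynomial.evalEval_add, Polynomial.evalEval_mul, h, h2, zero_mul, add_zero] at h1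
      rw [Polynomial.map_evalRingHom_eval]
      exact h1
    have := congrArg (fun f => Polynomial.coeff f i) hz
    simpa using this
  obtain ⟨a, ha⟩ := hdvd
  exact ⟨a, U /ₘ D, by linear_combination -hdiv + ha⟩

open Polynomial in
/-- If a plane curve has no rational points off the line `X = 0`, then at every point of the
curve `X` lies in the ideal generated by `X^q - X` and `Y^q - Y`. -/
lemma exists_ξ_eq {L : Type*} [Field L] [Algebra K L] {H : Polynomial (Polynomial K)}
    (hH : ∀ x y : K, x ≠ 0 → H.evalEval x y ≠ 0) {ξ η : L}
    (h0 : aevalAeval ξ η H = 0) : ∃ a b : Polynomial (Polynomial K),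
      ξ = aevalAeval ξ η a * (ξ ^ Fintype.card K - ξ) +
        aevalAeval ξ η b * (η ^ Fintype.card K - η) := by
  have hq : Fintype.card K - 1 ≠ 0 := by
    have := Fintype.one_lt_card (α := K)
    omega
  obtain ⟨a, b, hab⟩ := exists_eq_of_evalEval_eq_zero
    (U := Polynomial.C Polynomial.X * (1 - H ^ (Fintype.card K - 1))) fun x y => by
      by_cases hx : x = 0
      · simp [hx, evalEval]
      · simp only [evalEval_mul, evalEval_sub, evalEval_pow, evalEval_one,
          FiniteField.pow_card_sub_one_eq_one _ (hH x y hx), sub_self, mul_zero]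
  refine ⟨a, b, ?_⟩
  have := congrArg (aevalAeval ξ η) hab
  simp only [map_mul, map_sub, map_add, map_pow, h0, map_one, zero_pow hq, sub_zero, mul_one,
    aevalAeval_X, aevalAeval_Y] at this
  exact this

end VanishingIdeal

section Laurent

/-- The coefficientwise algebra structure on Laurent series. -/
noncomputable abbrev laurentAlgebra (K k : Type*) [Field K] [Field k] [Algebra K k] :
    Algebra K (LaurentSeries k) :=
  HahnSeries.instAlgebra

attribute [local instance] laurentAlgebra

variable {k : Type*} [Field k]

/-- The canonical place of the field of Laurent series. -/
noncomputable def laurentPlace (k : Type*) [Field k] : Place k (LaurentSeries k) where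
  Ge n :=
    { carrier := {x | ∀ i < n, x.coeff i = 0}
      zero_mem' := by simp
      add_mem' := fun ha hb i hi => by simp [ha i hi, hb i hi]
      smul_mem' := fun c x hx i hi => by simp [hx i hi] }
  anti := fun a b hab x hx i hi => hx i (hi.trans_le hab)
  one_mem := fun i hi => by rw [HahnSeries.coeff_one, if_neg hi.ne]
  mul_mem := by
    intro a b x y hx hy i hi
    rw [HahnSeries.coeff_mul]
    refine Finset.sum_eq_zero fun ij hij => ?_
    have h1 : ij.1 + ij.2 = i := (Finset.mem_antidiagonal.1 hij).2.2
    by_cases h : ij.1 < a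
    · rw [hx _ h, zero_mul]
    · rw [hy ij.2 (by omega), mul_zero]
  π := HahnSeries.single 1 1
  π_ne_zero := by simp
  zpow_mem := fun n i hi => by
    rw [← RatFunc.single_zpow, HahnSeries.coeff_single_of_ne hi.ne]
  residue := fun {n} x hx => ⟨x.coeff n, fun i hi => by
    rw [← RatFunc.single_zpow, HahnSeries.coeff_sub, HahnSeries.coeff_smul]
    rcases (Int.lt_add_one_iff.1 hi).lt_or_eq with h | rfl
    · rw [hx i h, HahnSeries.coeff_single_of_ne h.ne, smul_zero, sub_zero]
    · simp⟩
  exhaust := fun x => ⟨x.order, fun i hi => HahnSeries.coeff_eq_zero_of_lt_order hi⟩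
  sep := fun x hx => ⟨x.order + 1, fun h => hx (HahnSeries.coeff_order_eq_zero.1
    (h x.order (by omega)))⟩

lemma coeff_aeval_single {e : ℤ} (he : e ≠ 0) (N : Polynomial k) (n : ℕ) :
    (Polynomial.aeval (HahnSeries.single e 1 : LaurentSeries k) N).coeff (n * e) = N.coeff n := by
  rw [Polynomial.aeval_eq_sum_range' (n := max N.natDegree n + 1) (by omega), HahnSeries.coeff_sum,
    Finset.sum_eq_single_of_mem n (by simp)]
  · simp [HahnSeries.single_pow]
  · intro b _ hb
    rw [HahnSeries.single_pow, HahnSeries.coeff_smul, HahnSeries.coeff_single_of_ne, smul_zero]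
    simpa [he] using hb.symm

lemma le_natDegree_of_aeval_single_inv_mem {N : Polynomial k} (hN : N ≠ 0) {n : ℤ}
    (h : Polynomial.aeval (HahnSeries.single (-1) 1 : LaurentSeries k) N ∈ (laurentPlace k).Ge n) :
    n ≤ -N.natDegree := by
  by_contra! hcon
  have h1 := h (N.natDegree * (-1)) (by linarith)
  rw [coeff_aeval_single (by norm_num)] at h1
  exact hN (Polynomial.leadingCoeff_eq_zero.1 h1)

lemma le_natDegree_of_aeval_add_single_mem {N : Polynomial k} (hN : N ≠ 0) {n : ℤ} {a : k}
    (h : Polynomial.aeval (algebraMap k _ a + HahnSeries.single 1 1 : LaurentSeries k) N ∈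
      (laurentPlace k).Ge n) : n ≤ N.natDegree := by
  have hc : Polynomial.aeval (algebraMap k _ a + HahnSeries.single 1 1 : LaurentSeries k) N =
      Polynomial.aeval (HahnSeries.single 1 1 : LaurentSeries k)
        (N.comp (Polynomial.X + Polynomial.C a)) := by
    rw [Polynomial.aeval_comp]
    simp [add_comm]
  by_contra! hcon
  have h1 := h (N.natDegree * 1) (by linarith)
  rw [hc, coeff_aeval_single (by norm_num)] at h1
  have h2 : (N.comp (Polynomial.X + Polynomial.C a)).natDegree = N.natDegree := by
    rw [Polynomial.natDegree_comp, Polynomial.natDegree_X_add_C, mul_one]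
  have h3 : N.comp (Polynomial.X + Polynomial.C a) ≠ 0 := by
    rwa [Ne, Polynomial.comp_X_add_C_eq_zero_iff]
  rw [← h2] at h1
  exact h3 (Polynomial.leadingCoeff_eq_zero.1 h1)

end Laurent

section Hensel

open Polynomial hiding X C

variable {R : Type*} [CommRing R] {I : Ideal R} [HenselianRing R I]

lemma isUnit_of_sub_mem {a b : R} (ha : IsUnit a) (hab : b - a ∈ I) : IsUnit b := by
  have h1 := HenselianRing.jac (I := I) hab
  rw [Ideal.mem_jacobson_bot] at h1
  obtain ⟨u, rfl⟩ := ha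
  have h2 := (h1 (u⁻¹ : Rˣ)).mul u.isUnit
  convert h2 using 1
  linear_combination (-(b - u)) * u.inv_mul

/-- Hensel lifting of the root `0` for polynomials that need not be monic. -/
lemma exists_isRoot_mem {P : R[X]} (h0 : P.coeff 0 ∈ I) (h1 : IsUnit (P.coeff 1)) :
    ∃ y ∈ I, P.IsRoot y := by
  set S := P.divX.divX with hS
  have hP : P = Polynomial.C (P.coeff 0) + Polynomial.C (P.coeff 1) * Polynomial.X + Polynomial.X ^ 2 * S := by
    have e1 := divX_mul_X_add P
    have e2 := divX_mul_X_add P.divX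
    rw [coeff_divX, zero_add] at e2
    linear_combination -e1 - Polynomial.X * e2
  set a := P.coeff 0
  set b := P.coeff 1
  set n := S.natDegree
  set E : R[X] := ∑ i ∈ Finset.range (n + 1), Polynomial.C (S.coeff i * a ^ i) * Polynomial.X ^ (n - i) with hE
  have hEdeg : E.degree < (n + 1 : ℕ) := by
    refine (degree_sum_le _ _).trans_lt ?_
    rw [Finset.sup_lt_iff (WithBot.bot_lt_coe _)]
    intro i _
    refine (degree_C_mul_X_pow_le _ _).trans_lt ?_
    exact_mod_cast (show n - i < n + 1 by omega)
  set Q : R[X] := Polynomial.X ^ (n + 1 + 1) + (Polynomial.C b * Polynomial.X ^ (n + 1) + Polynomial.C a * E) with hQ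
  have hQm : Q.Monic := by
    refine monic_X_pow_add ?_
    refine (degree_add_le _ _).trans_lt (max_lt ?_ ?_)
    · refine (degree_C_mul_X_pow_le _ _).trans_lt ?_
      exact_mod_cast Nat.lt_succ_self _
    · refine (((Polynomial.smul_eq_C_mul (p := E) a) ▸ degree_smul_le a E).trans_lt hEdeg).trans ?_
      exact_mod_cast Nat.lt_succ_self _
  have hroot : Q.eval (-b) ∈ I := by
    have : Q.eval (-b) = a * E.eval (-b) := by
      simp [hQ]
      ring
    rw [this]
    exact I.mul_mem_right _ h0
  have hder : IsUnit (Ideal.Quotient.mk I (Q.derivative.eval (-b))) := by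
    have : Q.derivative.eval (-b) = (-b) ^ (n + 1) + a * E.derivative.eval (-b) := by
      simp [hQ]
      ring
    rw [this, map_add, map_mul, Ideal.Quotient.eq_zero_iff_mem.2 h0, zero_mul, add_zero]
    exact (h1.neg.pow _).map _
  obtain ⟨U, hU, hUb⟩ := HenselianRing.is_henselian Q hQm (-b) hroot hder
  obtain ⟨u, rfl⟩ : IsUnit U := isUnit_of_sub_mem h1.neg hUb
  refine ⟨a * (u⁻¹ : Rˣ), I.mul_mem_right _ h0, ?_⟩
  have hE' : E.eval (u : R) * (u⁻¹ : Rˣ) ^ n = S.eval (a * (u⁻¹ : Rˣ)) := by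
    rw [hE, eval_finsetSum, eval_eq_sum_range, Finset.sum_mul]
    refine Finset.sum_congr rfl fun i hi => ?_
    have hi' : i ≤ n := Nat.lt_succ_iff.1 (Finset.mem_range.1 hi)
    have e : ((u⁻¹ : Rˣ) : R) ^ n = (u⁻¹ : Rˣ) ^ (n - i) * (u⁻¹ : Rˣ) ^ i := by
      rw [← pow_add, Nat.sub_add_cancel hi']
    have e2 : (u : R) ^ (n - i) * (u⁻¹ : Rˣ) ^ (n - i) = 1 := by
      rw [← mul_pow, u.mul_inv, one_pow]
    simp only [Polynomial.eval_mul, Polynomial.eval_C, Polynomial.eval_pow, Polynomial.eval_X, e, mul_pow]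
    linear_combination S.coeff i * a ^ i * (u⁻¹ : Rˣ) ^ i * e2
  rw [IsRoot.def] at hU ⊢
  rw [hP]
  simp only [Polynomial.eval_add, Polynomial.eval_mul, Polynomial.eval_C, Polynomial.eval_X, Polynomial.eval_pow, ← hE']
  have e3 : (u : R) ^ n * (u⁻¹ : Rˣ) ^ n = 1 := by
    rw [← mul_pow, u.mul_inv, one_pow]
  have hv := u.mul_inv
  simp only [hQ, Polynomial.eval_add, Polynomial.eval_mul, Polynomial.eval_C, Polynomial.eval_X, Polynomial.eval_pow] at hU
  set v : R := ((u⁻¹ : Rˣ) : R)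
  have e4 : (u : R) ^ (n + 1) * v ^ (n + 1) = 1 := by
    rw [← mul_pow, hv, one_pow]
  have e5 : (u : R) ^ (n + 1 + 1) * v ^ (n + 1 + 1) = 1 := by
    rw [← mul_pow, hv, one_pow]
  linear_combination (a * v ^ (n + 1 + 1)) * hU - a * e5 - a * b * v * e4

/-- Hensel's lemma for polynomials that need not be monic. -/
lemma exists_isRoot_sub_mem {P : R[X]} {y₀ : R} (h0 : P.eval y₀ ∈ I)
    (h1 : IsUnit (P.derivative.eval y₀)) : ∃ y, y - y₀ ∈ I ∧ P.IsRoot y := by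
  obtain ⟨y, hy, hr⟩ := exists_isRoot_mem (I := I) (P := taylor y₀ P)
    (by rwa [taylor_coeff_zero]) (by rwa [taylor_coeff_one])
  refine ⟨y + y₀, by simpa using hy, ?_⟩
  rwa [IsRoot.def, taylor_eval] at hr

end Hensel

section PowerSeriesRoot

variable {k : Type*} [Field k]

attribute [local instance] laurentAlgebra

lemma ofPowerSeries_mem_Ge (x : PowerSeries k) :
    HahnSeries.ofPowerSeries ℤ k x ∈ (laurentPlace k).Ge 0 := by
  intro i hi
  rw [HahnSeries.ofPowerSeries_apply]
  refine HahnSeries.embDomain_of_notMem_range ?_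
  rintro ⟨n, rfl⟩
  simp at hi
  omega

instance : HenselianRing (PowerSeries k) (Ideal.span {PowerSeries.X}) :=
  inferInstance

/-- A simple root of the reduction of a polynomial over `k⟦X⟧` lifts. -/
lemma exists_powerSeries_root {P : Polynomial (PowerSeries k)} {y₀ : k}
    (h0 : (P.map PowerSeries.constantCoeff).eval y₀ = 0)
    (h1 : (P.map PowerSeries.constantCoeff).derivative.eval y₀ ≠ 0) :
    ∃ y : PowerSeries k, PowerSeries.constantCoeff y = y₀ ∧ P.IsRoot y := by
  have key (Q : Polynomial (PowerSeries k)) : PowerSeries.constantCoeff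
      (Q.eval (PowerSeries.C y₀)) = (Q.map PowerSeries.constantCoeff).eval y₀ := by
    rw [← Polynomial.coe_evalRingHom, ← Polynomial.coe_evalRingHom]
    induction Q using Polynomial.induction_on' <;> simp_all
  obtain ⟨y, hy, hr⟩ := exists_isRoot_sub_mem (I := Ideal.span {(PowerSeries.X : PowerSeries k)})
    (P := P) (y₀ := PowerSeries.C y₀)
    (by rw [Ideal.mem_span_singleton, PowerSeries.X_dvd_iff, key, h0])
    (by
      rw [PowerSeries.isUnit_iff_constantCoeff, key, ← Polynomial.derivative_map]
      exact h1.isUnit)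
  refine ⟨y, ?_, hr⟩
  rwa [Ideal.mem_span_singleton, PowerSeries.X_dvd_iff, map_sub, PowerSeries.constantCoeff_C,
    sub_eq_zero] at hy

end PowerSeriesRoot

section Adjoin

variable {K k L : Type*} [Field K] [Field k] [Field L] [Algebra K k] [Algebra k L] [Algebra K L]
  [IsScalarTower K k L]

lemma aevalAeval_mem_adjoin (ξ η : L) (a : Polynomial (Polynomial K)) :
    Polynomial.aevalAeval ξ η a ∈ Algebra.adjoin k {ξ, η} := by
  have hξ : ξ ∈ Algebra.adjoin k {ξ, η} := Algebra.subset_adjoin (by simp)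
  have hη : η ∈ Algebra.adjoin k {ξ, η} := Algebra.subset_adjoin (by simp)
  have h1 (N : Polynomial K) : Polynomial.aeval ξ N ∈ Algebra.adjoin k {ξ, η} := by
    rw [Polynomial.aeval_eq_sum_range]
    refine Subalgebra.sum_mem _ fun i _ => ?_
    rw [← algebraMap_smul k (N.coeff i) (ξ ^ i)]
    exact Subalgebra.smul_mem _ (Subalgebra.pow_mem _ hξ i) _
  induction a using Polynomial.induction_on' with
  | add a b ha hb => rw [map_add]; exact Subalgebra.add_mem _ ha hb
  | monomial n N =>
    rw [← Polynomial.C_mul_X_pow_eq_monomial, map_mul, map_pow, Polynomial.aevalAeval_C,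
      Polynomial.aevalAeval_Y]
    exact Subalgebra.mul_mem _ (h1 N) (Subalgebra.pow_mem _ hη n)

end Adjoin

section QuadraticCover

/-- A quadratic polynomial over `k[X]` with a root in a field extension of the form `-r₀/r₁` has a
root in `k[X]`. -/
lemma exists_polynomial_root_of_linear_relation {k L : Type*} [Field k] [Field L] [Algebra k L]
    {ξ η : L} (hξ : Transcendental k ξ) {b g r₀ r₁ : Polynomial k}
    (hη : η ^ 2 + Polynomial.aeval ξ b * η + Polynomial.aeval ξ g = 0)
    (hr : Polynomial.aeval ξ r₀ + Polynomial.aeval ξ r₁ * η = 0) (hr₁ : r₁ ≠ 0) :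
    ∃ B : Polynomial k, B ^ 2 + b * B + g = 0 := by
  have hrel : r₀ ^ 2 - b * r₀ * r₁ + g * r₁ ^ 2 = 0 := by
    refine (transcendental_iff_injective.1 hξ) ?_
    simp only [map_add, map_sub, map_mul, map_pow, map_zero]
    set s₁ := Polynomial.aeval ξ r₁
    linear_combination (Polynomial.aeval ξ r₀ - s₁ * η - s₁ * Polynomial.aeval ξ b) * hr +
      s₁ ^ 2 * hη
  set F := FractionRing (Polynomial k)
  have hinj : Function.Injective (algebraMap (Polynomial k) F) := IsFractionRing.injective _ _
  have hr₁' : algebraMap (Polynomial k) F r₁ ≠ 0 := by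
    rwa [Ne, map_eq_zero_iff _ hinj]
  set z : F := - (algebraMap _ F r₀ / algebraMap _ F r₁) with hz
  have hroot : z ^ 2 + algebraMap _ F b * z + algebraMap _ F g = 0 := by
    have := congrArg (algebraMap (Polynomial k) F) hrel
    simp only [map_add, map_sub, map_mul, map_pow, map_zero] at this
    have e : z * algebraMap _ F r₁ + algebraMap _ F r₀ = 0 := by
      rw [hz, neg_mul, div_mul_cancel₀ _ hr₁', neg_add_cancel]
    refine mul_right_cancel₀ (pow_ne_zero 2 hr₁') ?_
    rw [zero_mul]
    linear_combination this + (z * algebraMap _ F r₁ - algebraMap _ F r₀ +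
      algebraMap _ F b * algebraMap _ F r₁) * e
  have hintegral : IsIntegral (Polynomial k) z := by
    refine ⟨Polynomial.X ^ 2 + (Polynomial.C b * Polynomial.X + Polynomial.C g), ?_, ?_⟩
    · exact Polynomial.monic_X_pow_add (Polynomial.degree_linear_le.trans_lt (by norm_num))
    · simp only [Polynomial.eval₂_add, Polynomial.eval₂_mul, Polynomial.eval₂_C,
        Polynomial.eval₂_X, Polynomial.eval₂_pow]
      linear_combination hroot
  obtain ⟨B, hB⟩ := IsIntegrallyClosed.isIntegral_iff.1 hintegral
  refine ⟨B, hinj ?_⟩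
  simpa only [map_add, map_mul, map_pow, map_zero, hB] using hroot

attribute [local instance] laurentAlgebra

variable {k : Type*} [Field k]

lemma transcendental_add_single (a : k) :
    Transcendental k (algebraMap k _ a + HahnSeries.single 1 1 : LaurentSeries k) := by
  rw [transcendental_iff]
  intro N hN
  by_contra hN0
  have := le_natDegree_of_aeval_add_single_mem hN0 (n := N.natDegree + 1) (a := a)
    (by rw [hN]; exact Submodule.zero_mem _)
  omega

lemma aeval_add_single (a : k) (N : Polynomial k) :
    Polynomial.aeval (algebraMap k _ a + HahnSeries.single 1 1 : LaurentSeries k) N =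
      HahnSeries.ofPowerSeries ℤ k (N.eval₂ PowerSeries.C (PowerSeries.C a + PowerSeries.X)) := by
  rw [Polynomial.hom_eval₂, map_add, HahnSeries.ofPowerSeries_X, HahnSeries.ofPowerSeries_C,
    Polynomial.aeval_def]
  congr 1
  ext1 x
  simp [HahnSeries.ofPowerSeries_C]
  rfl

/-- A double cover `η² + bη + g(ξ) = 0` of the line without rational points outside `ξ = 0`
splits over the algebraic closure. -/
theorem exists_root_of_double_cover {K : Type*} [Field K] [Fintype K] [Algebra K k] [IsAlgClosed k]
    {p h : ℕ} [Fact p.Prime] [CharP k p] (hcard : Fintype.card K = p ^ h) {b : K}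
    (hb : p = 2 ∧ b ≠ 0 ∨ p ≠ 2 ∧ b = 0) {g : Polynomial K} {ω : ℕ} (hω : 1 ≤ ω)
    (hg : g.natDegree ≤ 2 * ω) (hq : 32 * ω * (ω + 1) < p ^ h)
    (hH : ∀ x y : K, x ≠ 0 → y ^ 2 + b * y + g.eval x ≠ 0) :
    ∃ B : Polynomial k,
      B ^ 2 + Polynomial.C (algebraMap K k b) * B + g.map (algebraMap K k) = 0 := by
  by_contra hno
  set b' := algebraMap K k b with hb'
  set g' := g.map (algebraMap K k) with hg'
  -- a point of the curve at which the projection to the line is unramified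
  obtain ⟨x₀, y₀, hxy, hunr⟩ : ∃ x₀ y₀ : k, y₀ ^ 2 + b' * y₀ + g'.eval x₀ = 0 ∧
      2 * y₀ + b' ≠ 0 := by
    rcases hb with ⟨rfl, hb0⟩ | ⟨hp2, hb0⟩
    · obtain ⟨y, hy⟩ := IsAlgClosed.exists_root (Polynomial.X ^ 2 +
        (Polynomial.C b' * Polynomial.X + Polynomial.C (g'.eval 0))) (by
          have : (Polynomial.X ^ 2 + (Polynomial.C b' * Polynomial.X +
            Polynomial.C (g'.eval 0))).degree = 2 := by compute_degree!
          rw [this]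
          norm_num)
      refine ⟨0, y, ?_, ?_⟩
      · simp only [Polynomial.IsRoot.def, Polynomial.eval_add, Polynomial.eval_mul,
          Polynomial.eval_pow, Polynomial.eval_X, Polynomial.eval_C] at hy
        linear_combination hy
      · rw [CharTwo.two_eq_zero, zero_mul, zero_add, hb']
        simpa using hb0
    · have hb'0 : b' = 0 := by rw [hb', hb0, map_zero]
      have hg0 : g' ≠ 0 := by
        intro h0
        exact hno ⟨0, by simp [h0]⟩
      obtain ⟨x, hx⟩ : ∃ x, g'.eval x ≠ 0 := by
        by_contra! hall
        exact hg0 (Polynomial.funext (by simpa using hall))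
      obtain ⟨y, hy⟩ := IsAlgClosed.exists_pow_nat_eq (-g'.eval x) (n := 2) (by norm_num)
      refine ⟨x, y, by rw [hb'0, hy]; ring, ?_⟩
      rw [hb'0, add_zero]
      refine mul_ne_zero ?_ ?_
      · exact Ring.two_ne_zero (by rwa [ringChar.eq k p])
      · rintro rfl
        apply hx
        linear_combination hy
  set ρ : PowerSeries k := PowerSeries.C x₀ + PowerSeries.X with hρ
  set P : Polynomial (PowerSeries k) := Polynomial.X ^ 2 + Polynomial.C (PowerSeries.C b') *
    Polynomial.X + Polynomial.C (g'.eval₂ PowerSeries.C ρ) with hP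
  have hρ0 : PowerSeries.constantCoeff (g'.eval₂ PowerSeries.C ρ) = g'.eval x₀ := by
    rw [Polynomial.hom_eval₂]
    simp [hρ, Polynomial.eval, Polynomial.eval₂_eq_sum_range]
  have hPmap : P.map PowerSeries.constantCoeff = Polynomial.X ^ 2 + Polynomial.C b' *
      Polynomial.X + Polynomial.C (g'.eval x₀) := by
    simp [hP, hρ0]
  obtain ⟨y, hy0, hy⟩ := exists_powerSeries_root (P := P) (y₀ := y₀)
    (by rw [hPmap]; simpa using hxy)
    (by rw [hPmap]; simpa [one_add_one_eq_two] using hunr)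
  set ξ : LaurentSeries k := algebraMap k _ x₀ + HahnSeries.single 1 1 with hξ
  set η : LaurentSeries k := HahnSeries.ofPowerSeries ℤ k y with hη
  have hrel : η ^ 2 + Polynomial.aeval ξ (Polynomial.C b') * η + Polynomial.aeval ξ g' = 0 := by
    rw [Polynomial.IsRoot.def, hP] at hy
    have := congrArg (HahnSeries.ofPowerSeries ℤ k) hy
    simp only [Polynomial.eval_add, Polynomial.eval_mul, Polynomial.eval_pow, Polynomial.eval_X,
      Polynomial.eval_C, map_add, map_mul, map_pow, map_zero] at this
    rw [hξ, aeval_add_single, aeval_add_single, Polynomial.eval₂_C]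
    exact this
  have htr : Transcendental k ξ := transcendental_add_single x₀
  let c : Curve k (LaurentSeries k) :=
    { m := 2
      ω := ω
      ξ := ξ
      η := η
      h := fun j => if j = 0 then -g' else -Polynomial.C b'
      two_le := le_rfl
      one_le := hω
      rel := by
        rw [Finset.sum_range_succ, Finset.sum_range_one]
        simp only [if_true, one_ne_zero, if_false, map_neg]
        linear_combination hrel
      natDegree_le := by
        intro j hj
        interval_cases j
        · simp only [if_true, Polynomial.natDegree_neg]
          refine Polynomial.natDegree_map_le.trans (hg.trans ?_)
          omega
        · simp
      indep := by
        intro r hr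
        rw [Finset.sum_range_succ, Finset.sum_range_one, pow_zero, mul_one, pow_one] at hr
        have h1 : r 1 = 0 := by
          by_contra h1
          exact hno (exists_polynomial_root_of_linear_relation htr hrel hr h1)
        have h0 : r 0 = 0 := by
          rw [h1, map_zero, zero_mul, add_zero] at hr
          exact transcendental_iff.1 htr _ hr
        intro j hj
        interval_cases j
        exacts [h0, h1] }
  have hv : c.Adapted (laurentPlace k) :=
    { ξ_mem := by
        refine (laurentPlace k).anti (show (-1 : ℤ) ≤ 0 by norm_num) ?_
        have := aeval_add_single x₀ Polynomial.X
        rw [Polynomial.aeval_X] at this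
        change ξ ∈ _
        rw [hξ, this]
        exact ofPowerSeries_mem_Ge _
      η_mem := (laurentPlace k).anti (show -(ω : ℤ) ≤ 0 by omega) (ofPowerSeries_mem_Ge y)
      le_natDegree := fun N hN n hn => le_natDegree_of_aeval_add_single_mem hN hn }
  have hroot : Polynomial.aevalAeval ξ η (Polynomial.X ^ 2 + Polynomial.C (Polynomial.C b) *
      Polynomial.X + Polynomial.C g) = 0 := by
    simp only [map_add, map_mul, map_pow, Polynomial.aevalAeval_Y, Polynomial.aevalAeval_C,
      Polynomial.aeval_C]
    rw [← hrel, hg', Polynomial.aeval_map_algebraMap, Polynomial.aeval_C, hb',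
      ← IsScalarTower.algebraMap_apply]
  obtain ⟨α, β, hαβ⟩ := exists_ξ_eq (fun x y hx => by
    simpa [Polynomial.evalEval] using hH x y hx) hroot
  rw [hcard] at hαβ
  refine hv.false_of_ideal (p := p) (h := h) ?_ ?_ ?_ (aevalAeval_mem_adjoin (k := k) ξ η α)
    (aevalAeval_mem_adjoin (k := k) ξ η β) hαβ ?_
  · exact fun x => IsAlgClosed.exists_pow_nat_eq x (pow_pos (Fact.out : p.Prime).pos _)
  · have hfix (x : K) : algebraMap K k x ^ p ^ h = algebraMap K k x := by
      rw [← map_pow, ← hcard, FiniteField.pow_card]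
    intro j _ n
    obtain ⟨N, hN⟩ : ∃ N : Polynomial K, c.h j = N.map (algebraMap K k) := by
      by_cases hj : j = 0
      · exact ⟨-g, by simp [c, hj, hg']⟩
      · exact ⟨-Polynomial.C b, by simp [c, hj, hb']⟩
    rw [hN, Polynomial.coeff_map, hfix]
  · rw [c.G_η]
    have : (c.m : LaurentSeries k) * c.η ^ (c.m - 1) - ∑ j ∈ Finset.range c.m,
        Polynomial.aeval c.ξ (c.h j) * (j * c.η ^ (j - 1)) =
        HahnSeries.ofPowerSeries ℤ k (y + y + PowerSeries.C b') := by
      simp [c, Finset.sum_range_succ, hη, two_mul]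
      rfl
    rw [this]
    intro h0
    rw [map_eq_zero_iff _ HahnSeries.ofPowerSeries_injective] at h0
    apply hunr
    have := congrArg PowerSeries.constantCoeff h0
    simpa [hy0, two_mul] using this
  · simp only [Curve.s, c]
    linarith

end QuadraticCover

section Bivariate

open Polynomial.Bivariate (equivMvPolynomial)

variable {k : Type*} [Field k]

lemma coeff_equivMvPolynomial (P : Polynomial (Polynomial k)) (i j : ℕ) :
    MvPolynomial.coeff (Finsupp.single (0 : Fin 2) i + Finsupp.single (1 : Fin 2) j)
      (equivMvPolynomial k P) = (P.coeff j).coeff i := by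
  induction P using Polynomial.induction_on' with
  | add P Q hP hQ => simp [hP, hQ]
  | monomial n N =>
    induction N using Polynomial.induction_on' with
    | add N N' hN hN' => simp only [map_add, MvPolynomial.coeff_add, hN, hN', Polynomial.coeff_add]
    | monomial m a =>
      have h1 : equivMvPolynomial k (Polynomial.monomial n (Polynomial.monomial m a)) =
          MvPolynomial.monomial (Finsupp.single 0 m + Finsupp.single 1 n) a := by
        rw [← Polynomial.C_mul_X_pow_eq_monomial, ← Polynomial.C_mul_X_pow_eq_monomial]
        simp only [map_mul, map_pow, Polynomial.Bivariate.equivMvPolynomial_C_C,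
          Polynomial.Bivariate.equivMvPolynomial_C_X, Polynomial.Bivariate.equivMvPolynomial_X]
        rw [MvPolynomial.monomial_add_single, MvPolynomial.C_mul_X_pow_eq_monomial]
      rw [h1, MvPolynomial.coeff_monomial, Polynomial.coeff_monomial]
      by_cases hn : n = j
      · by_cases hm : m = i
        · simp [hn, hm]
        · rw [if_pos hn, Polynomial.coeff_monomial, if_neg hm, if_neg]
          intro h
          exact hm (by simpa using DFunLike.congr_fun h 0)
      · rw [if_neg hn, Polynomial.coeff_zero, if_neg]
        intro h
        exact hn (by simpa using DFunLike.congr_fun h 1)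

lemma eq_single_add_single (s : Fin 2 →₀ ℕ) :
    s = Finsupp.single 0 (s 0) + Finsupp.single 1 (s 1) := by
  ext i
  fin_cases i <;> simp

lemma totalDegree_equivMvPolynomial_le_iff {P : Polynomial (Polynomial k)} {n : ℕ} :
    (equivMvPolynomial k P).totalDegree ≤ n ↔ ∀ i j, (P.coeff j).coeff i ≠ 0 → i + j ≤ n := by
  constructor
  · intro h i j hij
    rw [← coeff_equivMvPolynomial, ← MvPolynomial.mem_support_iff] at hij
    have := (MvPolynomial.le_totalDegree hij).trans h
    rwa [Finsupp.sum_fintype _ _ (fun _ => rfl), Fin.sum_univ_two, Finsupp.add_apply,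
      Finsupp.add_apply, Finsupp.single_eq_same, Finsupp.single_eq_same,
      Finsupp.single_eq_of_ne (by simp), Finsupp.single_eq_of_ne (by simp), zero_add,
      add_zero] at this
  · intro h
    refine Finset.sup_le fun s hs => ?_
    rw [Finsupp.sum_fintype _ _ (fun _ => rfl), Fin.sum_univ_two]
    apply h
    rwa [← coeff_equivMvPolynomial, ← eq_single_add_single, ← MvPolynomial.mem_support_iff]

lemma natDegree_le_totalDegree {P : Polynomial (Polynomial k)} (hP : P.Monic) :
    P.natDegree ≤ (equivMvPolynomial k P).totalDegree := by
  have := totalDegree_equivMvPolynomial_le_iff.1 (le_refl (equivMvPolynomial k P).totalDegree)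
    0 P.natDegree (by rw [hP.coeff_natDegree]; simp)
  omega

/-- A monic factor of a polynomial whose total degree is its degree in `Y` has the same
property. -/
lemma totalDegree_le_of_mul {P Q : Polynomial (Polynomial k)} (hP : P.Monic) (hQ : Q.Monic)
    (h : (equivMvPolynomial k (P * Q)).totalDegree ≤ (P * Q).natDegree) :
    (equivMvPolynomial k P).totalDegree ≤ P.natDegree := by
  have hne {R : Polynomial (Polynomial k)} (hR : R.Monic) : equivMvPolynomial k R ≠ 0 := by
    rw [Ne, EmbeddingLike.map_eq_zero_iff]
    exact hR.ne_zero
  rw [map_mul, MvPolynomial.totalDegree_mul_of_isDomain (hne hP) (hne hQ), hP.natDegree_mul hQ] at h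
  have := natDegree_le_totalDegree hQ
  omega

end Bivariate

section MinimalRelation

variable {k L : Type*} [Field k] [Field L] [Algebra k L]

/-- Over `k[ξ]`, a root of a monic polynomial has a monic minimal relation dividing it. -/
lemma exists_minimal_relation {ξ η : L} (hξ : Transcendental k ξ) {H : Polynomial (Polynomial k)}
    (hH : H.Monic) (h0 : Polynomial.aevalAeval ξ η H = 0) :
    ∃ P Q : Polynomial (Polynomial k), P.Monic ∧ Q.Monic ∧ H = P * Q ∧
      Polynomial.aevalAeval ξ η P = 0 ∧
      ∀ R : Polynomial (Polynomial k), Polynomial.aevalAeval ξ η R = 0 → R.degree < P.degree → R = 0 := by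
  let _ : Algebra (Polynomial k) L := (Polynomial.aeval ξ : Polynomial k →ₐ[k] L).toRingHom.toAlgebra
  have hinj : Function.Injective (algebraMap (Polynomial k) L) := transcendental_iff_injective.1 hξ
  have : FaithfulSMul (Polynomial k) L := (faithfulSMul_iff_algebraMap_injective _ _).2 hinj
  have hae (R : Polynomial (Polynomial k)) :
      Polynomial.aeval η R = Polynomial.aevalAeval ξ η R := by
    induction R using Polynomial.induction_on' with
    | add R R' hR hR' => rw [map_add, map_add, hR, hR']
    | monomial n N =>
      rw [← Polynomial.C_mul_X_pow_eq_monomial]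
      simp only [map_mul, map_pow, Polynomial.aevalAeval_C, Polynomial.aevalAeval_Y,
        Polynomial.aeval_C, Polynomial.aeval_X]
      rfl
  have hintegral : IsIntegral (Polynomial k) η := ⟨H, hH, by
    rw [← Polynomial.aeval_def, hae, h0]⟩
  obtain ⟨Q, hQ⟩ := minpoly.isIntegrallyClosed_dvd hintegral (by rw [hae, h0] :
    Polynomial.aeval η H = 0)
  have hPm := minpoly.monic hintegral
  refine ⟨minpoly (Polynomial k) η, Q, hPm, hPm.of_mul_monic_left (hQ ▸ hH), hQ, ?_, ?_⟩
  · rw [← hae, minpoly.aeval]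
  · intro R hR hdeg
    by_contra hR0
    exact absurd (minpoly.IsIntegrallyClosed.degree_le_of_ne_zero hR0 (by rw [hae, hR]))
      (not_le.2 hdeg)

end MinimalRelation

section PlaceAtInfinity

attribute [local instance] laurentAlgebra

open Polynomial.Bivariate (equivMvPolynomial)

lemma transcendental_single_inv {k : Type*} [Field k] :
    Transcendental k (HahnSeries.single (-1) 1 : LaurentSeries k) := by
  rw [transcendental_iff]
  intro N hN
  by_contra hN0
  have := le_natDegree_of_aeval_single_inv_mem hN0 (n := 1)
    (by rw [hN]; exact Submodule.zero_mem _)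
  omega

/-- A monic plane curve with a place at infinity on which `Y` vanishes, and `Y` generically
separable there, has a rational point with `X ≠ 0`. -/
theorem false_of_place_at_infinity {K : Type*} [Field K] [Fintype K] {p h : ℕ} [Fact p.Prime]
    [CharP K p] (hcard : Fintype.card K = p ^ h) {H : Polynomial (Polynomial K)} (hmon : H.Monic)
    (hdeg : (equivMvPolynomial K H).totalDegree ≤ H.natDegree)
    (hq : 8 * H.natDegree ^ 4 < p ^ h) (hH : ∀ x y : K, x ≠ 0 → H.evalEval x y ≠ 0)
    {η : LaurentSeries K} (hη : η ∈ (laurentPlace K).Ge 1) (hη0 : η ≠ 0)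
    (hroot : Polynomial.aevalAeval (HahnSeries.single (-1) 1) η H = 0)
    (hsep : Polynomial.aevalAeval (HahnSeries.single (-1) 1) η (Polynomial.derivative H) ≠ 0) :
    False := by
  set ξ : LaurentSeries K := HahnSeries.single (-1) 1 with hξ
  have htr : Transcendental K ξ := transcendental_single_inv
  obtain ⟨P, Q, hP, hQ, rfl, hPη, hmin⟩ := exists_minimal_relation htr hmon hroot
  have hPdeg := totalDegree_equivMvPolynomial_le_iff.1 (totalDegree_le_of_mul hP hQ hdeg)
  have hsum : Polynomial.aevalAeval ξ η P =
      η ^ P.natDegree + ∑ j ∈ Finset.range P.natDegree, Polynomial.aeval ξ (P.coeff j) * η ^ j := by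
    conv_lhs => rw [hP.as_sum]
    simp only [map_add, map_sum, map_mul, map_pow, Polynomial.aevalAeval_C,
      Polynomial.aevalAeval_Y]
  have hm : 2 ≤ P.natDegree := by
    by_contra! hlt
    rw [hPη] at hsum
    interval_cases hn : P.natDegree
    · simp at hsum
    · simp only [pow_one, Finset.sum_range_one, pow_zero, mul_one] at hsum
      by_cases hr : P.coeff 0 = 0
      · rw [hr, map_zero, add_zero] at hsum
        exact hη0 hsum.symm
      · have hmem : Polynomial.aeval ξ (P.coeff 0) ∈ (laurentPlace K).Ge 1 := by
          rw [show Polynomial.aeval ξ (P.coeff 0) = -η by linear_combination -hsum]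
          exact Submodule.neg_mem _ hη
        have := le_natDegree_of_aeval_single_inv_mem hr hmem
        omega
  let c : Curve K (LaurentSeries K) :=
    { m := P.natDegree
      ω := 1
      ξ := ξ
      η := η
      h := fun j => -P.coeff j
      two_le := hm
      one_le := le_rfl
      rel := by
        rw [hPη] at hsum
        simp only [map_neg, neg_mul, Finset.sum_neg_distrib]
        linear_combination -hsum
      natDegree_le := by
        intro j hj
        rw [Polynomial.natDegree_neg, one_mul]
        by_cases hz : P.coeff j = 0
        · simp [hz]
        · have := hPdeg (P.coeff j).natDegree j (by simpa using hz)
          omega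
      indep := by
        intro r hr j hj
        have := hmin (∑ j ∈ Finset.range P.natDegree, Polynomial.C (r j) * Polynomial.X ^ j)
          (by simpa only [map_sum, map_mul, map_pow, Polynomial.aevalAeval_C,
            Polynomial.aevalAeval_Y] using hr)
          (by
            rw [Polynomial.degree_eq_natDegree hP.ne_zero]
            refine (Polynomial.degree_sum_le _ _).trans_lt ?_
            rw [Finset.sup_lt_iff (WithBot.bot_lt_coe _)]
            intro i hi
            refine (Polynomial.degree_C_mul_X_pow_le _ _).trans_lt ?_
            exact_mod_cast Finset.mem_range.1 hi)
        have h1 := congrArg (fun f => Polynomial.coeff f j) this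
        simpa [Polynomial.finsetSum_coeff, Polynomial.coeff_C_mul, Polynomial.coeff_X_pow, hj]
          using h1 }
  have hv : c.Adapted (laurentPlace K) :=
    { ξ_mem := fun i hi => HahnSeries.coeff_single_of_ne hi.ne
      η_mem := (laurentPlace K).anti (show -((1 : ℕ) : ℤ) ≤ 1 by norm_num) hη
      le_natDegree := fun N hN n hn => by
        have := le_natDegree_of_aeval_single_inv_mem hN hn
        omega }
  have hG : c.G c.η = Polynomial.aevalAeval ξ η (Polynomial.derivative P) := by
    rw [c.G_η]
    conv_rhs => rw [hP.as_sum]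
    simp only [c, Polynomial.derivative_X_pow,
      map_add, map_sum, map_mul, map_pow, Polynomial.derivative_C_mul_X_pow, map_neg, neg_mul,
      Finset.sum_neg_distrib, sub_neg_eq_add, Polynomial.aevalAeval_Y, Polynomial.aevalAeval_C,
      map_natCast]
    congr 1
    refine Finset.sum_congr rfl fun j _ => by ring
  have hGη : c.G c.η ≠ 0 := by
    intro h0
    apply hsep
    rw [Polynomial.derivative_mul, map_add, map_mul, map_mul, ← hG, h0, hPη]
    ring
  obtain ⟨α, β, hαβ⟩ := exists_ξ_eq hH hroot
  rw [hcard] at hαβ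
  have hfix (x : K) : x ^ p ^ h = x := by rw [← hcard, FiniteField.pow_card]
  refine hv.false_of_ideal (p := p) (h := h) (fun x => ⟨x, hfix x⟩) (fun _ _ _ => hfix _) hGη
    (aevalAeval_mem_adjoin (k := K) ξ η α) (aevalAeval_mem_adjoin (k := K) ξ η β) hαβ ?_
  refine lt_of_le_of_lt ?_ hq
  have hle : P.natDegree ≤ (P * Q).natDegree := by
    rw [hP.natDegree_mul hQ]
    exact Nat.le_add_right _ _
  refine le_trans ?_ (Nat.mul_le_mul_left 8 (Nat.pow_le_pow_left hle 4))
  simp only [Curve.s, c, one_mul]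
  obtain ⟨n, hn⟩ : ∃ n, P.natDegree = n + 1 := ⟨P.natDegree - 1, by omega⟩
  rw [hn, Nat.add_sub_cancel]
  calc 8 * (n + 1) ^ 2 * n * (n + 1) ≤ 8 * (n + 1) ^ 2 * (n + 1) * (n + 1) := by gcongr; omega
    _ = 8 * (n + 1) ^ 4 := by ring

end PlaceAtInfinity

section Substitution

lemma ringHom_aeval {K A B : Type*} [CommSemiring K] [Semiring A] [Semiring B] [Algebra K A]
    [Algebra K B] (φ : A →+* B) (hφ : ∀ x, φ (algebraMap K A x) = algebraMap K B x) (z : A)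
    (N : Polynomial K) : φ (Polynomial.aeval z N) = Polynomial.aeval (φ z) N := by
  rw [Polynomial.aeval_def, Polynomial.hom_eval₂, Polynomial.aeval_def]
  congr 1
  exact RingHom.ext hφ

lemma aevalAeval_eq_eval_map {K L : Type*} [Field K] [Field L] [Algebra K L] (ξ η : L)
    (P : Polynomial (Polynomial K)) : Polynomial.aevalAeval ξ η P =
      (P.map (Polynomial.aeval ξ : Polynomial K →ₐ[K] L).toRingHom).eval η := by
  induction P using Polynomial.induction_on' with
  | add P Q hP hQ => rw [map_add, hP, hQ, Polynomial.map_add, Polynomial.eval_add]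
  | monomial n N =>
    rw [← Polynomial.C_mul_X_pow_eq_monomial, map_mul, map_pow, Polynomial.aevalAeval_C,
      Polynomial.aevalAeval_Y]
    simp

lemma coeff_taylor_of_natDegree_le {K : Type*} [Field K] {N : Polynomial K} {n : ℕ}
    (h : N.natDegree ≤ n) (c : K) : (Polynomial.taylor c N).coeff n = N.coeff n := by
  rcases h.lt_or_eq with h | rfl
  · rw [Polynomial.coeff_eq_zero_of_natDegree_lt h, Polynomial.coeff_eq_zero_of_natDegree_lt]
    rwa [Polynomial.natDegree_taylor]
  · rw [Polynomial.coeff_taylor_natDegree, Polynomial.leadingCoeff]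

variable {K : Type*} [Field K]

/-- The polynomial `(X + lY)² + Y (F(c + Y, X + lY) - e)`. -/
noncomputable def slice (F : Polynomial (Polynomial K)) (c l e : K) :
    Polynomial (Polynomial K) :=
  (Polynomial.C Polynomial.X + Polynomial.C (Polynomial.C l) * Polynomial.X) ^ 2 +
    Polynomial.X * (∑ j ∈ Finset.range (F.natDegree + 1),
      Polynomial.aeval (Polynomial.C (Polynomial.C c) + Polynomial.X :
        Polynomial (Polynomial K)) (F.coeff j) *
        (Polynomial.C Polynomial.X + Polynomial.C (Polynomial.C l) * Polynomial.X) ^ j -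
      Polynomial.C (Polynomial.C e))

variable {F : Polynomial (Polynomial K)} {c l e : K}

lemma evalEval_slice (x y : K) : (slice F c l e).evalEval x y =
    (x + l * y) ^ 2 + y * (F.evalEval (c + y) (x + l * y) - e) := by
  rw [slice, ← Polynomial.coe_evalEvalRingHom]
  simp only [map_add, map_mul, map_pow, map_sub, map_sum]
  simp only [ringHom_aeval (K := K) (Polynomial.evalEvalRingHom x y) (fun a => by
    simp [Polynomial.algebraMap_apply])]
  simp only [map_add, Polynomial.coe_evalEvalRingHom, Polynomial.evalEval_X, Polynomial.evalEval_C,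
    Polynomial.eval_X, Polynomial.eval_C]
  congr 3
  rw [Polynomial.evalEval, Polynomial.eval_eq_sum_range (p := F), Polynomial.eval_finsetSum]
  refine Finset.sum_congr rfl fun j _ => ?_
  simp [Polynomial.coe_aeval_eq_eval]

lemma slice_mem_polyFil {d : ℕ} (hF : ∀ i j, (F.coeff j).coeff i ≠ 0 → i + j ≤ d) (hd : 1 ≤ d) :
    slice F c l e ∈ (polyFil (degFil K (Polynomial.X : Polynomial K))).Fil (d + 1) := by
  set A := polyFil (degFil K (Polynomial.X : Polynomial K))
  have hC (a : K) : Polynomial.C (Polynomial.C a) ∈ A.Fil 0 := A.algebraMap_mem a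
  have hY : Polynomial.X ∈ A.Fil 1 := X_mem_polyFil _
  have hX : Polynomial.C Polynomial.X ∈ A.Fil 1 := by
    have h := mem_degFil_of_natDegree_le (k := K) (x := (Polynomial.X : Polynomial K))
      (N := Polynomial.X) (a := 1) (by simp)
    rw [Polynomial.aeval_X] at h
    exact C_mem_polyFil h
  have hlin : Polynomial.C Polynomial.X + Polynomial.C (Polynomial.C l) * Polynomial.X ∈ A.Fil 1 :=
    add_mem hX (A.mul_mem_of_le (hC l) hY (by norm_num))
  rw [slice]
  refine add_mem (A.pow_mem_of_le hlin 2 (by norm_num; omega)) (A.mul_mem_of_le hY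
    (sub_mem (sum_mem fun j _ => ?_) (A.mem_of_le (hC e) (show (0 : ℤ) ≤ d by omega))) (by omega))
  by_cases hz : F.coeff j = 0
  · simp [hz]
  have hj := hF (F.coeff j).natDegree j (by simpa using hz)
  exact A.mul_mem_of_le (A.aeval_mem (add_mem (A.mem_of_le (hC c) zero_le_one) hY) le_rfl)
    (A.pow_mem hlin j) (by rw [mul_one]; exact_mod_cast hj)

lemma coeff_coeff_slice {d : ℕ} (hF : ∀ i j, (F.coeff j).coeff i ≠ 0 → i + j ≤ d) (hd : 2 ≤ d) :
    ((slice F c l e).coeff (d + 1)).coeff 0 =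
      ∑ j ∈ Finset.range (d + 1), (F.coeff j).coeff (d - j) * l ^ j := by
  have h1 : ((slice F c l e).coeff (d + 1)).coeff 0 =
      ((slice F c l e).map (Polynomial.evalRingHom 0)).coeff (d + 1) := by
    rw [Polynomial.coeff_map, Polynomial.coe_evalRingHom, Polynomial.coeff_zero_eq_eval_zero]
  have h2 : (slice F c l e).map (Polynomial.evalRingHom 0) =
      Polynomial.C (l ^ 2) * Polynomial.X ^ 2 + Polynomial.X *
        (∑ j ∈ Finset.range (F.natDegree + 1), Polynomial.taylor c (F.coeff j) *
          (Polynomial.C (l ^ j) * Polynomial.X ^ j) - Polynomial.C e) := by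
    rw [slice, ← Polynomial.coe_mapRingHom]
    simp only [map_add, map_mul, map_pow, map_sub, map_sum]
    simp only [ringHom_aeval (K := K) (Polynomial.mapRingHom (Polynomial.evalRingHom (0 : K))) (fun a => by
      simp [Polynomial.algebraMap_apply])]
    simp only [map_add, Polynomial.coe_mapRingHom, Polynomial.map_C, Polynomial.map_X,
      Polynomial.coe_evalRingHom, Polynomial.eval_X, Polynomial.eval_C, map_zero, zero_add, mul_pow]
    congr 3
    refine Finset.sum_congr rfl fun j _ => ?_
    rw [Polynomial.taylor_apply, Polynomial.comp, Polynomial.aeval_def, add_comm]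
    rfl
  have hJ : F.natDegree ≤ d := by
    by_cases hF0 : F = 0
    · simp [hF0]
    have := hF F.leadingCoeff.natDegree F.natDegree (by
      rw [Polynomial.coeff_natDegree, Polynomial.coeff_natDegree]
      simpa using hF0)
    omega
  rw [h1, h2, Polynomial.coeff_add, Polynomial.coeff_C_mul_X_pow, if_neg (by omega), zero_add,
    Polynomial.coeff_X_mul, Polynomial.coeff_sub, Polynomial.coeff_C, if_neg (by omega), sub_zero,
    Polynomial.finsetSum_coeff]
  have h3 : ∀ j ∈ Finset.range (F.natDegree + 1), (Polynomial.taylor c (F.coeff j) *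
      (Polynomial.C (l ^ j) * Polynomial.X ^ j)).coeff d = (F.coeff j).coeff (d - j) * l ^ j := by
    intro j hj
    have hjd : j ≤ d := by
      have := Finset.mem_range.1 hj
      omega
    have hdeg : (F.coeff j).natDegree ≤ d - j := by
      by_cases hz : F.coeff j = 0
      · simp [hz]
      have := hF (F.coeff j).natDegree j (by simpa using hz)
      omega
    rw [← mul_assoc, Polynomial.coeff_mul_X_pow', if_pos hjd, Polynomial.coeff_mul_C,
      coeff_taylor_of_natDegree_le hdeg]
  rw [Finset.sum_congr rfl h3]
  refine Finset.sum_subset (Finset.range_mono (by omega)) fun j _ hj => ?_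
  rw [Polynomial.coeff_eq_zero_of_natDegree_lt (n := j) (by simpa using hj), Polynomial.coeff_zero,
    zero_mul]

end Substitution

section Infinity

open Polynomial.Bivariate (equivMvPolynomial)

attribute [local instance] laurentAlgebra

variable {K : Type*} [Field K]

/-- The equation of `slice` multiplied by `τ ^ J`, where `τ = 1 / X` and `J` is the `Y`-degree. -/
noncomputable def sliceAtInfinity (F : Polynomial (Polynomial K)) (c l e : K) :
    Polynomial (PowerSeries K) :=
  Polynomial.C (PowerSeries.X ^ (F.natDegree - 2)) *
      (1 + Polynomial.C (PowerSeries.C l * PowerSeries.X) * Polynomial.X) ^ 2 +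
    Polynomial.X * (∑ j ∈ Finset.range (F.natDegree + 1),
      Polynomial.aeval (Polynomial.C (PowerSeries.C c) + Polynomial.X :
        Polynomial (PowerSeries K)) (F.coeff j) *
        (Polynomial.C (PowerSeries.X ^ (F.natDegree - j)) *
          (1 + Polynomial.C (PowerSeries.C l * PowerSeries.X) * Polynomial.X) ^ j) -
      Polynomial.C (PowerSeries.C e * PowerSeries.X ^ F.natDegree))

variable {F : Polynomial (Polynomial K)} {c l e : K}

lemma map_constantCoeff_sliceAtInfinity (hF : 3 ≤ F.natDegree) :
    (sliceAtInfinity F c l e).map PowerSeries.constantCoeff =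
      Polynomial.X * Polynomial.taylor c F.leadingCoeff := by
  rw [sliceAtInfinity, ← Polynomial.coe_mapRingHom]
  simp only [map_add, map_mul, map_pow, map_sub, map_sum]
  simp only [ringHom_aeval (K := K) (Polynomial.mapRingHom (PowerSeries.constantCoeff (R := K)))
    (fun a => by simp [Polynomial.algebraMap_apply])]
  simp only [map_add, map_one, Polynomial.coe_mapRingHom, Polynomial.map_C, Polynomial.map_X,
    PowerSeries.constantCoeff_C, PowerSeries.constantCoeff_X, map_zero, mul_zero, zero_mul,
    add_zero, one_pow, mul_one]
  rw [zero_pow (by omega), zero_pow (by omega), zero_add, mul_zero, sub_zero,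
    Finset.sum_eq_single_of_mem F.natDegree (by simp)]
  · rw [Nat.sub_self, pow_zero, mul_one, Polynomial.taylor_apply, Polynomial.comp,
      Polynomial.aeval_def, add_comm]
    rfl
  · intro j hj hne
    have := Finset.mem_range.1 hj
    rw [zero_pow (by omega), mul_zero]

lemma homogenize_mul {A : Type*} [CommRing A] {T Ξ : A} (hT : T * Ξ = 1) {J : ℕ} (hJ : 2 ≤ J)
    (L E Y : A) (u : ℕ → A) :
    T ^ (J - 2) * (1 + L * T * Y) ^ 2 + Y * (∑ j ∈ Finset.range (J + 1),
        u j * (T ^ (J - j) * (1 + L * T * Y) ^ j) - E * T ^ J) =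
      T ^ J * ((Ξ + L * Y) ^ 2 + Y * (∑ j ∈ Finset.range (J + 1), u j * (Ξ + L * Y) ^ j - E)) := by
  have hlin : 1 + L * T * Y = T * (Ξ + L * Y) := by linear_combination -hT
  have hpow (j : ℕ) (hj : j ≤ J) : T ^ J = T ^ (J - j) * T ^ j := by
    rw [← pow_add, Nat.sub_add_cancel hj]
  rw [hlin, mul_pow, mul_add (T ^ J), mul_left_comm (T ^ J) Y, mul_sub (T ^ J), Finset.mul_sum]
  congr 1
  · rw [hpow 2 hJ]
    ring
  · congr 2
    · refine Finset.sum_congr rfl fun j hj => ?_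
      rw [hpow j (by have := Finset.mem_range.1 hj; omega), mul_pow]
      ring
    · ring

lemma map_ofPowerSeries_sliceAtInfinity (hF : 3 ≤ F.natDegree) :
    (sliceAtInfinity F c l e).map (HahnSeries.ofPowerSeries ℤ K) =
      Polynomial.C (HahnSeries.single 1 1 ^ F.natDegree) * (slice F c l e).map
        (Polynomial.aeval (HahnSeries.single (-1) 1 : LaurentSeries K)).toRingHom := by
  set t : LaurentSeries K := HahnSeries.single 1 1 with ht
  set ξ : LaurentSeries K := HahnSeries.single (-1) 1 with hξ
  have htξ : t * ξ = 1 := by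
    rw [ht, hξ, HahnSeries.single_mul_single]
    simp
  have hC (a : K) : (algebraMap K (LaurentSeries K) a) = HahnSeries.C a := by
    rw [HahnSeries.algebraMap_apply]
    simp
  rw [sliceAtInfinity, slice, ← Polynomial.coe_mapRingHom, ← Polynomial.coe_mapRingHom]
  simp only [map_add, map_mul, map_pow, map_sub, map_sum]
  simp only [ringHom_aeval (K := K) (Polynomial.mapRingHom (HahnSeries.ofPowerSeries ℤ K))
    (fun a => by simp [Polynomial.algebraMap_apply, hC]),
    ringHom_aeval (K := K) (Polynomial.mapRingHom
      (Polynomial.aeval ξ : Polynomial K →ₐ[K] LaurentSeries K).toRingHom)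
    (fun a => by simp [Polynomial.algebraMap_apply])]
  simp only [map_add, map_one, Polynomial.coe_mapRingHom, Polynomial.map_C,
    Polynomial.map_X, HahnSeries.ofPowerSeries_C, HahnSeries.ofPowerSeries_X,
    AlgHom.toRingHom_eq_coe, RingHom.coe_coe, Polynomial.aeval_X, Polynomial.aeval_C, hC]
  exact homogenize_mul (by rw [← Polynomial.C_mul, htξ, Polynomial.C_1]) (by omega) _ _ _ _

variable [Fintype K] {p h : ℕ} [Fact p.Prime] [CharP K p]

lemma exists_eval_ne_zero {g : Polynomial K} (hg : g ≠ 0) (hdeg : g.natDegree < Fintype.card K) :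
    ∃ x, g.eval x ≠ 0 := by
  by_contra! hcon
  exact hg (eq_zero_of_forall_eval_eq_zero ((Polynomial.natDegree_lt_iff_degree_lt hg).1 hdeg) hcon)

theorem natDegree_le_two_of_ovoid (hcard : Fintype.card K = p ^ h) {d : ℕ}
    (hF : ∀ i j, (F.coeff j).coeff i ≠ 0 → i + j ≤ d)
    (htop : ∃ i j, i + j = d ∧ (F.coeff j).coeff i ≠ 0) (hq : 2 ≤ d → 8 * (d + 1) ^ 4 < p ^ h)
    (hov : ∀ x₁ y₁ x₂ y₂ : K, (x₁, y₁) ≠ (x₂, y₂) →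
      (y₁ - y₂) ^ 2 + (x₁ - x₂) * (F.evalEval x₁ y₁ - F.evalEval x₂ y₂) ≠ 0) :
    F.natDegree ≤ 2 := by
  by_contra! hJ
  have hF0 : F ≠ 0 := by
    rintro rfl
    simp at hJ
  have hlead0 : F.leadingCoeff ≠ 0 := Polynomial.leadingCoeff_ne_zero.2 hF0
  have hlead := hF F.leadingCoeff.natDegree F.natDegree (by simpa using hF0)
  have hd : 3 ≤ d := by omega
  replace hq := hq (by omega)
  have hdq : d + 1 < Fintype.card K := by
    rw [hcard]
    have := Nat.le_self_pow (n := 4) (by norm_num) (d + 1)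
    omega
  obtain ⟨c, hc⟩ := exists_eval_ne_zero hlead0 (by omega)
  obtain ⟨l, hl⟩ : ∃ l : K, ∑ j ∈ Finset.range (d + 1), (F.coeff j).coeff (d - j) * l ^ j ≠ 0 := by
    set T : Polynomial K := ∑ j ∈ Finset.range (d + 1),
      Polynomial.C ((F.coeff j).coeff (d - j)) * Polynomial.X ^ j with hT
    have hcoeff (j : ℕ) (hj : j ≤ d) : T.coeff j = (F.coeff j).coeff (d - j) := by
      rw [hT, Polynomial.finsetSum_coeff, Finset.sum_eq_single_of_mem j (by simp; omega)]
      · simp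
      · intro i _ hi
        simp [Polynomial.coeff_X_pow, hi.symm]
    have hT0 : T ≠ 0 := by
      obtain ⟨i, j, rfl, hij⟩ := htop
      intro h0
      have := hcoeff j (by omega)
      rw [h0, Polynomial.coeff_zero, Nat.add_sub_cancel] at this
      exact hij this.symm
    have hTdeg : T.natDegree ≤ d := Polynomial.natDegree_sum_le_of_forall_le _ _ fun j hj =>
      (Polynomial.natDegree_C_mul_X_pow_le _ _).trans (by have := Finset.mem_range.1 hj; omega)
    obtain ⟨l, hl⟩ := exists_eval_ne_zero hT0 (by omega)
    refine ⟨l, ?_⟩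
    simpa [hT, Polynomial.eval_finsetSum] using hl
  set e := F.evalEval c 0 with he
  rw [← coeff_coeff_slice (c := c) (e := e) hF (by omega)] at hl
  set S := slice F c l e with hS
  have hSF : S ∈ (polyFil (degFil K (Polynomial.X : Polynomial K))).Fil (d + 1) :=
    slice_mem_polyFil hF (by omega)
  have hScoeff (i j : ℕ) (h : (S.coeff j).coeff i ≠ 0) : i + j ≤ d + 1 := by
    obtain ⟨N, hN, hNe⟩ := hSF j
    rw [hNe, Polynomial.aeval_X_left_apply] at h
    by_contra! hcon
    exact h (hN i (by omega))
  set a := (S.coeff (d + 1)).coeff 0 with ha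
  have hStop : S.coeff (d + 1) = Polynomial.C a := by
    ext i
    rw [Polynomial.coeff_C]
    split_ifs with hi
    · rw [hi]
    · by_contra hne
      have := hScoeff i (d + 1) hne
      omega
  have hSdeg : S.natDegree ≤ d + 1 := by
    rw [Polynomial.natDegree_le_iff_coeff_eq_zero]
    intro j hj
    ext i
    by_contra hne
    have := hScoeff i j hne
    omega
  set H : Polynomial (Polynomial K) := Polynomial.C (Polynomial.C a⁻¹) * S with hH
  have hHdeg : H.natDegree ≤ d + 1 := (Polynomial.natDegree_C_mul_le _ _).trans hSdeg
  have hHtop : H.coeff (d + 1) = 1 := by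
    rw [hH, Polynomial.coeff_C_mul, hStop, ← Polynomial.C_mul, inv_mul_cancel₀ hl, Polynomial.C_1]
  have hmon : H.Monic := Polynomial.monic_of_natDegree_le_of_coeff_eq_one _ hHdeg hHtop
  have hHnat : H.natDegree = d + 1 := le_antisymm hHdeg
    (Polynomial.le_natDegree_of_ne_zero (by rw [hHtop]; exact one_ne_zero))
  have hHtot : (equivMvPolynomial K H).totalDegree ≤ H.natDegree := by
    rw [totalDegree_equivMvPolynomial_le_iff, hHnat]
    intro i j hij
    refine hScoeff i j fun h0 => hij ?_
    rw [hH, Polynomial.coeff_C_mul, Polynomial.coeff_C_mul, h0, mul_zero]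
  have hzero (x y : K) (hx : x ≠ 0) : H.evalEval x y ≠ 0 := by
    rw [hH, Polynomial.evalEval_mul, Polynomial.evalEval_C, Polynomial.eval_C, evalEval_slice]
    refine mul_ne_zero (inv_ne_zero hl) ?_
    have := hov (c + y) (x + l * y) c 0 (by
      intro h
      obtain ⟨h1, h2⟩ := Prod.mk.inj h
      have hy : y = 0 := by linear_combination h1
      rw [hy] at h2
      exact hx (by linear_combination h2))
    rwa [sub_zero, add_sub_cancel_left] at this
  have hder : ((sliceAtInfinity F c l e).map
      PowerSeries.constantCoeff).derivative.eval 0 ≠ 0 := by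
    rw [map_constantCoeff_sliceAtInfinity hJ]
    simpa [Polynomial.taylor_eval] using hc
  obtain ⟨y, hy0, hy⟩ := exists_powerSeries_root (P := sliceAtInfinity F c l e) (y₀ := 0)
    (by rw [map_constantCoeff_sliceAtInfinity hJ]; simp) hder
  have hmap := map_ofPowerSeries_sliceAtInfinity (c := c) (l := l) (e := e) hJ
  rw [← hS] at hmap
  set ξ : LaurentSeries K := HahnSeries.single (-1) 1 with hξ
  have ht : (HahnSeries.single 1 1 : LaurentSeries K) ^ F.natDegree ≠ 0 :=
    pow_ne_zero _ (HahnSeries.single_ne_zero one_ne_zero)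
  set η : LaurentSeries K := HahnSeries.ofPowerSeries ℤ K y with hη
  have hSη : Polynomial.aevalAeval ξ η S = 0 := by
    have h1 := congrArg (Polynomial.eval η) hmap
    rw [hη, Polynomial.eval_map_apply, hy.eq_zero, map_zero, Polynomial.eval_mul,
      Polynomial.eval_C, ← aevalAeval_eq_eval_map, ← hη] at h1
    exact (mul_eq_zero.1 h1.symm).resolve_left ht
  have hη1 : η ∈ (laurentPlace K).Ge 1 := by
    intro i hi
    rcases lt_or_eq_of_le (show i ≤ 0 by omega) with hi | rfl
    · exact ofPowerSeries_mem_Ge y i hi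
    · have := HahnSeries.ofPowerSeries_apply_coeff (Γ := ℤ) y 0
      simpa [hy0] using this
  refine false_of_place_at_infinity hcard hmon hHtot (by rwa [hHnat]) hzero hη1 ?_ ?_ ?_
  · intro h0
    rw [h0, aevalAeval_eq_eval_map, hS, slice] at hSη
    have : ξ ≠ 0 := HahnSeries.single_ne_zero one_ne_zero
    simp at hSη
    exact this hSη
  · rw [hH, map_mul, hSη, mul_zero]
  · have h1 := congrArg (fun P => P.derivative.eval η) hmap
    simp only [Polynomial.derivative_map, Polynomial.derivative_C_mul] at h1
    rw [hη, Polynomial.eval_map_apply, Polynomial.eval_mul, Polynomial.eval_C,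
      ← aevalAeval_eq_eval_map, ← hη] at h1
    rw [hH, Polynomial.derivative_C_mul, map_mul, Polynomial.aevalAeval_C, Polynomial.aeval_C]
    refine mul_ne_zero ?_ fun h0 => hder ?_
    · rw [Ne, map_eq_zero_iff _ (algebraMap K _).injective]
      exact inv_ne_zero hl
    · rw [h0, mul_zero, map_eq_zero_iff _ HahnSeries.ofPowerSeries_injective] at h1
      rw [Polynomial.derivative_map, ← hy0, Polynomial.eval_map_apply, h1, map_zero, hy0]

end Infinity

section LowDegree

variable {K : Type*} [Field K] [Fintype K]

lemma exists_sq_eq (h2 : (2 : K) = 0) (a : K) : ∃ v, v ^ 2 = a := by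
  have := CharTwo.of_one_ne_zero_of_two_eq_zero one_ne_zero h2
  obtain ⟨v, hv⟩ := FiniteField.isSquare_of_char_two (ringChar.eq K 2) a
  exact ⟨v, by rw [hv, sq]⟩

open scoped Classical in
lemma false_of_quadratic {g l h : Polynomial K} (hg : g ≠ 0) (hcard : 2 < Fintype.card K)
    (hdeg : g.natDegree + l.natDegree < Fintype.card K)
    (hov : ∀ x₁ y₁ x₂ y₂ : K, (x₁, y₁) ≠ (x₂, y₂) → (y₁ - y₂) ^ 2 + (x₁ - x₂) *
      ((g.eval x₁ * y₁ ^ 2 + l.eval x₁ * y₁ + h.eval x₁) -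
        (g.eval x₂ * y₂ ^ 2 + l.eval x₂ * y₂ + h.eval x₂)) ≠ 0) : False := by
  have hne {x u : K} (hu : u ≠ 0) (y₁ y₂ : K) : (x, y₁) ≠ (x - u, y₂) := fun heq =>
    hu (by linear_combination (Prod.mk.inj heq).1)
  by_cases h2 : (2 : K) = 0
  · by_cases hl : l = 0
    · obtain ⟨x, hx⟩ := exists_eval_ne_zero hg (by omega)
      obtain ⟨u, -, hu⟩ := Finset.exists_mem_notMem_of_card_lt_card (s := {0, -(g.eval x)⁻¹})
        (t := (Finset.univ : Finset K)) (Finset.card_le_two.trans_lt (by simpa using hcard))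
      simp only [Finset.mem_insert, Finset.mem_singleton, not_or] at hu
      have hug : 1 + u * g.eval x ≠ 0 := fun h0 => hu.2 (by
        field_simp
        linear_combination h0)
      obtain ⟨v, hv⟩ := exists_sq_eq h2
        ((1 + u * g.eval x)⁻¹ * (u * (h.eval (x - u) - h.eval x)))
      refine hov x v (x - u) 0 (hne hu.1 _ _) ?_
      rw [hl]
      simp only [Polynomial.eval_zero, sub_zero, sub_sub_cancel, zero_mul, add_zero,
        zero_pow two_ne_zero, mul_zero, zero_add]
      have : (1 + u * g.eval x) * v ^ 2 = u * (h.eval (x - u) - h.eval x) := by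
        rw [hv, mul_inv_cancel_left₀ hug]
      linear_combination this
    · obtain ⟨x, hx⟩ := exists_eval_ne_zero (mul_ne_zero hg hl)
        (by rw [Polynomial.natDegree_mul hg hl]; omega)
      rw [Polynomial.eval_mul] at hx
      have hgx := left_ne_zero_of_mul hx
      have hlx := right_ne_zero_of_mul hx
      set u := -(g.eval x)⁻¹ with hu
      have hug : u * g.eval x = -1 := by
        rw [hu, neg_mul, inv_mul_cancel₀ hgx]
      set v := (l.eval x)⁻¹ * (h.eval (x - u) - h.eval x) with hv
      have hlv : l.eval x * v = h.eval (x - u) - h.eval x := by rw [hv, mul_inv_cancel_left₀ hlx]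
      refine hov x v (x - u) 0 (hne (neg_ne_zero.2 (inv_ne_zero hgx)) _ _) ?_
      linear_combination v ^ 2 * hug + u * hlv
  · obtain ⟨x, hx⟩ := exists_eval_ne_zero hg (by omega)
    set u := -(g.eval x)⁻¹ with hu
    have hug : u * g.eval x = -1 := by
      rw [hu, neg_mul, inv_mul_cancel₀ hx]
    set z := (2 : K)⁻¹ * (u * l.eval x - 1) with hz
    have hz2 : 2 * z = u * l.eval x - 1 := by rw [hz, mul_inv_cancel_left₀ h2]
    set v := u * (g.eval (x - u) * z ^ 2 + l.eval (x - u) * z + h.eval (x - u)) - z ^ 2 -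
      u * h.eval x with hv
    refine hov x v (x - u) z (hne (neg_ne_zero.2 (inv_ne_zero hx)) _ _) ?_
    linear_combination v ^ 2 * hug - v * hz2 + hv

lemma eq_C_of_affine {g h : Polynomial K} (hdeg : g.natDegree < Fintype.card K)
    (hov : ∀ x₁ y₁ x₂ y₂ : K, (x₁, y₁) ≠ (x₂, y₂) → (y₁ - y₂) ^ 2 + (x₁ - x₂) *
      ((g.eval x₁ * y₁ + h.eval x₁) - (g.eval x₂ * y₂ + h.eval x₂)) ≠ 0) :
    g = Polynomial.C (g.coeff 0) := by
  have hconst (x : K) : (g - Polynomial.C (g.coeff 0)).eval x = 0 := by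
    rw [Polynomial.eval_sub, Polynomial.eval_C, Polynomial.coeff_zero_eq_eval_zero]
    by_contra hne
    have hx : x ≠ 0 := by
      rintro rfl
      exact hne (sub_self _)
    set y := (g.eval x - g.eval 0)⁻¹ * (h.eval 0 - h.eval x) with hy
    have hgy : (g.eval x - g.eval 0) * y = h.eval 0 - h.eval x := by
      rw [hy, mul_inv_cancel_left₀ hne]
    refine hov x y 0 y (fun heq => hx (Prod.mk.inj heq).1) ?_
    linear_combination x * hgy
  by_contra hne
  obtain ⟨x, hx⟩ := exists_eval_ne_zero (sub_ne_zero.2 hne) (by rwa [Polynomial.natDegree_sub_C])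
  exact hx (hconst x)

end LowDegree

section SquareDifferences

open scoped Classical in
lemma exists_regular_value {K k : Type*} [Field K] [Fintype K] [Field k] [Algebra K k]
    {h : Polynomial K} (hh : h.derivative ≠ 0) (hq : h.natDegree ^ 2 < Fintype.card K) :
    ∃ c : K, ∀ x : k, Polynomial.aeval x h = algebraMap K k (h.eval c) →
      Polynomial.aeval x h.derivative ≠ 0 := by
  set S := (h.derivative.map (algebraMap K k)).roots.toFinset with hS
  set P : Polynomial k := ∏ x ∈ S, (h.map (algebraMap K k) - Polynomial.C (Polynomial.aeval x h))
    with hP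
  have hdeg : P.natDegree < Fintype.card K := by
    refine lt_of_le_of_lt ?_ hq
    refine (Polynomial.natDegree_prod_le _ _).trans ?_
    simp only [Polynomial.natDegree_sub_C, Polynomial.natDegree_map, Finset.sum_const, smul_eq_mul,
      sq]
    refine Nat.mul_le_mul_right _ ?_
    refine (Multiset.toFinset_card_le _).trans ((Polynomial.card_roots' _).trans ?_)
    rw [Polynomial.natDegree_map]
    exact (Polynomial.natDegree_derivative_le _).trans (Nat.sub_le _ _)
  have hP0 : P ≠ 0 := by
    rw [hP, Finset.prod_ne_zero_iff]
    intro x _ h0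
    apply hh
    have h1 := congrArg Polynomial.derivative h0
    rw [Polynomial.derivative_sub, Polynomial.derivative_C, sub_zero, Polynomial.derivative_map,
      Polynomial.derivative_zero] at h1
    exact (Polynomial.map_eq_zero _).1 h1
  obtain ⟨c, hc⟩ : ∃ c : K, P.eval (algebraMap K k c) ≠ 0 := by
    by_contra! hcon
    exact hP0 (Polynomial.eq_zero_of_natDegree_lt_card_of_eval_eq_zero P
      (algebraMap K k).injective hcon hdeg)
  refine ⟨c, fun x hx hx0 => hc ?_⟩
  rw [hP, Polynomial.eval_prod]
  refine Finset.prod_eq_zero (i := x) ?_ ?_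
  · rw [hS, Multiset.mem_toFinset, Polynomial.mem_roots (Polynomial.map_ne_zero hh),
      Polynomial.IsRoot, Polynomial.eval_map_algebraMap, hx0]
  · rw [Polynomial.eval_sub, Polynomial.eval_C, Polynomial.eval_map_apply, hx, sub_self]

variable {K : Type*} [Field K]

lemma exists_pow_eq_of_derivative_eq_zero [Finite K] {p : ℕ} [Fact p.Prime] [CharP K p]
    {h : Polynomial K} (hh : h.derivative = 0) : ∃ g : Polynomial K, g ^ p = h := by
  refine ⟨(Polynomial.contract p h).map (frobeniusEquiv K p).symm, ?_⟩
  rw [← polynomial_expand_eq, Polynomial.expand_contract p hh (Fact.out : p.Prime).ne_zero]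

lemma natDegree_le_one_of_sq {k : Type*} [Field k] [IsAlgClosed k] {w B : Polynomial k}
    (hB : Polynomial.X * w = -B ^ 2)
    (hsep : ∀ x, w.eval x = 0 → w.derivative.eval x ≠ 0) : w.natDegree ≤ 1 := by
  obtain ⟨B', rfl⟩ : Polynomial.X ∣ B := by
    rw [Polynomial.X_dvd_iff, Polynomial.coeff_zero_eq_eval_zero]
    have := congrArg (Polynomial.eval 0) hB
    simpa using this
  have hw : w = -(Polynomial.X * B' ^ 2) :=
    mul_left_cancel₀ Polynomial.X_ne_zero (by rw [hB]; ring)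
  have hdeg : B'.degree = 0 := by
    by_contra hne
    obtain ⟨r, hr⟩ := IsAlgClosed.exists_root B' hne
    refine hsep r ?_ ?_
    · simp [hw, hr.eq_zero]
    · simp [hw, hr.eq_zero, Polynomial.derivative_mul, Polynomial.derivative_pow]
  rw [hw, Polynomial.natDegree_neg]
  refine Polynomial.natDegree_mul_le.trans ?_
  rw [Polynomial.natDegree_X, Polynomial.natDegree_pow,
    Polynomial.natDegree_eq_zero_iff_degree_le_zero.2 hdeg.le]

lemma exists_sq_of_mul_pow {k : Type*} [Field k] {p : ℕ} (hp : Odd p) {w B : Polynomial k}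
    (hB : Polynomial.X * w ^ p = -B ^ 2) : ∃ B' : Polynomial k, Polynomial.X * w = -B' ^ 2 := by
  by_cases hw : w = 0
  · exact ⟨0, by simp [hw]⟩
  obtain ⟨m, rfl⟩ := hp
  have hdvd : w ^ m ∣ B := by
    rw [← UniqueFactorizationMonoid.pow_dvd_pow_iff_dvd two_ne_zero]
    exact ⟨-(Polynomial.X * w), by linear_combination hB⟩
  obtain ⟨B', rfl⟩ := hdvd
  refine ⟨B', mul_left_cancel₀ (pow_ne_zero 2 (pow_ne_zero m hw)) ?_⟩
  linear_combination hB

theorem eq_monomial_of_forall_sq [Fintype K] {k : Type*} [Field k] [Algebra K k] [IsAlgClosed k]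
    {p : ℕ} [Fact p.Prime] [CharP K p] (hp : Odd p) {h : Polynomial K} (h0 : h.eval 0 = 0)
    (hq : h.natDegree ^ 2 < Fintype.card K)
    (hsq : ∀ c : K, ∃ B : Polynomial k, Polynomial.X *
      (Polynomial.taylor c h - Polynomial.C (h.eval c)).map (algebraMap K k) = -B ^ 2) :
    ∃ (j : ℕ) (a : K), h = Polynomial.C a * Polynomial.X ^ p ^ j := by
  induction hn : h.natDegree using Nat.strong_induction_on generalizing h with
  | _ n ih =>
  by_cases hd : h.derivative = 0
  · obtain ⟨g, rfl⟩ := exists_pow_eq_of_derivative_eq_zero (p := p) hd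
    have hp1 := (Fact.out : p.Prime).one_lt
    rw [Polynomial.natDegree_pow] at hn hq
    rw [Polynomial.eval_pow] at h0
    have hg0 := eq_zero_of_pow_eq_zero h0
    rcases Nat.eq_zero_or_pos g.natDegree with hg | hg
    · refine ⟨0, 0, ?_⟩
      rw [Polynomial.eq_C_of_natDegree_eq_zero hg, Polynomial.coeff_zero_eq_eval_zero, hg0]
      simp [(Fact.out : p.Prime).ne_zero]
    · obtain ⟨j, a, hja⟩ := ih g.natDegree (by nlinarith) hg0
        (lt_of_le_of_lt (Nat.pow_le_pow_left (by nlinarith) 2) hq) (fun c => by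
          obtain ⟨B, hB⟩ := hsq c
          refine exists_sq_of_mul_pow hp (B := B) ?_
          rw [← hB, ← Polynomial.map_pow, sub_pow_char, Polynomial.taylor_pow, Polynomial.eval_pow,
            Polynomial.C_pow]) rfl
      exact ⟨j + 1, a ^ p, by rw [hja, mul_pow, ← Polynomial.C_pow, ← pow_mul, pow_succ]⟩
  · obtain ⟨c, hc⟩ := exists_regular_value (k := k) hd hq
    obtain ⟨B, hB⟩ := hsq c
    have hle := natDegree_le_one_of_sq hB (by
      intro x hx
      have h1 (g : Polynomial K) : ((Polynomial.taylor c g).map (algebraMap K k)).eval x =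
          Polynomial.aeval (x + algebraMap K k c) g := by
        rw [Polynomial.eval_map_algebraMap, Polynomial.taylor_apply, Polynomial.aeval_comp]
        simp
      rw [Polynomial.map_sub, Polynomial.eval_sub, h1, Polynomial.map_C, Polynomial.eval_C,
        sub_eq_zero] at hx
      rw [Polynomial.derivative_map, Polynomial.derivative_sub, Polynomial.derivative_C, sub_zero,
        show (Polynomial.taylor c h).derivative = Polynomial.taylor c h.derivative by
          simp [Polynomial.taylor_apply, Polynomial.derivative_comp], h1]
      exact hc _ hx)
    rw [Polynomial.natDegree_map, Polynomial.natDegree_sub_C, Polynomial.natDegree_taylor] at hle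
    refine ⟨0, h.coeff 1, ?_⟩
    rw [Polynomial.eq_X_add_C_of_natDegree_le_one hle, Polynomial.coeff_zero_eq_eval_zero, h0]
    simp

end SquareDifferences

section ArtinSchreier

lemma natDegree_even_of_artinSchreier {k : Type*} [Field k] {b : k} {g B : Polynomial k}
    (hB : B ^ 2 + Polynomial.C b * B + g = 0) : Even g.natDegree := by
  have hg : g = -(B ^ 2 + Polynomial.C b * B) := by linear_combination hB
  rw [hg, Polynomial.natDegree_neg]
  rcases Nat.eq_zero_or_pos B.natDegree with h0 | h0
  · rw [Polynomial.eq_C_of_natDegree_eq_zero h0]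
    rw [← Polynomial.C_pow, ← Polynomial.C_mul, ← Polynomial.C_add, Polynomial.natDegree_C]
    exact Even.zero
  · rw [Polynomial.natDegree_add_eq_left_of_natDegree_lt, Polynomial.natDegree_pow]
    · exact even_two_mul _
    · rw [Polynomial.natDegree_pow]
      have := Polynomial.natDegree_C_mul_le b B
      omega

lemma coeff_taylor_one_natDegree_sub_one {K : Type*} [Field K] {h : Polynomial K}
    (hn : 1 ≤ h.natDegree) : (Polynomial.taylor 1 h).coeff (h.natDegree - 1) =
      h.coeff (h.natDegree - 1) + h.natDegree * h.leadingCoeff := by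
  obtain ⟨n, hn⟩ : ∃ n, h.natDegree = n + 1 := ⟨h.natDegree - 1, by omega⟩
  rw [hn, Nat.add_sub_cancel, Polynomial.taylor_coeff,
    Polynomial.eq_X_add_C_of_natDegree_le_one (p := Polynomial.hasseDeriv n h)
      ((Polynomial.natDegree_hasseDeriv_le _ _).trans (by omega))]
  simp [Polynomial.hasseDeriv_coeff, Polynomial.leadingCoeff, hn, add_comm 1 n]
  ring

theorem natDegree_le_one_of_artinSchreier {K k : Type*} [Field K] [Field k] [Algebra K k]
    [CharP K 2] {b : K} {h : Polynomial K}
    (hAS : ∀ c : K, ∃ B : Polynomial k, B ^ 2 + Polynomial.C (algebraMap K k b) * B +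
      (Polynomial.taylor c h).divX.map (algebraMap K k) = 0) : h.natDegree ≤ 1 := by
  by_contra! hn
  obtain ⟨B₀, h₀⟩ := hAS 0
  obtain ⟨B₁, h₁⟩ := hAS 1
  have heven := natDegree_even_of_artinSchreier h₀
  rw [Polynomial.natDegree_map, Polynomial.taylor_zero,
    Polynomial.natDegree_divX_eq_natDegree_tsub_one] at heven
  rw [Polynomial.taylor_zero] at h₀
  have htwo : (2 : Polynomial k) = 0 := by
    have h2 : (2 : K) = 0 := CharTwo.two_eq_zero
    rw [← map_ofNat (Polynomial.C.comp (algebraMap K k)) 2, h2, map_zero]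
  have hdiff : (B₁ - B₀) ^ 2 + Polynomial.C (algebraMap K k b) * (B₁ - B₀) +
      ((Polynomial.taylor 1 h).divX - h.divX).map (algebraMap K k) = 0 := by
    rw [Polynomial.map_sub]
    linear_combination h₁ - h₀ + (B₀ ^ 2 - B₀ * B₁) * htwo
  have heven' := natDegree_even_of_artinSchreier hdiff
  obtain ⟨n, hn'⟩ : ∃ n, h.natDegree = n + 2 := ⟨h.natDegree - 2, by omega⟩
  have hodd : Odd (h.natDegree) := by
    rw [hn'] at heven ⊢
    rw [show n + 2 - 1 = n + 1 by omega] at heven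
    exact heven.add_one
  have hcast : (h.natDegree : K) = 1 := by
    obtain ⟨m, hm⟩ := hodd
    rw [hm]
    push_cast
    rw [show (2 : K) = 0 from CharTwo.two_eq_zero]
    ring
  have hdeg : ((Polynomial.taylor 1 h).divX - h.divX).natDegree = n := by
    refine Polynomial.natDegree_eq_of_le_of_coeff_ne_zero ?_ ?_
    · rw [Polynomial.natDegree_le_iff_coeff_eq_zero]
      intro i hi
      rw [Polynomial.coeff_sub, Polynomial.coeff_divX, Polynomial.coeff_divX,
        coeff_taylor_of_natDegree_le (by omega), sub_self]
    · have := coeff_taylor_one_natDegree_sub_one (h := h) (by omega)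
      rw [show h.natDegree - 1 = n + 1 by omega, hcast] at this
      rw [Polynomial.coeff_sub, Polynomial.coeff_divX, Polynomial.coeff_divX, this,
        add_sub_cancel_left, one_mul, Polynomial.leadingCoeff_ne_zero]
      rintro rfl
      simp at hn
  rw [Polynomial.natDegree_map, hdeg] at heven'
  rw [hn'] at hodd
  exact Nat.not_even_iff_odd.2 hodd (heven'.add even_two)

end ArtinSchreier

section Classification

open Polynomial.Bivariate (equivMvPolynomial)

variable {K : Type*} [Field K]

lemma eval_equivMvPolynomial (x y : K) (P : Polynomial (Polynomial K)) :
    MvPolynomial.eval ![x, y] (equivMvPolynomial K P) = P.evalEval x y := by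
  have h : (MvPolynomial.eval ![x, y]).comp (equivMvPolynomial K).toRingEquiv.toRingHom =
      Polynomial.evalEvalRingHom x y := by
    ext <;> simp
  exact RingHom.congr_fun h P

variable [Fintype K] {p h : ℕ} [Fact p.Prime] [CharP K p]

lemma exists_eq_affine_of_ovoid (hcard : Fintype.card K = p ^ h) {d : ℕ} (hd : 1 ≤ d)
    (hq : 6 * (d + 1) ^ 4 < p ^ h) (hq' : 2 ≤ d → 8 * (d + 1) ^ 4 < p ^ h)
    {F : Polynomial (Polynomial K)} (hF : ∀ i j, (F.coeff j).coeff i ≠ 0 → i + j ≤ d)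
    (htop : ∃ i j, i + j = d ∧ (F.coeff j).coeff i ≠ 0)
    (hov : ∀ x₁ y₁ x₂ y₂ : K, (x₁, y₁) ≠ (x₂, y₂) →
      (y₁ - y₂) ^ 2 + (x₁ - x₂) * (F.evalEval x₁ y₁ - F.evalEval x₂ y₂) ≠ 0) :
    F = Polynomial.C (F.coeff 0) + Polynomial.C (Polynomial.C ((F.coeff 1).coeff 0)) *
      Polynomial.X := by
  have hJ := natDegree_le_two_of_ovoid hcard hF htop hq' hov
  have hpow := Nat.le_self_pow (n := 4) (by norm_num) (d + 1)
  have hcoeff (j : ℕ) : (F.coeff j).natDegree ≤ d := by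
    by_cases hz : F.coeff j = 0
    · simp [hz]
    · have := hF (F.coeff j).natDegree j (by simpa using hz)
      omega
  have heval (x y : K) : F.evalEval x y =
      (F.coeff 2).eval x * y ^ 2 + (F.coeff 1).eval x * y + (F.coeff 0).eval x := by
    rw [Polynomial.evalEval, Polynomial.eval_eq_sum_range' (p := F) (n := 3) (by omega),
      Finset.sum_range_succ, Finset.sum_range_succ, Finset.sum_range_one]
    simp only [Polynomial.eval_add, Polynomial.eval_mul, Polynomial.eval_pow, Polynomial.eval_C]
    ring
  have h2 : F.coeff 2 = 0 := by
    by_contra hne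
    have h0 := hcoeff 2
    have h1 := hcoeff 1
    exact false_of_quadratic (l := F.coeff 1) (h := F.coeff 0) hne (by omega) (by omega)
      (fun x₁ y₁ x₂ y₂ hne => by simpa only [heval] using hov x₁ y₁ x₂ y₂ hne)
  have h1 : F.coeff 1 = Polynomial.C ((F.coeff 1).coeff 0) := by
    have := hcoeff 1
    refine eq_C_of_affine (h := F.coeff 0) (by omega) fun x₁ y₁ x₂ y₂ hne => ?_
    simpa only [heval, h2, Polynomial.eval_zero, zero_mul, zero_add] using hov x₁ y₁ x₂ y₂ hne
  rw [← h1, add_comm]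
  refine Polynomial.eq_X_add_C_of_natDegree_le_one ?_
  rw [Polynomial.natDegree_le_iff_coeff_eq_zero]
  intro j hj
  rcases (show 2 ≤ j by omega).eq_or_lt with rfl | hj
  · exact h2
  · exact Polynomial.coeff_eq_zero_of_natDegree_lt (by omega)

theorem eq_monomial_of_ovoid (hcard : Fintype.card K = p ^ h) {d : ℕ} (hd : 1 ≤ d)
    (hq : 6 * (d + 1) ^ 4 < p ^ h) (hp : p ≠ 2) {g : Polynomial K} (hg : g.natDegree ≤ d)
    (hg0 : g.eval 0 = 0)
    (hov : ∀ x₁ y₁ x₂ y₂ : K, (x₁, y₁) ≠ (x₂, y₂) →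
      (y₁ - y₂) ^ 2 + (x₁ - x₂) * (g.eval x₁ - g.eval x₂) ≠ 0) :
    ∃ (j : ℕ) (a : K), g = Polynomial.C a * Polynomial.X ^ p ^ j := by
  refine eq_monomial_of_forall_sq (k := AlgebraicClosure K)
    ((Fact.out : p.Prime).odd_of_ne_two hp) hg0 ?_ fun c => ?_
  · rw [hcard]
    nlinarith [Nat.pow_le_pow_left hg 2, Nat.pow_le_pow_left (Nat.le_succ d) 2,
      Nat.pow_le_pow_right (Nat.succ_pos d) (show 2 ≤ 4 by norm_num)]
  · obtain ⟨B, hB⟩ := exists_root_of_double_cover (k := AlgebraicClosure K) (b := 0)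
      (g := Polynomial.X * (Polynomial.taylor c g - Polynomial.C (g.eval c))) hcard 
      (.inr ⟨hp, rfl⟩) hd
      (by
        refine Polynomial.natDegree_mul_le.trans ?_
        rw [Polynomial.natDegree_X, Polynomial.natDegree_sub_C, Polynomial.natDegree_taylor]
        omega)
      (by nlinarith [sq_nonneg ((d : ℤ) - 1), Nat.zero_le (d ^ 4), Nat.zero_le (d ^ 3)])
      (fun x y hx => by
        have := hov (x + c) y c 0 (fun heq => hx (by simpa using (Prod.mk.inj heq).1))
        simpa [Polynomial.taylor_eval] using this)
    refine ⟨B, ?_⟩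
    rw [Polynomial.map_mul, Polynomial.map_X, map_zero, Polynomial.C_0] at hB
    linear_combination hB

theorem eq_linear_of_ovoid_of_two (hcard : Fintype.card K = p ^ h) {d : ℕ} (hd : 1 ≤ d)
    (hq : 6 * (d + 1) ^ 4 < p ^ h) (hp : p = 2) {g : Polynomial K} (hg : g.natDegree ≤ d)
    (hg0 : g.eval 0 = 0) {b : K}
    (hov : ∀ x₁ y₁ x₂ y₂ : K, (x₁, y₁) ≠ (x₂, y₂) →
      (y₁ - y₂) ^ 2 + (x₁ - x₂) * ((b * y₁ + g.eval x₁) - (b * y₂ + g.eval x₂)) ≠ 0) :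
    g = Polynomial.C (g.coeff 1) * Polynomial.X := by
  subst hp
  have hb : b ≠ 0 := by
    rintro rfl
    obtain ⟨v, hv⟩ := exists_sq_eq (K := K) CharTwo.two_eq_zero (-(g.eval 1 - g.eval 0))
    refine hov 1 v 0 0 (fun heq => one_ne_zero (Prod.mk.inj heq).1) ?_
    linear_combination hv
  have hle : g.natDegree ≤ 1 := by
    refine natDegree_le_one_of_artinSchreier (k := AlgebraicClosure K) (b := b) fun c =>
      exists_root_of_double_cover hcard (.inl ⟨rfl, hb⟩) hd ?_ ?_ fun x y hx hxy => ?_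
    · rw [Polynomial.natDegree_divX_eq_natDegree_tsub_one, Polynomial.natDegree_taylor]
      omega
    · nlinarith [sq_nonneg ((d : ℤ) - 1), Nat.zero_le (d ^ 4), Nat.zero_le (d ^ 3)]
    · refine hov (x + c) (x * y) c 0 (fun heq => hx (by simpa using (Prod.mk.inj heq).1)) ?_
      have h1 := congrArg (Polynomial.eval x) (Polynomial.divX_mul_X_add (Polynomial.taylor c g))
      rw [Polynomial.eval_add, Polynomial.eval_mul, Polynomial.eval_X, Polynomial.eval_C,
        Polynomial.taylor_coeff_zero, Polynomial.taylor_eval] at h1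
      linear_combination x ^ 2 * hxy - x * h1
  conv_lhs => rw [Polynomial.eq_X_add_C_of_natDegree_le_one hle,
    Polynomial.coeff_zero_eq_eval_zero, hg0, Polynomial.C_0, add_zero]

end Classification

section Numeric

lemma six_mul_pow_lt {d q : ℕ} (h : (6.3 : ℝ) * ((d : ℝ) + 1) ^ ((13 : ℝ) / 3) < q) :
    6 * (d + 1) ^ 4 < q ∧ (2 ≤ d → 8 * (d + 1) ^ 4 < q) := by
  set r : ℝ := ((d : ℝ) + 1) ^ ((1 : ℝ) / 3) with hr
  have hd : (0 : ℝ) ≤ d := d.cast_nonneg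
  have hsplit : ((d : ℝ) + 1) ^ ((13 : ℝ) / 3) = ((d : ℝ) + 1) ^ 4 * r := by
    rw [hr, ← Real.rpow_natCast, ← Real.rpow_add (by positivity)]
    norm_num
  have hpos : (0 : ℝ) < ((d : ℝ) + 1) ^ 4 := by positivity
  have hr0 : 0 ≤ r := by positivity
  have hr3 : r ^ 3 = (d : ℝ) + 1 := by
    rw [hr, ← Real.rpow_natCast, ← Real.rpow_mul (by positivity)]
    norm_num
  rw [hsplit] at h
  constructor
  · have hr1 : 1 ≤ r := by
      refine le_of_pow_le_pow_left₀ three_ne_zero hr0 ?_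
      rw [hr3]
      linarith
    have : (6 : ℝ) * ((d : ℝ) + 1) ^ 4 < q := by nlinarith
    exact_mod_cast this
  · intro h2
    have h2' : (2 : ℝ) ≤ d := by exact_mod_cast h2
    have hr1 : 4 / 3 ≤ r := by
      refine le_of_pow_le_pow_left₀ three_ne_zero hr0 ?_
      rw [hr3]
      norm_num
      linarith
    have : (8 : ℝ) * ((d : ℝ) + 1) ^ 4 < q := by nlinarith
    exact_mod_cast this

end Numeric

end OvoidCurve

open OvoidCurve in
open Polynomial.Bivariate (equivMvPolynomial) in
/-- Main theorem: if `q > 6.3·(d+1)^{13/3}` and `O_4(f)` is an ovoid of `Q(4,q)`, then either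
`p = 2` and `f = a_{1,0}X + a_{0,1}Y`, or `p > 2` and `f = a_{p^j,0}·X^{p^j}`. -/
theorem statement5 (p h q : ℕ) (hp : p.Prime) (hh : 0 < h) (hq : q = p ^ h)
    (K : Type*) [Field K] [Fintype K] (hcard : Fintype.card K = q)
    (f : MvPolynomial (Fin 2) K) (d : ℕ) (hdeg : f.totalDegree = d) (hd : 1 ≤ d)
    (h00 : coeffXY f 0 0 = 0)
    (h01 : 2 < p → coeffXY f 0 1 = 0)
    (hbig : (6.3 : ℝ) * ((d : ℝ) + 1) ^ ((13 : ℝ) / 3) < (q : ℝ))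
    (hov : OvoidCondition f) :
    (p = 2 ∧ ∃ a b : K, f = C a * X 0 + C b * X 1) ∨
    (2 < p ∧ ∃ (j : ℕ) (a : K), f = C a * (X 0) ^ (p ^ j)) := by
  have : Fact p.Prime := ⟨hp⟩
  subst hq
  have : CharP K p := charP_of_card_eq_prime_pow hcard
  obtain ⟨hq6, hq8⟩ := six_mul_pow_lt hbig
  obtain ⟨F, rfl⟩ := (equivMvPolynomial K).surjective f
  rw [coeffXY, coeff_equivMvPolynomial] at h00
  simp only [coeffXY, coeff_equivMvPolynomial] at h01
  simp only [OvoidCondition, eval_equivMvPolynomial] at hov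
  have hF : ∀ i j, (F.coeff j).coeff i ≠ 0 → i + j ≤ d :=
    totalDegree_equivMvPolynomial_le_iff.1 hdeg.le
  have htop : ∃ i j, i + j = d ∧ (F.coeff j).coeff i ≠ 0 := by
    by_contra! hcon
    have : (equivMvPolynomial K F).totalDegree ≤ d - 1 :=
      totalDegree_equivMvPolynomial_le_iff.2 fun i j hij => by
        have h1 := hF i j hij
        have h2 : i + j ≠ d := fun heq => hij (hcon i j heq)
        omega
    omega
  have haff := exists_eq_affine_of_ovoid hcard hd hq6 hq8 hF htop hov
  set g := F.coeff 0
  set b := (F.coeff 1).coeff 0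
  have hg : g.natDegree ≤ d := by
    by_cases hz : g = 0
    · simp [hz]
    · exact hF g.natDegree 0 (Polynomial.leadingCoeff_ne_zero.2 hz)
  have hg0 : g.eval 0 = 0 := by rw [← Polynomial.coeff_zero_eq_eval_zero, h00]
  have heval (x y : K) : F.evalEval x y = b * y + g.eval x := by
    rw [haff]
    simp [Polynomial.evalEval_C, add_comm]
  simp only [heval] at hov
  rcases hp.two_le.eq_or_lt with h2 | h2
  · refine .inl ⟨h2.symm, g.coeff 1, b, ?_⟩
    rw [haff, eq_linear_of_ovoid_of_two hcard hd hq6 h2.symm hg hg0 hov]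
    simp
  · have hb : b = 0 := h01 h2
    simp only [hb, zero_mul, zero_add] at hov
    obtain ⟨j, a, hja⟩ := eq_monomial_of_ovoid hcard hd hq6 h2.ne' hg hg0 hov
    refine .inr ⟨h2, j, a, ?_⟩
    rw [haff, hja, hb]
    simp
end

section
/- Let K be a field, let d ≥ 1 be an integer and let c_0, c_1, …, c_d ∈ K. In the polynomial ring K[X_1,X_2,X_3,X_4], the polynomial X_1 − X_3 divides Σ_{i=0}^{d} c_i (X_1^i X_2^{d−i} − X_3^i X_4^{d−i}) if and only if c_i = 0 for all i ≠ d. -/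
open MvPolynomial

/-- In `K[X₁,X₂,X₃,X₄]` (variables `X 0, X 1, X 2, X 3` standing for `X₁, X₂, X₃, X₄`),
the polynomial `X₁ − X₃` divides `Σ_{i=0}^{d} c_i (X₁^i X₂^{d−i} − X₃^i X₄^{d−i})`
if and only if `c_i = 0` for all `i ≠ d` (with `0 ≤ i ≤ d`). -/
theorem statement6 (K : Type*) [Field K] (d : ℕ) (hd : 1 ≤ d) (c : ℕ → K) :
    ((X 0 - X 2 : MvPolynomial (Fin 4) K) ∣
        ∑ i ∈ Finset.range (d + 1),
          C (c i) * ((X 0) ^ i * (X 1) ^ (d - i) - (X 2) ^ i * (X 3) ^ (d - i)))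
      ↔ ∀ i < d, c i = 0 := by
  constructor
  · rintro ⟨q, hq⟩ i hi
    -- Specialise `X₁, X₃ ↦ T`, `X₂ ↦ 1`, `X₄ ↦ 0` and compare coefficients of `T ^ i`.
    have h := congrArg (fun p =>
      (aeval (![Polynomial.X, 1, Polynomial.X, 0] : Fin 4 → Polynomial K) p).coeff i) hq
    simp only [map_sum, map_mul, map_sub, map_pow, algHom_C, aeval_X] at h
    simp only [Matrix.cons_val, one_pow, mul_one, sub_self, zero_mul, Polynomial.coeff_zero,
      Polynomial.algebraMap_eq, Polynomial.finsetSum_coeff, Polynomial.coeff_C_mul,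
      Polynomial.coeff_sub, Polynomial.coeff_X_pow] at h
    rw [Finset.sum_eq_single_of_mem i (by simp; omega)] at h
    · simpa [zero_pow (Nat.sub_ne_zero_of_lt hi)] using h
    · intro j _ hj
      rcases eq_or_ne (d - j) 0 with h0 | h0
      · simp [h0]
      · simp [zero_pow h0, hj.symm]
  · intro h
    rw [Finset.sum_range_succ, Finset.sum_eq_zero fun i hi => by
      rw [h i (Finset.mem_range.mp hi), C_0, zero_mul]]
    simpa using (sub_dvd_pow_sub_pow (X 0) (X 2) d).mul_left (C (c d))
end

section
/- Let K be an algebraically closed field of odd characteristic p, let d = k·p^j with k > 1 and p not dividing k, and let c ∈ K be nonzero. Then the polynomial c·(X_1 − X_3)·(X_1^d − X_3^d) is not a square in K[X_1,X_3]; that is, there is no g ∈ K[X_1,X_3] with c·(X_1 − X_3)(X_1^d − X_3^d) = g^2. -/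
open MvPolynomial

/-- At a `k`-th root of unity `ζ ≠ 1`, with `k` invertible, the root multiplicity of
`c * (X - 1) * (X ^ k - 1) ^ q` is `q`. -/
theorem count_roots_C_mul_X_sub_one_mul_X_pow_sub_one_pow {K : Type*} [Field K] [DecidableEq K]
    {k : ℕ} (hk : (k : K) ≠ 0) (q : ℕ) {c : K} (hc : c ≠ 0) {ζ : K} (hζ : ζ ^ k = 1)
    (hζ1 : ζ ≠ 1) :
    (Polynomial.C c * (Polynomial.X - 1) * (Polynomial.X ^ k - 1) ^ q).roots.count ζ = q := by
  have hsep : (Polynomial.X ^ k - 1 : Polynomial K).Separable :=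
    Polynomial.X_pow_sub_one_separable_iff.mpr hk
  have hX : (Polynomial.X - 1 : Polynomial K) ≠ 0 := by
    simpa using Polynomial.X_sub_C_ne_zero (1 : K)
  have hCX : Polynomial.C c * (Polynomial.X - 1) ≠ 0 :=
    mul_ne_zero (Polynomial.C_ne_zero.mpr hc) hX
  have hone : (Polynomial.X ^ k - 1 : Polynomial K).roots.count ζ = 1 :=
    Multiset.count_eq_one_of_mem (Polynomial.nodup_roots hsep)
      ((Polynomial.mem_roots hsep.ne_zero).mpr (by simp [hζ]))
  have hroots : (Polynomial.X - 1 : Polynomial K).roots = {1} := by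
    simpa using Polynomial.roots_X_sub_C (1 : K)
  rw [Polynomial.roots_mul (mul_ne_zero hCX (pow_ne_zero q hsep.ne_zero)),
    Polynomial.roots_C_mul _ hc, Polynomial.roots_pow, Multiset.count_add, Multiset.count_nsmul,
    hone, hroots, Multiset.count_singleton, if_neg hζ1, zero_add, mul_one]

/-- Over an algebraically closed field of odd characteristic `p`, for `d = k·p^j` with `k > 1`,
`p ∤ k`, and `c ≠ 0`, the polynomial `c·(X₁ − X₃)·(X₁^d − X₃^d)` is not a square in `K[X₁,X₃]`.
(Variables `X 0, X 1` stand for `X₁, X₃`.) -/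
theorem statement8 (K : Type*) [Field K] [IsAlgClosed K] (p : ℕ) (hp : p.Prime) (hodd : p ≠ 2)
    [CharP K p] (k j : ℕ) (hk : 1 < k) (hpk : ¬ p ∣ k) (c : K) (hc : c ≠ 0) :
    ¬ ∃ g : MvPolynomial (Fin 2) K,
        C c * (X 0 - X 1) * ((X 0) ^ (k * p ^ j) - (X 1) ^ (k * p ^ j)) = g ^ 2 := by
  classical
  rintro ⟨g, hg⟩
  have : Fact p.Prime := ⟨hp⟩
  have hkK : (k : K) ≠ 0 := fun h => hpk ((CharP.cast_eq_zero_iff K p k).mp h)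
  have : NeZero (k : K) := ⟨hkK⟩
  obtain ⟨ζ, hζ⟩ := HasEnoughRootsOfUnity.exists_primitiveRoot K k
  -- Dehomogenize by setting the second variable to `1`.
  have hpoly := congrArg (aeval ![(Polynomial.X : Polynomial K), 1]) hg
  simp only [map_mul, map_sub, map_pow, aeval_X, aeval_C, Matrix.cons_val_zero,
    Matrix.cons_val_one, one_pow, Polynomial.algebraMap_eq] at hpoly
  have hfrob : (Polynomial.X ^ (k * p ^ j) - 1 : Polynomial K) =
      (Polynomial.X ^ k - 1) ^ p ^ j := by
    rw [sub_pow_char_pow, one_pow, pow_mul]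
  have hcount := count_roots_C_mul_X_sub_one_mul_X_pow_sub_one_pow hkK (p ^ j) hc hζ.pow_eq_one
    (hζ.ne_one hk)
  rw [← hfrob, hpoly, Polynomial.roots_pow, Multiset.count_nsmul] at hcount
  have hq : Odd (p ^ j) := (hp.odd_of_ne_two hodd).pow
  exact Nat.not_even_iff_odd.mpr hq (hcount ▸ even_two_mul _)
end

section
/- Let K be an algebraically closed field of odd characteristic p, let d = p^j for some integer j ≥ 0, and let a_1, …, a_d ∈ K with a_d ≠ 0. If the polynomial (X_1 − X_3)·Σ_{i=1}^{d} a_i (X_1^i − X_3^i) is a square in K[X_1,X_3] (i.e., equals g^2 for some g ∈ K[X_1,X_3]), then a_i = 0 for all i with 0 < i < d. -/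
open MvPolynomial

/-- In characteristic `p`, the multiplicity of `1` as a root of `X ^ m - 1`
is at most the `p`-part of `m`. -/
theorem exists_prime_pow_dvd_of_pow_dvd_X_pow_sub_one {K : Type*} [Field K] {p : ℕ}
    (hp : p.Prime) [CharP K p] {m n : ℕ} (hm : m ≠ 0)
    (h : (Polynomial.X - 1 : Polynomial K) ^ n ∣ Polynomial.X ^ m - 1) :
    ∃ v : ℕ, p ^ v ∣ m ∧ n ≤ p ^ v := by
  have : Fact p.Prime := ⟨hp⟩
  obtain ⟨v, m', hpm', rfl⟩ := Nat.exists_eq_pow_mul_and_not_dvd hm p hp.ne_one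
  refine ⟨v, dvd_mul_right _ _, ?_⟩
  by_contra! hlt
  have hX : (Polynomial.X - 1 : Polynomial K) ≠ 0 := by
    simpa using Polynomial.X_sub_C_ne_zero (1 : K)
  have hfac : (Polynomial.X ^ (p ^ v * m') - 1 : Polynomial K) =
      (Polynomial.X - 1) ^ p ^ v * (∑ i ∈ Finset.range m', Polynomial.X ^ i) ^ p ^ v := by
    rw [← mul_pow, mul_geom_sum, sub_pow_char_pow, one_pow, ← pow_mul, mul_comm]
  have hdvd := (pow_dvd_pow (Polynomial.X - 1 : Polynomial K) (Nat.succ_le_of_lt hlt)).trans h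
  rw [hfac, pow_succ, mul_dvd_mul_iff_left (pow_ne_zero _ hX)] at hdvd
  have heval := Polynomial.eval_dvd (x := 1) hdvd
  simp only [Polynomial.eval_sub, Polynomial.eval_X, Polynomial.eval_one, sub_self,
    zero_dvd_iff, Polynomial.eval_pow, Polynomial.eval_finsetSum, one_pow, Finset.sum_const,
    Finset.card_range, nsmul_eq_mul, mul_one] at heval
  exact hpm' ((CharP.cast_eq_zero_iff K p m').1 (eq_zero_of_pow_eq_zero heval))

/-- The second highest coefficient of a square. -/
theorem coeff_sq_natDegree_add_natDegree_eraseLead {R : Type*} [CommRing R] (G : Polynomial R)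
    (hlt : G.eraseLead.natDegree < G.natDegree) :
    (G ^ 2).coeff (G.natDegree + G.eraseLead.natDegree) =
      2 * G.leadingCoeff * G.eraseLead.leadingCoeff := by
  have hG : G ^ 2 = Polynomial.monomial (2 * G.natDegree) (G.leadingCoeff ^ 2) +
      Polynomial.C 2 * (Polynomial.monomial G.natDegree G.leadingCoeff * G.eraseLead) +
      G.eraseLead ^ 2 := by
    conv_lhs => rw [← G.eraseLead_add_monomial_natDegree_leadingCoeff]
    rw [mul_comm 2, ← Polynomial.monomial_pow, map_ofNat]
    ring
  have hsmall : (G.eraseLead ^ 2).coeff (G.natDegree + G.eraseLead.natDegree) = 0 := by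
    apply Polynomial.coeff_eq_zero_of_natDegree_lt
    have := Polynomial.natDegree_pow_le (p := G.eraseLead) (n := 2)
    omega
  rw [hG, Polynomial.coeff_add, Polynomial.coeff_add, hsmall, Polynomial.coeff_C_mul,
    add_comm G.natDegree, Polynomial.coeff_monomial_mul, Polynomial.coeff_monomial,
    if_neg (by omega), Polynomial.leadingCoeff]
  simp only [Polynomial.leadingCoeff]
  ring

/-- Over an algebraically closed field of odd characteristic `p`, with `d = p^j` and
`a_d ≠ 0`: if `(X₁ − X₃)·Σ_{i=1}^{d} a_i (X₁^i − X₃^i)` is a square in `K[X₁,X₃]`, then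
`a_i = 0` for all `0 < i < d`. (Variables `X 0, X 1` stand for `X₁, X₃`.) -/
theorem statement9 (K : Type*) [Field K] [IsAlgClosed K] (p : ℕ) (hp : p.Prime) (hodd : p ≠ 2)
    [CharP K p] (j : ℕ) (a : ℕ → K) (had : a (p ^ j) ≠ 0)
    (hsq : ∃ g : MvPolynomial (Fin 2) K,
        (X 0 - X 1) * ∑ i ∈ Finset.Icc 1 (p ^ j), C (a i) * ((X 0) ^ i - (X 1) ^ i) = g ^ 2) :
    ∀ i : ℕ, 0 < i → i < p ^ j → a i = 0 := by
  have : Fact p.Prime := ⟨hp⟩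
  obtain ⟨g, hg⟩ := hsq
  -- Dehomogenize: `X₁ ↦ X * T`, `X₃ ↦ T` in `K[X][T]`.
  let φ : MvPolynomial (Fin 2) K →ₐ[K] Polynomial (Polynomial K) :=
    aeval ![Polynomial.C Polynomial.X * Polynomial.X, Polynomial.X]
  let u : Polynomial K := Polynomial.X - 1
  let c : ℕ → Polynomial K := fun i => Polynomial.C (a i) * (u * (Polynomial.X ^ i - 1))
  obtain ⟨G, hG⟩ : ∃ G, G = φ g := ⟨_, rfl⟩
  have hsum : ∑ i ∈ Finset.Icc 1 (p ^ j), Polynomial.monomial (i + 1) (c i) = G ^ 2 := by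
    rw [hG, ← map_pow, ← hg, map_mul, map_sum, Finset.mul_sum]
    refine Finset.sum_congr rfl fun i _ => ?_
    simp only [φ, c, u, map_mul, map_sub, map_pow, aeval_X, algHom_C, Matrix.cons_val_zero,
      Matrix.cons_val_one, ← Polynomial.C_mul_X_pow_eq_monomial, map_one,
      Polynomial.algebraMap_apply, Algebra.algebraMap_self, RingHom.id_apply]
    ring
  have hu0 : u ≠ 0 := by simpa [u] using Polynomial.X_sub_C_ne_zero (1 : K)
  have huprime : Prime u := by simpa [u] using Polynomial.prime_X_sub_C (1 : K)
  have hc0 : ∀ i, 0 < i → c i = 0 → a i = 0 := by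
    intro i hi h
    have hXi : (Polynomial.X ^ i - 1 : Polynomial K) ≠ 0 := by
      simpa using Polynomial.X_pow_sub_C_ne_zero hi (1 : K)
    simpa [c, hu0, hXi] using h
  have hcoeff : ∀ k, (G ^ 2).coeff k =
      ∑ i ∈ Finset.Icc 1 (p ^ j), if i + 1 = k then c i else 0 := by
    intro k
    simp only [← hsum, Polynomial.finsetSum_coeff, Polynomial.coeff_monomial]
  have hcoeff_succ : ∀ i, 0 < i → i ≤ p ^ j → (G ^ 2).coeff (i + 1) = c i := by
    intro i h1 h2
    rw [hcoeff, Finset.sum_eq_single i]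
    · simp
    · intro b _ hb
      exact if_neg (by omega)
    · intro h
      exact absurd (Finset.mem_Icc.2 ⟨h1, h2⟩) h
  have hdpos : 0 < p ^ j := pow_pos hp.pos j
  have hdeg : (G ^ 2).natDegree = p ^ j + 1 := by
    apply Polynomial.natDegree_eq_of_le_of_coeff_ne_zero
    · rw [Polynomial.natDegree_le_iff_coeff_eq_zero]
      intro k hk
      rw [hcoeff]
      refine Finset.sum_eq_zero fun i hi => if_neg ?_
      have := (Finset.mem_Icc.1 hi).2
      omega
    · rw [hcoeff_succ _ hdpos le_rfl]
      exact fun h => had (hc0 _ hdpos h)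
  have hn : 2 * G.natDegree = p ^ j + 1 := by rw [← hdeg, Polynomial.natDegree_pow]
  by_cases hE : G.eraseLead = 0
  · intro i hi hid
    apply hc0 i hi
    rw [← hcoeff_succ i hi hid.le, ← G.eraseLead_add_monomial_natDegree_leadingCoeff, hE,
      zero_add, Polynomial.monomial_pow, Polynomial.coeff_monomial, if_neg (by omega)]
  have hlt := G.eraseLead_natDegree_lt_or_eraseLead_eq_zero.resolve_right hE
  exfalso
  have hG0 : G ≠ 0 := by rintro rfl; simp at hE
  have hsecond := coeff_sq_natDegree_add_natDegree_eraseLead G hlt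
  have h2 : (2 : Polynomial K) ≠ 0 := by
    have h2K : (2 : K) ≠ 0 := Ring.two_ne_zero (by rwa [ringChar.eq K p])
    exact Polynomial.C_ne_zero.2 h2K
  have hne : (G ^ 2).coeff (G.natDegree + G.eraseLead.natDegree) ≠ 0 := by
    rw [hsecond]
    exact mul_ne_zero (mul_ne_zero h2 (Polynomial.leadingCoeff_ne_zero.2 hG0))
      (Polynomial.leadingCoeff_ne_zero.2 hE)
  obtain ⟨m, hm0, hmd, hm⟩ : ∃ m, 0 < m ∧ m ≤ p ^ j ∧
      m + 1 = G.natDegree + G.eraseLead.natDegree := by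
    rw [hcoeff] at hne
    obtain ⟨m, hmem, hm⟩ := Finset.exists_ne_zero_of_sum_ne_zero hne
    have := Finset.mem_Icc.1 hmem
    exact ⟨m, this.1, this.2, by_contra fun h => hm (if_neg h)⟩
  rw [← hm, hcoeff_succ m hm0 hmd] at hsecond hne
  have ham : a m ≠ 0 := by
    intro h
    simp [c, h] at hne
  -- The leading coefficient is divisible by a high power of `u`, all coefficients by `u`.
  have hlead : u ^ G.natDegree ∣ G.leadingCoeff := by
    rw [← IsIntegrallyClosed.pow_dvd_pow_iff two_ne_zero, ← Polynomial.leadingCoeff_pow, Polynomial.leadingCoeff,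
      hdeg, hcoeff_succ _ hdpos le_rfl, ← pow_mul, mul_comm, hn]
    have hfrob : (Polynomial.X ^ p ^ j - 1 : Polynomial K) = u ^ p ^ j := by
      rw [sub_pow_char_pow, one_pow]
    simp only [c, hfrob, ← pow_succ']
    exact dvd_mul_left _ _
  have huG : Polynomial.C u ∣ G := by
    refine (Polynomial.prime_C_iff.2 huprime).dvd_of_dvd_pow (n := 2) ?_
    rw [← hsum]
    refine Finset.dvd_sum fun i _ => ?_
    rw [← Polynomial.C_mul_X_pow_eq_monomial]
    exact ((map_dvd Polynomial.C
      ((dvd_mul_right u _).mul_left (Polynomial.C (a i)))).mul_right _)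
  have huE : u ∣ G.eraseLead.leadingCoeff := by
    rw [Polynomial.leadingCoeff, Polynomial.eraseLead_coeff_of_ne _ hlt.ne]
    exact Polynomial.C_dvd_iff_dvd_coeff _ _ |>.1 huG _
  have hdvd : u ^ G.natDegree ∣ Polynomial.X ^ m - 1 := by
    have h1 : u ^ G.natDegree * u ∣ c m := by
      rw [hsecond]
      exact mul_dvd_mul (hlead.mul_left 2) huE
    have hunit : IsUnit (Polynomial.C (a m)) := Polynomial.isUnit_C.2 ham.isUnit
    simp only [c] at h1
    rw [hunit.dvd_mul_left, mul_comm, mul_dvd_mul_iff_left hu0] at h1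
    exact h1
  obtain ⟨v, hvm, hnv⟩ := exists_prime_pow_dvd_of_pow_dvd_X_pow_sub_one hp hm0.ne' hdvd
  have hvj : p ^ v < p ^ j := (Nat.le_of_dvd hm0 hvm).trans_lt (by omega)
  have hv : p ^ (v + 1) ≤ p ^ j :=
    Nat.pow_le_pow_right hp.pos ((Nat.pow_lt_pow_iff_right hp.one_lt).1 hvj)
  have hp3 : 3 ≤ p := by have := hp.two_le; omega
  have : p ^ v * 3 ≤ p ^ v * p := Nat.mul_le_mul_left _ hp3
  rw [pow_succ] at hv
  omega
end

section
/- Let K be an algebraically closed field of characteristic 2, let a ∈ K be nonzero, let d > 1 be an integer, and let c_1, …, c_d ∈ K with c_d ≠ 0. Then there exist no polynomials Z_1, Z_2 ∈ K[X_1,X_3], not both zero, such that a^2(X_1 + X_3)·Z_1^2 + a^2(X_1 + X_3)·Z_1·Z_2 + Z_2^2·Σ_{i=1}^{d} c_i (X_1^i + X_3^i) = 0. (Consequently the Artin–Schreier surface Z^2 + Z + (Σ_{i=1}^{d} c_i(X_1^i + X_3^i))/(a^2(X_1 + X_3)) = 0 is absolutely irreducible.) -/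
open MvPolynomial

/-- The homogenising map sending each variable `Xᵢ` to `Xᵢ · T`. -/
noncomputable def scaleVars (σ K : Type*) [CommRing K] :
    MvPolynomial σ K →ₐ[K] Polynomial (MvPolynomial σ K) :=
  aeval fun i => Polynomial.C (X i) * Polynomial.X

theorem scaleVars_C {σ K : Type*} [CommRing K] (r : K) :
    scaleVars σ K (C r) = Polynomial.C (C r) := by
  rw [scaleVars, aeval_C]
  rfl

theorem scaleVars_injective (σ K : Type*) [CommRing K] :
    Function.Injective (scaleVars σ K) := by
  have h : ((Polynomial.aeval (R := MvPolynomial σ K) 1).restrictScalars K).comp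
      (scaleVars σ K) = AlgHom.id K _ := by
    ext i : 1
    simp [scaleVars]
  exact Function.LeftInverse.injective (g := (Polynomial.aeval (R := MvPolynomial σ K) 1))
    fun p => DFunLike.congr_fun h p

theorem pderiv_sq_eq_zero {σ K : Type*} [CommRing K] [CharP K 2] (i : σ)
    (p : MvPolynomial σ K) : pderiv i (p ^ 2) = 0 := by
  rw [Derivation.leibniz_pow, ← Nat.cast_smul_eq_nsmul (MvPolynomial σ K),
    CharP.cast_eq_zero (MvPolynomial σ K) 2, zero_smul]

theorem X_pow_add_X_pow_ne_zero {K : Type*} [Field K] {d : ℕ} (hd : d ≠ 0) :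
    (X 0 ^ d + X 1 ^ d : MvPolynomial (Fin 2) K) ≠ 0 := fun h => by
  simpa [hd] using congrArg (eval ![0, 1]) h

/-- In characteristic 2, for `d > 1`, the ratio of `X₁ ^ d + X₃ ^ d` to `X₁ + X₃` is not a
constant times the square of a rational function. -/
theorem eq_zero_of_mul_sq_add_sq_mul_eq_zero {K : Type*} [Field K] [CharP K 2] {a b : K}
    (hb : b ≠ 0) {d : ℕ} (hd : 1 < d) {p q : MvPolynomial (Fin 2) K}
    (h : C a * (X 0 + X 1) * p ^ 2 + q ^ 2 * (C b * (X 0 ^ d + X 1 ^ d)) = 0) : q = 0 := by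
  by_contra hq
  have hder : C a * p ^ 2 + q ^ 2 * (C b * ((d : MvPolynomial (Fin 2) K) * X 0 ^ (d - 1))) = 0 := by
    have := congrArg (pderiv (0 : Fin 2)) h
    rw [map_add, Derivation.leibniz, Derivation.leibniz _ (q ^ 2), pderiv_sq_eq_zero,
      pderiv_sq_eq_zero] at this
    simpa [Derivation.leibniz, Derivation.leibniz_pow, pderiv_X, mul_comm] using this
  have hmul : (q ^ 2 * C b) *
      (X 0 ^ d + X 1 ^ d - (X 0 + X 1) * ((d : MvPolynomial (Fin 2) K) * X 0 ^ (d - 1))) = 0 := by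
    linear_combination h - (X 0 + X 1) * hder
  have hb' : (C b : MvPolynomial (Fin 2) K) ≠ 0 := by simpa using hb
  have hz := (mul_eq_zero.mp hmul).resolve_left (mul_ne_zero (pow_ne_zero 2 hq) hb')
  have := congrArg (eval ![0, 1]) hz
  simp [show d ≠ 0 by omega, show d - 1 ≠ 0 by omega] at this

theorem scaleVars_sum {K : Type*} [CommRing K] (c : ℕ → K) (d : ℕ) :
    scaleVars (Fin 2) K (∑ i ∈ Finset.Icc 1 d, C (c i) * (X 0 ^ i + X 1 ^ i)) =
      ∑ i ∈ Finset.Icc 1 d,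
        Polynomial.C (C (c i) * (X 0 ^ i + X 1 ^ i)) * Polynomial.X ^ i := by
  rw [map_sum]
  refine Finset.sum_congr rfl fun i _ => ?_
  rw [map_mul, scaleVars_C]
  simp [scaleVars, mul_pow]
  ring

theorem leadingCoeff_relation {R : Type*} [CommRing R] [IsDomain R] {l : R} (hl : l ≠ 0)
    {P Q S : Polynomial R} (hQ : Q ≠ 0) (hS : 1 < S.natDegree)
    (h : Polynomial.C l * Polynomial.X * P ^ 2 + Polynomial.C l * Polynomial.X * P * Q
      + Q ^ 2 * S = 0) :
    l * P.leadingCoeff ^ 2 + Q.leadingCoeff ^ 2 * S.leadingCoeff = 0 := by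
  have hS0 : S ≠ 0 := Polynomial.ne_zero_of_natDegree_gt hS
  have hP : P ≠ 0 := by
    rintro rfl
    simp [hQ, hS0] at h
  have hlX : Polynomial.C l * Polynomial.X ≠ 0 :=
    mul_ne_zero (by simpa using hl) Polynomial.X_ne_zero
  have hlXdeg : (Polynomial.C l * Polynomial.X).natDegree = 1 := Polynomial.natDegree_C_mul_X l hl
  have hA : (Polynomial.C l * Polynomial.X * P ^ 2).natDegree = 1 + 2 * P.natDegree := by
    rw [Polynomial.natDegree_mul hlX (pow_ne_zero 2 hP), hlXdeg, Polynomial.natDegree_pow]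
  have hB : (Polynomial.C l * Polynomial.X * P * Q).natDegree
      = 1 + P.natDegree + Q.natDegree := by
    rw [Polynomial.natDegree_mul (mul_ne_zero hlX hP) hQ, Polynomial.natDegree_mul hlX hP, hlXdeg]
  have hD : (Q ^ 2 * S).natDegree = 2 * Q.natDegree + S.natDegree := by
    rw [Polynomial.natDegree_mul (pow_ne_zero 2 hQ) hS0, Polynomial.natDegree_pow]
  have hAl : (Polynomial.C l * Polynomial.X * P ^ 2).coeff (1 + 2 * P.natDegree)
      = l * P.leadingCoeff ^ 2 := by
    rw [← hA, Polynomial.coeff_natDegree]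
    simp
  have hDl : (Q ^ 2 * S).coeff (2 * Q.natDegree + S.natDegree)
      = Q.leadingCoeff ^ 2 * S.leadingCoeff := by
    rw [← hD, Polynomial.coeff_natDegree]
    simp
  have hcoeff (n : ℕ) := congrArg (Polynomial.coeff · n) h
  simp only [Polynomial.coeff_add, Polynomial.coeff_zero] at hcoeff
  rcases lt_trichotomy (1 + 2 * P.natDegree) (2 * Q.natDegree + S.natDegree) with hlt | heq | hgt
  · have := hcoeff (2 * Q.natDegree + S.natDegree)
    rw [Polynomial.coeff_eq_zero_of_natDegree_lt (hA ▸ hlt),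
      Polynomial.coeff_eq_zero_of_natDegree_lt (by omega), hDl] at this
    simp only [zero_add] at this
    exact absurd this (mul_ne_zero (pow_ne_zero 2 (by simpa using hQ)) (by simpa using hS0))
  · have := hcoeff (2 * Q.natDegree + S.natDegree)
    rwa [← heq, hAl, Polynomial.coeff_eq_zero_of_natDegree_lt (by omega), heq, hDl,
      add_zero] at this
  · have := hcoeff (1 + 2 * P.natDegree)
    rw [hAl, Polynomial.coeff_eq_zero_of_natDegree_lt (by omega),
      Polynomial.coeff_eq_zero_of_natDegree_lt (hD ▸ hgt), add_zero, add_zero] at this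
    exact absurd this (mul_ne_zero hl (pow_ne_zero 2 (by simpa using hP)))

/-- Over an algebraically closed field of characteristic 2, with `a ≠ 0`, `d > 1` and `c_d ≠ 0`:
there are no polynomials `Z₁, Z₂ ∈ K[X₁,X₃]`, not both zero, with
`a²(X₁ + X₃)·Z₁² + a²(X₁ + X₃)·Z₁·Z₂ + Z₂²·Σ_{i=1}^{d} c_i (X₁^i + X₃^i) = 0`.
(Variables `X 0, X 1` stand for `X₁, X₃`.) -/
theorem statement10 (K : Type*) [Field K] [IsAlgClosed K] [CharP K 2] (a : K) (ha : a ≠ 0)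
    (d : ℕ) (hd : 1 < d) (c : ℕ → K) (hcd : c d ≠ 0) :
    ¬ ∃ Z₁ Z₂ : MvPolynomial (Fin 2) K, ¬ (Z₁ = 0 ∧ Z₂ = 0) ∧
        C (a ^ 2) * (X 0 + X 1) * Z₁ ^ 2 + C (a ^ 2) * (X 0 + X 1) * Z₁ * Z₂
          + Z₂ ^ 2 * ∑ i ∈ Finset.Icc 1 d, C (c i) * ((X 0) ^ i + (X 1) ^ i) = 0 := by
  rintro ⟨Z₁, Z₂, hne, h⟩
  have hl : (C (a ^ 2) * (X 0 + X 1) : MvPolynomial (Fin 2) K) ≠ 0 :=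
    mul_ne_zero (by simpa using ha) (by simpa using X_pow_add_X_pow_ne_zero (K := K) one_ne_zero)
  have hf : (C (c d) * (X 0 ^ d + X 1 ^ d) : MvPolynomial (Fin 2) K) ≠ 0 :=
    mul_ne_zero (by simpa using hcd) (X_pow_add_X_pow_ne_zero (by omega))
  have hZ₂ : Z₂ ≠ 0 := by
    rintro rfl
    rw [mul_zero, zero_pow two_ne_zero, zero_mul, add_zero, add_zero] at h
    exact hne ⟨pow_eq_zero_iff two_ne_zero |>.mp ((mul_eq_zero.mp h).resolve_left hl), rfl⟩
  replace h := congrArg (scaleVars (Fin 2) K) h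
  have hL : scaleVars (Fin 2) K (C (a ^ 2) * (X 0 + X 1)) =
      Polynomial.C (C (a ^ 2) * (X 0 + X 1)) * Polynomial.X := by
    rw [map_mul, scaleVars_C]
    simp [scaleVars]
    ring
  rw [map_add, map_add, map_mul _ _ (Z₁ ^ 2), map_mul _ _ Z₂, map_mul _ _ Z₁, map_mul _ (Z₂ ^ 2),
    map_zero, hL, scaleVars_sum, map_pow _ Z₁, map_pow _ Z₂] at h
  have hQ : scaleVars (Fin 2) K Z₂ ≠ 0 :=
    (map_ne_zero_iff _ (scaleVars_injective _ _)).mpr hZ₂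
  generalize scaleVars (Fin 2) K Z₁ = P at h
  generalize scaleVars (Fin 2) K Z₂ = Q at h hQ
  set S := ∑ i ∈ Finset.Icc 1 d,
    Polynomial.C (C (c i) * (X 0 ^ i + X 1 ^ i) : MvPolynomial (Fin 2) K) * Polynomial.X ^ i
    with hS
  have hSd : S.coeff d = C (c d) * (X 0 ^ d + X 1 ^ d) := by
    rw [hS, Polynomial.finsetSum_coeff, Finset.sum_eq_single d]
    · rw [Polynomial.coeff_C_mul_X_pow, if_pos rfl]
    · intro i _ hi
      rw [Polynomial.coeff_C_mul_X_pow, if_neg (Ne.symm hi)]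
    · intro hd'
      exact absurd (Finset.mem_Icc.mpr ⟨hd.le, le_rfl⟩) hd'
  have hSdeg : S.natDegree = d := by
    refine le_antisymm (Polynomial.natDegree_sum_le_of_forall_le _ _ fun i hi => ?_)
      (Polynomial.le_natDegree_of_ne_zero (hSd ▸ hf))
    exact (Polynomial.natDegree_C_mul_X_pow_le _ _).trans (Finset.mem_Icc.mp hi).2
  have hSl : S.leadingCoeff = C (c d) * (X 0 ^ d + X 1 ^ d) := by
    rw [Polynomial.leadingCoeff, hSdeg, hSd]
  have hlead := leadingCoeff_relation hl hQ (by omega) h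
  rw [hSl] at hlead
  exact hQ (Polynomial.leadingCoeff_eq_zero.mp
    (eq_zero_of_mul_sq_add_sq_mul_eq_zero hcd hd hlead))
end

section
/- Let q = p^h be a prime power and let a_0, …, a_{h−1}, b_0, …, b_{h−1} ∈ F_q. Then the following are equivalent: (1) the only solution (L,M) ∈ F_q^2 of L^2 + Σ_{i=0}^{h−1} a_i M^{p^i+1} + M·Σ_{j=0}^{h−1} b_j L^{p^j} = 0 is L = M = 0; (2) for every (ℓ_0, m_0) ∈ F_q^2 with (ℓ_0,m_0) ≠ (0,0), the only x ∈ F_q satisfying Σ_{j=0}^{h−1} b_j m_0 ℓ_0^{p^j} x^{p^j} + Σ_{i=0}^{h−1} a_i m_0^{p^i+1} x^{p^i} + ℓ_0^2 x = 0 is x = 0. -/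
/-- Substituting `(ℓ x, m x)` into the form of the first condition gives `x` times the linearized
polynomial of the second one. -/
lemma form_smul_eq_mul_linearized {K : Type*} [CommRing K] (p h : ℕ) (a b : ℕ → K) (l m x : K) :
    (l * x) ^ 2 + ∑ i ∈ Finset.range h, a i * (m * x) ^ (p ^ i + 1)
        + m * x * ∑ j ∈ Finset.range h, b j * (l * x) ^ p ^ j
      = x * (∑ j ∈ Finset.range h, b j * m * l ^ p ^ j * x ^ p ^ j
          + ∑ i ∈ Finset.range h, a i * m ^ (p ^ i + 1) * x ^ p ^ i + l ^ 2 * x) := by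
  have ha : ∑ i ∈ Finset.range h, a i * (m * x) ^ (p ^ i + 1)
      = x * ∑ i ∈ Finset.range h, a i * m ^ (p ^ i + 1) * x ^ p ^ i := by
    rw [Finset.mul_sum]
    exact Finset.sum_congr rfl fun i _ => by rw [mul_pow]; ring
  have hb : m * x * ∑ j ∈ Finset.range h, b j * (l * x) ^ p ^ j
      = x * ∑ j ∈ Finset.range h, b j * m * l ^ p ^ j * x ^ p ^ j := by
    rw [Finset.mul_sum, Finset.mul_sum]
    exact Finset.sum_congr rfl fun j _ => by rw [mul_pow]; ring
  rw [ha, hb]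
  ring

/-- Over `F_q`, `q = p^h`, the following are equivalent: (1) the only solution of
`L² + Σ_i a_i M^{p^i+1} + M·Σ_j b_j L^{p^j} = 0` is `L = M = 0`; (2) for every
`(ℓ₀,m₀) ≠ (0,0)`, the only solution of
`Σ_j b_j m₀ ℓ₀^{p^j} x^{p^j} + Σ_i a_i m₀^{p^i+1} x^{p^i} + ℓ₀² x = 0` is `x = 0`. -/
theorem statement12 (p h : ℕ) (hp : p.Prime) (hh : 0 < h)
    (K : Type*) [Field K] [Fintype K] (hcard : Fintype.card K = p ^ h)
    (a b : ℕ → K) :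
    (∀ L M : K,
        L ^ 2 + ∑ i ∈ Finset.range h, a i * M ^ (p ^ i + 1)
          + M * ∑ j ∈ Finset.range h, b j * L ^ p ^ j = 0 → L = 0 ∧ M = 0)
      ↔ (∀ ℓ₀ m₀ : K, (ℓ₀, m₀) ≠ (0, 0) → ∀ x : K,
          ∑ j ∈ Finset.range h, b j * m₀ * ℓ₀ ^ p ^ j * x ^ p ^ j
            + ∑ i ∈ Finset.range h, a i * m₀ ^ (p ^ i + 1) * x ^ p ^ i
            + ℓ₀ ^ 2 * x = 0 → x = 0) := by
  constructor
  · intro H l m hlm x hx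
    by_contra hx0
    obtain ⟨hl, hm⟩ := H (l * x) (m * x) (by
      rw [form_smul_eq_mul_linearized, hx, mul_zero])
    exact hlm (Prod.ext ((mul_eq_zero.mp hl).resolve_right hx0)
      ((mul_eq_zero.mp hm).resolve_right hx0))
  · intro H L M hLM
    by_contra hne
    refine one_ne_zero (H L M (fun h0 => hne (Prod.mk.inj h0)) 1 ?_)
    have key := form_smul_eq_mul_linearized p h a b L M 1
    rw [one_mul, mul_one, mul_one, hLM] at key
    exact key.symm
end

section
/- Let q = p^h be a prime power and let f(x,y) = Σ_{i=0}^{h−1} a_i x^{p^i} + Σ_{j=0}^{h−1} b_j y^{p^j} with a_i, b_j ∈ F_q. Then O_4(f) is an ovoid of Q(4,q) (equivalently, f satisfies the ovoid condition) if and only if for every (ℓ_0, m_0) ∈ F_q^2 with (ℓ_0,m_0) ≠ (0,0), the map x ↦ Σ_{j=0}^{h−1} b_j m_0 ℓ_0^{p^j} x^{p^j} + Σ_{i=0}^{h−1} a_i m_0^{p^i+1} x^{p^i} + ℓ_0^2 x is a bijection of F_q (i.e., a permutation polynomial of F_q). -/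
/-- A sum of monomials `c i * x ^ p ^ i` respects subtraction in characteristic `p`. -/
lemma sum_mul_pow_char_pow_sub {K : Type*} [Field K] (p : ℕ) [Fact p.Prime] [CharP K p]
    (s : Finset ℕ) (c : ℕ → K) (x y : K) :
    ∑ i ∈ s, c i * (x - y) ^ p ^ i = ∑ i ∈ s, c i * x ^ p ^ i - ∑ i ∈ s, c i * y ^ p ^ i := by
  simp only [sub_pow_char_pow, mul_sub, Finset.sum_sub_distrib]

/-- For `f(x,y) = Σ_i a_i x^{p^i} + Σ_j b_j y^{p^j}` over `F_q`, `q = p^h`: `O_4(f)` is an ovoid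
of `Q(4,q)` (i.e. `f` satisfies the ovoid condition) iff for every `(ℓ₀,m₀) ≠ (0,0)` the map
`x ↦ Σ_j b_j m₀ ℓ₀^{p^j} x^{p^j} + Σ_i a_i m₀^{p^i+1} x^{p^i} + ℓ₀² x` is a bijection of `F_q`
(a permutation polynomial of `F_q`). -/
theorem statement13 (p h : ℕ) (hp : p.Prime) (hh : 0 < h)
    (K : Type*) [Field K] [Fintype K] (hcard : Fintype.card K = p ^ h)
    (a b : ℕ → K)
    (f : K → K → K)
    (hf : ∀ x y : K, f x y =
      ∑ i ∈ Finset.range h, a i * x ^ p ^ i + ∑ j ∈ Finset.range h, b j * y ^ p ^ j) :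
    (∀ x₁ y₁ x₂ y₂ : K, (x₁, y₁) ≠ (x₂, y₂) →
        (y₁ - y₂) ^ 2 + (x₁ - x₂) * (f x₁ y₁ - f x₂ y₂) ≠ 0)
      ↔ (∀ ℓ₀ m₀ : K, (ℓ₀, m₀) ≠ (0, 0) →
          Function.Bijective (fun x : K =>
            ∑ j ∈ Finset.range h, b j * m₀ * ℓ₀ ^ p ^ j * x ^ p ^ j
              + ∑ i ∈ Finset.range h, a i * m₀ ^ (p ^ i + 1) * x ^ p ^ i
              + ℓ₀ ^ 2 * x)) := by
  have : Fact p.Prime := ⟨hp⟩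
  have : CharP K p := charP_of_card_eq_prime_pow hcard
  have hsub (x₁ y₁ x₂ y₂ : K) : f (x₁ - x₂) (y₁ - y₂) = f x₁ y₁ - f x₂ y₂ := by
    simp only [hf, sum_mul_pow_char_pow_sub]
    ring
  have hf0 : f 0 0 = 0 := by simpa using hsub 0 0 0 0
  have hg (l m x : K) : ∑ j ∈ Finset.range h, b j * m * l ^ p ^ j * x ^ p ^ j
      + ∑ i ∈ Finset.range h, a i * m ^ (p ^ i + 1) * x ^ p ^ i + l ^ 2 * x
      = m * f (m * x) (l * x) + l ^ 2 * x := by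
    rw [hf, mul_add, Finset.mul_sum, Finset.mul_sum, add_comm (∑ j ∈ _, b j * m * _ * _)]
    congr 2 <;> exact Finset.sum_congr rfl fun i _ => by ring
  simp only [hg]
  constructor
  · intro hovoid l m hlm
    refine Finite.injective_iff_bijective.mp fun x y hxy => ?_
    by_contra hne
    have ht : x - y ≠ 0 := sub_ne_zero.mpr hne
    have hroot : m * f (m * (x - y)) (l * (x - y)) + l ^ 2 * (x - y) = 0 := by
      rw [mul_sub, mul_sub, hsub]
      linear_combination hxy
    refine hovoid (m * (x - y)) (l * (x - y)) 0 0 ?_ ?_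
    · simpa [ht, and_comm] using hlm
    · rw [hf0]
      linear_combination (x - y) * hroot
  · intro hbij x₁ y₁ x₂ y₂ hne hzero
    have hlm : (y₁ - y₂, x₁ - x₂) ≠ (0, 0) := by
      simpa [sub_eq_zero, and_comm] using hne
    refine one_ne_zero ((hbij _ _ hlm).injective (a₁ := 1) (a₂ := 0) ?_)
    simp only [mul_one, mul_zero, hf0, hsub]
    linear_combination hzero
end

section
/- Let q = 3^5 and let F_q be the finite field with 3^5 = 243 elements. For every pair (ℓ_0, m_0) ∈ F_q^2 with (ℓ_0, m_0) ≠ (0,0), the map x ↦ m_0 ℓ_0^{81} x^{81} + m_0^{10} x^{9} − ℓ_0^2 x is a bijection of F_q; that is, m_0 ℓ_0^{81} X^{81} + m_0^{10} X^{9} − ℓ_0^2 X is an F_3-linearized permutation polynomial of F_{3^5}. -/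
/-- The quartic is the reduction of `X ^ 243 - X` modulo `X ^ 6 - D * X - 1` when `D ^ 11 = 1`. -/
theorem no_common_root_sextic_quartic {K : Type*} [Field K] [CharP K 3] {x D : K}
    (hD : D ^ 11 = 1) (hx : x ^ 6 = D * x + 1)
    (hquartic : (D + 2 * D ^ 4) * x ^ 4 + (1 + 2 * D ^ 3 + 2 * D + D ^ 4) * x ^ 3 + D ^ 5 * x ^ 2
      + (2 * D ^ 4 + D ^ 5 - 1) * x + D ^ 3 + D ^ 4 + D ^ 9 + D + D ^ 5 = 0) : False := by
  grind

/-- For `D ^ 11 = 1`, the polynomial `X ^ 6 - D * X - 1` has no root in the field with `3 ^ 5`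
elements. -/
theorem pow_six_ne_of_pow_card {K : Type*} [Field K] [CharP K 3] {x D : K}
    (hcard : x ^ 243 = x) (hD : D ^ 11 = 1) : x ^ 6 ≠ D * x + 1 := by
  intro hx
  have cube_add (a b : K) : (a + b) ^ 3 = a ^ 3 + b ^ 3 := add_pow_char a b 3
  have two_cube : (2 : K) ^ 3 = 2 := by grind
  have h9 : x ^ 9 = D * x ^ 4 + x ^ 3 := by linear_combination x ^ 3 * hx
  have h27 : x ^ 27 = D * x ^ 4 + x ^ 3 + D ^ 5 * x ^ 2 + 2 * D ^ 4 * x + D ^ 3 := by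
    calc x ^ 27 = (x ^ 9) ^ 3 := by ring
      _ = D ^ 3 * (x ^ 6) ^ 2 + x ^ 9 := by rw [h9, cube_add]; rw [← h9]; ring
      _ = _ := by rw [hx, h9]; ring
  have h81 : x ^ 81 = D * x ^ 4 + (1 + 2 * D) * x ^ 3 + D ^ 5 * x ^ 2 + (2 * D ^ 4 + D ^ 5) * x
      + D ^ 3 + D ^ 4 + D ^ 9 := by
    calc x ^ 81 = (x ^ 27) ^ 3 := by ring
      _ = D ^ 3 * (x ^ 6) ^ 2 + x ^ 9 + D ^ 11 * D ^ 4 * x ^ 6 + 2 * (D ^ 11 * D) * x ^ 3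
          + D ^ 9 := by
        rw [h27]; simp only [cube_add, mul_pow, two_cube]; ring
      _ = _ := by rw [hx, h9, hD]; ring
  have h243 : x ^ 243 = D ^ 3 * (x ^ 6) ^ 2 + (1 + 2 * D ^ 3) * x ^ 9 + D ^ 11 * D ^ 4 * x ^ 6
      + (2 * (D ^ 11 * D) + D ^ 11 * D ^ 4) * x ^ 3 + D ^ 9 + D ^ 11 * D
      + D ^ 11 * D ^ 11 * D ^ 5 := by
    calc x ^ 243 = (x ^ 81) ^ 3 := by ring
      _ = _ := by
        rw [h81]; simp only [cube_add, mul_pow, two_cube, one_pow]; ring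
  rw [hcard, hx, h9, hD] at h243
  exact no_common_root_sextic_quartic hD hx (by linear_combination -h243)

/-- In the field with `3 ^ 5` elements, `u * v ^ 81 + u ^ 10 = v ^ 2` forces `u = 0`. -/
theorem eq_zero_of_mul_pow_add_pow_eq_sq {K : Type*} [Field K] [CharP K 3]
    (hcard : ∀ a : K, a ^ 243 = a) {u v : K} (h : u * v ^ 81 + u ^ 10 = v ^ 2) : u = 0 := by
  by_contra hu
  obtain ⟨p, rfl⟩ : ∃ p, v = p * u ^ 5 := ⟨v / u ^ 5, by field_simp⟩
  have hu242 : u ^ 242 = 1 := mul_right_cancel₀ hu (by rw [← pow_succ, hcard, one_mul])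
  have hp : p ^ 2 = p ^ 81 * u ^ 396 + 1 :=
    mul_right_cancel₀ (pow_ne_zero 10 hu) (by linear_combination -h)
  refine pow_six_ne_of_pow_card (x := p) (D := u ^ 1188) (hcard p) ?_ ?_
  · rw [← pow_mul, show 1188 * 11 = 242 * 54 from rfl, pow_mul, hu242, one_pow]
  · calc p ^ 6 = (p ^ 2) ^ 3 := by ring
      _ = p ^ 243 * u ^ 1188 + 1 := by rw [hp, add_pow_char]; ring
      _ = _ := by rw [hcard, mul_comm]

/-- In `F_{3^5}`, for every `(ℓ₀,m₀) ≠ (0,0)` the map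
`x ↦ m₀ ℓ₀^{81} x^{81} + m₀^{10} x^{9} − ℓ₀² x` is a bijection of `F_{3^5}`; i.e.
`m₀ ℓ₀^{81} X^{81} + m₀^{10} X^{9} − ℓ₀² X` is an `F_3`-linearized permutation polynomial. -/
theorem statement14 (K : Type*) [Field K] [Fintype K] (hcard : Fintype.card K = 3 ^ 5)
    (ℓ₀ m₀ : K) (hne : (ℓ₀, m₀) ≠ (0, 0)) :
    Function.Bijective (fun x : K =>
      m₀ * ℓ₀ ^ 81 * x ^ 81 + m₀ ^ 10 * x ^ 9 - ℓ₀ ^ 2 * x) := by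
  have : Fact (Nat.Prime 3) := ⟨Nat.prime_three⟩
  have : CharP K 3 := charP_of_card_eq_prime_pow hcard
  have hpow (a : K) : a ^ 243 = a := by simpa [hcard] using FiniteField.pow_card a
  refine Finite.injective_iff_bijective.mp fun x y hxy => ?_
  have h81 : (x - y) ^ 81 = x ^ 81 - y ^ 81 := sub_pow_char_pow (p := 3) x y 4
  have h9 : (x - y) ^ 9 = x ^ 9 - y ^ 9 := sub_pow_char_pow (p := 3) x y 2
  by_contra hne_xy
  have hz : x - y ≠ 0 := sub_ne_zero.mpr hne_xy
  have hroot : m₀ * ℓ₀ ^ 81 * (x - y) ^ 81 + m₀ ^ 10 * (x - y) ^ 9 = ℓ₀ ^ 2 * (x - y) := by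
    rw [h81, h9]
    linear_combination hxy
  have hm : m₀ = 0 := by
    have := eq_zero_of_mul_pow_add_pow_eq_sq hpow (u := m₀ * (x - y)) (v := ℓ₀ * (x - y))
      (by linear_combination (x - y) * hroot)
    simpa [hz] using this
  have hl : ℓ₀ = 0 := by simpa [hm, hz] using hroot.symm
  exact hne (by rw [hm, hl])
end

section
/- Let q = 3^n with n > 2, let F_q be the finite field with q elements, and let m ∈ F_q be a fixed non-square (m is not the square of any element of F_q). For every pair (ℓ_0, m_0) ∈ F_q^2 with (ℓ_0, m_0) ≠ (0,0), the map x ↦ (m·m_0^2 − ℓ_0^2)^9 x^9 + m_0^9 ℓ_0^3 x^3 + m^{−1} m_0^{10} x is a bijection of F_q; that is, (m m_0^2 − ℓ_0^2)^9 X^9 + m_0^9 ℓ_0^3 X^3 + m^{−1} m_0^{10} X is an F_3-linearized permutation polynomial of F_q. -/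
/-- The absolute trace of a field of order `3 ^ n` is invariant under cubing. -/
theorem trace_pow_three {K : Type*} [Field K] [Fintype K] [Algebra (ZMod 3) K] (x : K) :
    Algebra.trace (ZMod 3) K (x ^ 3) = Algebra.trace (ZMod 3) K x := by
  have h := Algebra.trace_eq_of_algEquiv (FiniteField.frobeniusAlgEquivOfAlgebraic (ZMod 3) K) x
  simpa using h

/-- If `m` is a non-square in characteristic three, the trace-adjoint linearized polynomial
`(m - s²) X + s X³ + m⁻¹ X⁹` has no nonzero root: viewed as a quadratic in `s`, its discriminant
is `m⁻¹` times a nonzero square. -/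
theorem eq_zero_of_adjoint_eq_zero {K : Type*} [Field K] [CharP K 3] {m : K}
    (hm : ∀ x : K, x ^ 2 ≠ m) {s w : K}
    (h : (m - s ^ 2) * w + s * w ^ 3 + m⁻¹ * w ^ 9 = 0) : w = 0 := by
  by_contra hw
  have h3 : (3 : K) = 0 := by exact_mod_cast CharP.cast_eq_zero K 3
  have hm0 : m ≠ 0 := fun h0 => hm 0 (by simp [h0])
  have hd : w * (w ^ 4 - m) ≠ 0 :=
    mul_ne_zero hw (sub_ne_zero.2 fun h4 => hm (w ^ 2) (by rw [← h4]; ring))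
  have hmul : m * (m - s ^ 2) * w + m * s * w ^ 3 + w ^ 9 = 0 := by
    field_simp at h
    linear_combination h
  have hsq : m * (2 * s * w - w ^ 3) ^ 2 = (w * (w ^ 4 - m)) ^ 2 := by
    linear_combination (-4 * w) * hmul + (w ^ 10 + m ^ 2 * w ^ 2 + m * w ^ 6) * h3
  have hne : 2 * s * w - w ^ 3 ≠ 0 := by
    intro h0
    rw [h0] at hsq
    exact pow_ne_zero 2 hd (by rw [← hsq]; ring)
  refine hm (w * (w ^ 4 - m) / (2 * s * w - w ^ 3)) ?_
  rw [div_pow, ← hsq, mul_div_cancel_right₀ _ (pow_ne_zero 2 hne)]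

/-- If `m` is a non-square of a finite field of characteristic three, the linearized polynomial
`(m - s²)⁹ X⁹ + s³ X³ + m⁻¹ X` has no nonzero root. -/
theorem eq_zero_of_linearized_eq_zero {K : Type*} [Field K] [Fintype K] [CharP K 3] {m : K}
    (hm : ∀ x : K, x ^ 2 ≠ m) {s z : K}
    (h : (m - s ^ 2) ^ 9 * z ^ 9 + s ^ 3 * z ^ 3 + m⁻¹ * z = 0) : z = 0 := by
  let _ : Algebra (ZMod 3) K := ZMod.algebra K 3
  by_contra hz
  let L : K → K := fun w => (m - s ^ 2) * w + s * w ^ 3 + m⁻¹ * w ^ 9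
  have hL : Function.Surjective L := by
    refine Finite.surjective_of_injective fun u v huv => ?_
    refine sub_eq_zero.1 (eq_zero_of_adjoint_eq_zero hm (s := s) ?_)
    have h9 : (u - v) ^ 9 = u ^ 9 - v ^ 9 := sub_pow_char_pow (p := 3) (n := 2) u v
    rw [sub_pow_char (p := 3) u v, h9]
    linear_combination huv
  have htr : ∀ w, Algebra.trace (ZMod 3) K (z * L w) = 0 := by
    intro w
    have hsplit : z * L w = (m - s ^ 2) * w * z + s * w ^ 3 * z + m⁻¹ * w ^ 9 * z := by
      simp only [L]
      ring
    rw [hsplit, map_add, map_add, ← trace_pow_three ((m - s ^ 2) * w * z),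
      ← trace_pow_three (((m - s ^ 2) * w * z) ^ 3), ← trace_pow_three (s * w ^ 3 * z),
      ← map_add, ← map_add]
    have hzero : (((m - s ^ 2) * w * z) ^ 3) ^ 3 + (s * w ^ 3 * z) ^ 3 + m⁻¹ * w ^ 9 * z = 0 := by
      linear_combination w ^ 9 * h
    rw [hzero, map_zero]
  refine Algebra.trace_ne_zero (ZMod 3) K (LinearMap.ext fun y => ?_)
  obtain ⟨w, hw⟩ := hL (z⁻¹ * y)
  have := htr w
  rwa [hw, mul_inv_cancel_left₀ hz] at this

/-- In `F_{3^n}`, `n > 2`, with `m` a fixed non-square: for every `(ℓ₀,m₀) ≠ (0,0)` the map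
`x ↦ (m·m₀² − ℓ₀²)⁹ x⁹ + m₀⁹ ℓ₀³ x³ + m⁻¹ m₀^{10} x` is a bijection of `F_{3^n}`; i.e.
`(m m₀² − ℓ₀²)⁹ X⁹ + m₀⁹ ℓ₀³ X³ + m⁻¹ m₀^{10} X` is an `F_3`-linearized permutation
polynomial of `F_{3^n}`. -/
theorem statement15 (n : ℕ) (hn : 2 < n)
    (K : Type*) [Field K] [Fintype K] (hcard : Fintype.card K = 3 ^ n)
    (m : K) (hm : ∀ x : K, x ^ 2 ≠ m)
    (ℓ₀ m₀ : K) (hne : (ℓ₀, m₀) ≠ (0, 0)) :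
    Function.Bijective (fun x : K =>
      (m * m₀ ^ 2 - ℓ₀ ^ 2) ^ 9 * x ^ 9 + m₀ ^ 9 * ℓ₀ ^ 3 * x ^ 3 + m⁻¹ * m₀ ^ 10 * x) := by
  have hchar : CharP K 3 := by
    have : Fact (Nat.Prime 3) := ⟨Nat.prime_three⟩
    exact charP_of_card_eq_prime_pow hcard
  refine Finite.injective_iff_bijective.1 fun u v huv => sub_eq_zero.1 ?_
  have h9 : (u - v) ^ 9 = u ^ 9 - v ^ 9 := sub_pow_char_pow (p := 3) (n := 2) u v
  have h3 : (u - v) ^ 3 = u ^ 3 - v ^ 3 := sub_pow_char (p := 3) u v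
  have hker : (m * m₀ ^ 2 - ℓ₀ ^ 2) ^ 9 * (u - v) ^ 9 + m₀ ^ 9 * ℓ₀ ^ 3 * (u - v) ^ 3
      + m⁻¹ * m₀ ^ 10 * (u - v) = 0 := by
    rw [h9, h3]
    linear_combination huv
  generalize u - v = x at hker
  by_cases hb : m₀ = 0
  · subst hb
    have ha : ℓ₀ ≠ 0 := fun ha => hne (by rw [ha])
    simpa [ha] using hker
  · obtain ⟨s, rfl⟩ : ∃ s, ℓ₀ = m₀ * s := ⟨ℓ₀ / m₀, by field_simp⟩
    have hz : m₀ * x = 0 := by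
      refine eq_zero_of_linearized_eq_zero hm (s := s) ?_
      refine (mul_eq_zero.1 ?_).resolve_left (pow_ne_zero 9 hb)
      linear_combination hker
    exact (mul_eq_zero.1 hz).resolve_left hb
end
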